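/- Let d ≥ 1 and let (q,r) and (q̃,r̃) be two Schrödinger-admissible pairs: 2 ≤ q, r ≤ ∞, 1/q = (d/2)(1/2 − 1/r), (q,r,d) ≠ (2,∞,2), and likewise for (q̃,r̃). Then there exists a constant C > 0 such that for every smooth compactly supported function F : ℝ × ℝ^d → ℂ, the retarded Duhamel integral Φ(t,x) := ∫₀ᵗ (e^{i(t−s)Δ}F(s,·))(x) ds satisfies the inhomogeneous Strichartz estimate ‖Φ‖_{L^q_t L^r_x(ℝ × ℝ^d)} ≤ C ‖F‖_{L^{q̃'}_t L^{r̃'}_x(ℝ × ℝ^d)}, where q̃' and r̃' are the Hölder conjugates of q̃ and r̃ (1/q̃ + 1/q̃' = 1, 1/r̃ + 1/r̃' = 1) and ‖u‖_{L^a_t L^b_x} := ( ∫_ℝ ‖u(t,·)‖_{L^b(ℝ^d)}^a dt )^{1/a} (with the essential supremum when an exponent is ∞). -/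

import Mathlib

/-!
The proof is the one of Keel and Tao, carried out for the propagator at the complex time `ε + iτ`
with `ε > 0`, whose kernel `kern` is a bounded Gaussian, so that every integral converges
absolutely; all constants are independent of `ε`. Exponents on the source side are written as
Hölder conjugates `(p, m)` of admissible pairs, so they are finite real numbers in `[1, 2]`.

*Diagonal estimates.* The object estimated is the space-time form
`form ε χ F G = ∫∫ χ(t - s) ⟨U(t - s) F(s), G(t)⟩ ds dt`, for an arbitrary measurable time cutoff
`χ` with `|χ| ≤ 1` and bounded, boundedly supported measurable `F`, `G`. The dispersive estimate
(`bform_one`) and the `L²` contraction (`bform_two`) are interpolated by cutting both functions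
along dyadic level sets (`bform_interp`). With the one-dimensional Hardy–Littlewood–Sobolev
inequality (`hls`) this gives `diag_nonendpoint`. For the endpoint in dimension `d ≥ 3`
(`diag_endpoint`), time is cut into dyadic shells and the functions into dyadic amplitudes; each
triple of pieces satisfies three bounds, the best of which decays away from a one-parameter family
(`choose_three`), and the resulting sum is handled by Schur's test (`triple_sum`).

*Energy bound.* On the Fourier side the kernel form is an inner product (`gram`), and
Cauchy–Schwarz for it (`gram_cauchy`) is the `TT*` principle. It turns a diagonal estimate into an
`L^∞_t L²_x` bound for the Duhamel operator `duh` (`duh_two`).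

*Off-diagonal estimates.* A target pair lying between the source pair and `(∞, 2)` is reached by
interpolation (`off_diag_interp`), after `dual_bound` converts form bounds into norm bounds. In the
opposite case the transposed estimate is of this kind (`off_diag`).

*Limits.* With `χ` the indicator of `τ > δ`, first `ε → 0` and then `δ → 0`, using Fatou's lemma
(`tendsto_duh`, `duhamel_le_liminf`). Negative times follow from the symmetry of the equation under
time reflection combined with complex conjugation (`duhamel_rev`).
-/

open scoped BigOperators ENNReal
open MeasureTheory Complex

/-- The free Schrödinger propagator `e^{itΔ}f`, given by the oscillatory
integral against the Schrödinger kernel for `t ≠ 0` and by `f` for `t = 0`. -/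
noncomputable def schrodingerProp {d : ℕ} (f : EuclideanSpace ℝ (Fin d) → ℂ)
    (t : ℝ) (x : EuclideanSpace ℝ (Fin d)) : ℂ :=
  if t = 0 then f x
  else (4 * (Real.pi : ℂ) * Complex.I * (t : ℂ)) ^ (-(d : ℂ) / 2) *
    ∫ y : EuclideanSpace ℝ (Fin d),
      Complex.exp (Complex.I * ((‖x - y‖ ^ 2 : ℝ) : ℂ) / (4 * (t : ℂ))) * f y

/-- The mixed space-time Lebesgue norm `‖u‖_{L^q_t L^r_x}`, with the essential
supremum when `q = ∞` (the inner `L^r` norm already handles `r = ∞`). -/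
noncomputable def mixedLpNorm {d : ℕ} (q r : ℝ≥0∞)
    (u : ℝ → EuclideanSpace ℝ (Fin d) → ℂ) : ℝ≥0∞ :=
  if q = ∞ then essSup (fun t => eLpNorm (u t) r volume) volume
  else (∫⁻ t, (eLpNorm (u t) r volume) ^ q.toReal) ^ (1 / q.toReal)

namespace Strichartz

/-! ### Dyadic sums, Schur's test and level sets -/

lemma two_rpow_add (x y : ℝ) : (2 : ℝ≥0∞) ^ (x + y) = 2 ^ x * 2 ^ y :=
  ENNReal.rpow_add _ _ (by norm_num) (by norm_num)

lemma two_rpow_ne_top (x : ℝ) : (2 : ℝ≥0∞) ^ x ≠ ∞ :=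
  ENNReal.rpow_ne_top_of_ne_zero (by norm_num) (by norm_num)

lemma two_rpow_ne_zero (x : ℝ) : (2 : ℝ≥0∞) ^ x ≠ 0 := by
  simp [ENNReal.rpow_eq_zero_iff]

lemma two_rpow_mono {x y : ℝ} (h : x ≤ y) : (2 : ℝ≥0∞) ^ x ≤ 2 ^ y :=
  ENNReal.rpow_le_rpow_of_exponent_le (by norm_num) h

lemma two_rpow_eq_ofReal (x : ℝ) : (2 : ℝ≥0∞) ^ x = ENNReal.ofReal ((2 : ℝ) ^ x) := by
  rw [← ENNReal.ofReal_rpow_of_pos (by norm_num)]; simp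

lemma summable_two_rpow_abs {δ : ℝ} (hδ : 0 < δ) :
    Summable (fun m : ℤ => (2 : ℝ) ^ (-(δ * |(m : ℝ)|))) := by
  have h1 : ∀ n : ℕ, (2 : ℝ) ^ (-(δ * |((n : ℤ) : ℝ)|)) = ((2 : ℝ) ^ (-δ)) ^ n := by
    intro n
    rw [← Real.rpow_natCast, ← Real.rpow_mul (by norm_num)]
    simp
  have h2 : ∀ n : ℕ, (2 : ℝ) ^ (-(δ * |((-(n : ℤ) : ℤ) : ℝ)|)) = ((2 : ℝ) ^ (-δ)) ^ n := by
    intro n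
    rw [← Real.rpow_natCast, ← Real.rpow_mul (by norm_num)]
    simp
  have hs : Summable (fun n : ℕ => ((2 : ℝ) ^ (-δ)) ^ n) := by
    apply summable_geometric_of_lt_one (by positivity)
    exact Real.rpow_lt_one_of_one_lt_of_neg (by norm_num) (by linarith)
  refine Summable.of_nat_of_neg ?_ ?_
  · simpa only [h1] using hs
  · simpa only [h2] using hs

/-- Geometric weights sampled along an arithmetic progression are summable, uniformly in the
offset of the progression. -/
lemma sum_weight {ε a : ℝ} (hε : 0 < ε) (ha : 0 < a) :
    ∃ C : ℝ≥0∞, C ≠ ∞ ∧ ∀ b : ℝ, ∑' m : ℤ, (2 : ℝ≥0∞) ^ (-(ε * |a * m + b|)) ≤ C := by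
  have hs := summable_two_rpow_abs (mul_pos hε ha)
  refine ⟨2 ^ (ε * a) * ∑' m : ℤ, (2 : ℝ≥0∞) ^ (-((ε * a) * |(m : ℝ)|)), ?_, ?_⟩
  · refine ENNReal.mul_ne_top (two_rpow_ne_top _) ?_
    simp_rw [two_rpow_eq_ofReal]
    exact hs.tsum_ofReal_ne_top
  · intro b
    rw [← (Equiv.subRight (round (b / a))).tsum_eq, ← ENNReal.tsum_mul_left]
    refine ENNReal.tsum_le_tsum fun m => ?_
    rw [← two_rpow_add]
    apply two_rpow_mono
    have h1 : |b / a - round (b / a)| ≤ 1 / 2 := abs_sub_round (b / a)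
    have h2 : |a * (m : ℝ)| - |a * ((m - round (b / a) : ℤ) : ℝ) + b| ≤ a := by
      refine (abs_sub_abs_le_abs_sub _ _).trans ?_
      have : a * (m : ℝ) - (a * ((m - round (b / a) : ℤ) : ℝ) + b)
          = -(a * (b / a - round (b / a))) := by
        push_cast; field_simp; ring
      rw [this, abs_neg, abs_mul, abs_of_pos ha]
      nlinarith
    rw [abs_mul, abs_of_pos ha] at h2
    simp only [Equiv.subRight_apply]
    nlinarith

lemma cauchy_schwarz {α : Type*} [MeasurableSpace α] (μ : Measure α) {f g : α → ℝ≥0∞}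
    (hf : AEMeasurable f μ) (hg : AEMeasurable g μ) :
    ∫⁻ x, f x * g x ∂μ ≤
      (∫⁻ x, f x ^ (2 : ℝ) ∂μ) ^ (1 / 2 : ℝ) * (∫⁻ x, g x ^ (2 : ℝ) ∂μ) ^ (1 / 2 : ℝ) :=
  ENNReal.lintegral_mul_le_Lp_mul_Lq μ (by constructor <;> norm_num) hf hg

lemma rpow_half_sq (x : ℝ≥0∞) : (x ^ (1 / 2 : ℝ)) ^ (2 : ℝ) = x := by
  rw [← ENNReal.rpow_mul]; simp

lemma sq_rpow_half (x : ℝ≥0∞) : (x ^ (2 : ℝ)) ^ (1 / 2 : ℝ) = x := by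
  rw [← ENNReal.rpow_mul]; simp

lemma half_mul_half (x : ℝ≥0∞) : x ^ (1 / 2 : ℝ) * x ^ (1 / 2 : ℝ) = x := by
  rw [← ENNReal.rpow_add_of_nonneg _ _ (by norm_num) (by norm_num)]; norm_num

/-- Schur's test for a matrix with nonnegative entries. -/
lemma schur (W : ℤ → ℤ → ℝ≥0∞) (c c' : ℤ → ℝ≥0∞) {A : ℝ≥0∞}
    (hrow : ∀ m, ∑' n, W m n ≤ A) (hcol : ∀ n, ∑' m, W m n ≤ A) :
    ∑' m, ∑' n, W m n * (c m * c' n) ≤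
      A * ((∑' m, c m ^ (2 : ℝ)) ^ (1 / 2 : ℝ) * (∑' n, c' n ^ (2 : ℝ)) ^ (1 / 2 : ℝ)) := by
  have h := cauchy_schwarz (Measure.count : Measure (ℤ × ℤ))
    (f := fun z => W z.1 z.2 ^ (1 / 2 : ℝ) * c z.1)
    (g := fun z => W z.1 z.2 ^ (1 / 2 : ℝ) * c' z.2)
    Measurable.of_discrete.aemeasurable Measurable.of_discrete.aemeasurable
  simp only [lintegral_count, ENNReal.mul_rpow_of_nonneg _ _ (zero_le_two : (0 : ℝ) ≤ 2),
    rpow_half_sq] at h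
  have e1 : ∑' z : ℤ × ℤ, W z.1 z.2 * c z.1 ^ (2 : ℝ) ≤ A * ∑' m, c m ^ (2 : ℝ) := by
    rw [ENNReal.tsum_prod', ← ENNReal.tsum_mul_left]
    refine ENNReal.tsum_le_tsum fun m => ?_
    simp only [ENNReal.tsum_mul_right]
    gcongr
    exact hrow m
  have e2 : ∑' z : ℤ × ℤ, W z.1 z.2 * c' z.2 ^ (2 : ℝ) ≤ A * ∑' m, c' m ^ (2 : ℝ) := by
    rw [ENNReal.tsum_prod', ENNReal.tsum_comm, ← ENNReal.tsum_mul_left]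
    refine ENNReal.tsum_le_tsum fun m => ?_
    simp only [ENNReal.tsum_mul_right]
    gcongr
    exact hcol m
  calc ∑' m, ∑' n, W m n * (c m * c' n)
      = ∑' z : ℤ × ℤ, W z.1 z.2 ^ (1 / 2 : ℝ) * c z.1 * (W z.1 z.2 ^ (1 / 2 : ℝ) * c' z.2) := by
        rw [ENNReal.tsum_prod']
        refine tsum_congr fun m => tsum_congr fun n => ?_
        rw [mul_mul_mul_comm, half_mul_half]
    _ ≤ _ := h
    _ ≤ (A * ∑' m, c m ^ (2 : ℝ)) ^ (1 / 2 : ℝ) * (A * ∑' m, c' m ^ (2 : ℝ)) ^ (1 / 2 : ℝ) := by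
        gcongr
    _ = _ := by
        rw [ENNReal.mul_rpow_of_nonneg _ _ (by norm_num), ENNReal.mul_rpow_of_nonneg _ _ (by norm_num),
          mul_mul_mul_comm, half_mul_half]

/-- The discrete summation behind the time-dyadic decompositions: weights
`2^{-ε(|m + κ j| + |n + κ j|)}` summed over `j` form a Schur kernel. -/
lemma triple_sum {ε κ : ℝ} (hε : 0 < ε) (hκ : 0 < κ) :
    ∃ C : ℝ≥0∞, C ≠ ∞ ∧ ∀ c c' : ℤ → ℝ≥0∞,
      ∑' j : ℤ, ∑' m : ℤ, ∑' n : ℤ,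
        (2 : ℝ≥0∞) ^ (-(ε * (|m + κ * j| + |n + κ * j|))) * (c m * c' n) ≤
      C * ((∑' m, c m ^ (2 : ℝ)) ^ (1 / 2 : ℝ) * (∑' n, c' n ^ (2 : ℝ)) ^ (1 / 2 : ℝ)) := by
  obtain ⟨C₁, hC₁, h₁⟩ := sum_weight hε (zero_lt_one)
  obtain ⟨C₂, hC₂, h₂⟩ := sum_weight hε hκ
  have h1 : ∀ b : ℝ, ∑' m : ℤ, (2 : ℝ≥0∞) ^ (-(ε * |m + b|)) ≤ C₁ := by
    intro b; simpa using h₁ b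
  have h2 : ∀ b : ℝ, ∑' j : ℤ, (2 : ℝ≥0∞) ^ (-(ε * |b + κ * j|)) ≤ C₂ := by
    intro b; simpa [add_comm] using h₂ b
  refine ⟨C₂ * C₁, ENNReal.mul_ne_top hC₂ hC₁, fun c c' => ?_⟩
  set w : ℝ → ℝ → ℝ≥0∞ := fun m j => (2 : ℝ≥0∞) ^ (-(ε * |m + κ * j|)) with hw
  have hsplit : ∀ j m n : ℤ, (2 : ℝ≥0∞) ^ (-(ε * (|m + κ * j| + |n + κ * j|)))
      = w m j * w n j := by
    intro j m n
    rw [hw, ← two_rpow_add]; ring_nf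
  have key : ∀ m : ℤ, ∑' n : ℤ, ∑' j : ℤ, w m j * w n j ≤ C₂ * C₁ := by
    intro m
    rw [ENNReal.tsum_comm]
    calc ∑' j : ℤ, ∑' n : ℤ, w m j * w n j ≤ ∑' j : ℤ, w m j * C₁ := by
          refine ENNReal.tsum_le_tsum fun j => ?_
          rw [ENNReal.tsum_mul_left]
          gcongr
          exact h1 _
      _ ≤ _ := by
          rw [ENNReal.tsum_mul_right]
          gcongr
          exact h2 _
  refine le_trans (le_of_eq ?_) (schur (fun m n => ∑' j : ℤ, w m j * w n j) c c' key ?_)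
  · rw [ENNReal.tsum_comm]
    refine tsum_congr fun m => ?_
    rw [ENNReal.tsum_comm]
    refine tsum_congr fun n => ?_
    rw [← ENNReal.tsum_mul_right]
    refine tsum_congr fun j => ?_
    rw [hsplit]
  · intro n
    simpa only [mul_comm] using key n

/-- The part of the space where `f` takes values in the dyadic window `[2^m A, 2^{m+1} A)`. -/
def level {α : Type*} (f : α → ℝ≥0∞) (A : ℝ≥0∞) (m : ℤ) : Set α :=
  {x | (2 : ℝ≥0∞) ^ (m : ℝ) * A ≤ f x ∧ f x < 2 ^ (m + 1 : ℝ) * A}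

/-- Every finite positive value lies in some dyadic window. -/
lemma exists_mem_level {α : Type*} {f : α → ℝ≥0∞} {A : ℝ≥0∞} (hA : A ≠ 0) (hA' : A ≠ ∞)
    {x : α} (hx : f x ≠ 0) (hx' : f x ≠ ∞) : ∃ m, x ∈ level f A m := by
  have h0 : f x / A ≠ 0 := by simp [ENNReal.div_eq_zero_iff, hx, hA']
  have h1 : f x / A ≠ ∞ := ENNReal.div_ne_top hx' hA
  obtain ⟨m, hm⟩ := ENNReal.exists_mem_Ico_zpow h0 h1 (y := 2) (by norm_num) (by norm_num)
  refine ⟨m, ?_, ?_⟩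
  · rw [ENNReal.rpow_intCast]
    exact (ENNReal.le_div_iff_mul_le (Or.inl hA) (Or.inl hA')).1 hm.1
  · have : ((m : ℝ) + 1) = ((m + 1 : ℤ) : ℝ) := by push_cast; rfl
    rw [this, ENNReal.rpow_intCast]
    exact (ENNReal.div_lt_iff (Or.inl hA) (Or.inl hA')).1 hm.2

lemma level_disjoint {α : Type*} (f : α → ℝ≥0∞) (A : ℝ≥0∞) {m n : ℤ} (h : m ≠ n) :
    Disjoint (level f A m) (level f A n) := by
  have main : ∀ m n : ℤ, m < n → Disjoint (level f A m) (level f A n) := by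
    intro m n hmn
    rw [Set.disjoint_left]
    intro x hx hx'
    have h1 : (2 : ℝ≥0∞) ^ (m + 1 : ℝ) ≤ 2 ^ (n : ℝ) := two_rpow_mono (by exact_mod_cast hmn)
    have : (2 : ℝ≥0∞) ^ (m + 1 : ℝ) * A ≤ 2 ^ (n : ℝ) * A := by gcongr
    exact absurd (hx.2.trans_le (this.trans hx'.1)) (lt_irrefl _)
  rcases lt_or_gt_of_ne h with h | h
  · exact main _ _ h
  · exact (main _ _ h).symm

lemma measurableSet_level {α : Type*} [MeasurableSpace α] {f : α → ℝ≥0∞} (hf : Measurable f)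
    {A : α → ℝ≥0∞} (hA : Measurable A) (m : ℤ) : MeasurableSet {x | x ∈ level f (A x) m} := by
  apply MeasurableSet.inter
  · exact measurableSet_le (by fun_prop) hf
  · exact measurableSet_lt hf (by fun_prop)

/-- On a dyadic level set all `L^a` norms, `1 ≤ a ≤ 2`, are controlled by one number, whose
square is additive over the levels.  This is what replaces interpolation of operators. -/
lemma level_bound {α : Type*} [MeasurableSpace α] (μ : Measure α) {f : α → ℝ≥0∞}
    {A : ℝ≥0∞} (hA : A ≠ 0) (hA' : A ≠ ∞) {p a : ℝ} (hp : 0 ≤ p) (ha : 1 ≤ a) (ha2 : a ≤ 2)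
    (hfp : A ^ (-p) * ∫⁻ x, f x ^ p ∂μ ≤ 1) (m : ℤ) (hm : MeasurableSet (level f A m)) :
    (∫⁻ x in level f A m, f x ^ a ∂μ) ^ (1 / a) ≤
      2 * 2 ^ (m * (1 - p / a)) *
        (A * (A ^ (-p) * ∫⁻ x in level f A m, f x ^ p ∂μ) ^ (1 / 2 : ℝ)) := by
  have ha0 : 0 < a := by linarith
  set lam := A ^ (-p) * ∫⁻ x in level f A m, f x ^ p ∂μ with hlam
  have hlam1 : lam ≤ 1 := by
    refine le_trans ?_ hfp
    exact mul_le_mul_right (setLIntegral_le_lintegral _ _) _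
  have h2m : (2 : ℝ≥0∞) ^ (m : ℝ) * A ≠ 0 := mul_ne_zero (two_rpow_ne_zero _) hA
  have h2m' : (2 : ℝ≥0∞) ^ (m : ℝ) * A ≠ ∞ := ENNReal.mul_ne_top (two_rpow_ne_top _) hA'
  have pt : ∀ x ∈ level f A m,
      f x ^ a ≤ 2 ^ a * ((2 : ℝ≥0∞) ^ (m : ℝ) * A) ^ (a - p) * f x ^ p := by
    intro x hx
    have hx0 : f x ≠ 0 := fun h => h2m (le_antisymm (h ▸ hx.1) bot_le)
    have hxt : f x ≠ ∞ := hx.2.ne_top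
    have e : f x ^ a = f x ^ (a - p) * f x ^ p := by
      rw [← ENNReal.rpow_add _ _ hx0 hxt]; ring_nf
    rw [e]
    gcongr
    rcases le_total p a with h | h
    · calc f x ^ (a - p) ≤ (2 * (2 ^ (m : ℝ) * A)) ^ (a - p) := by
            refine ENNReal.rpow_le_rpow ?_ (by linarith)
            · refine hx.2.le.trans (le_of_eq ?_)
              rw [two_rpow_add]; simp; ring
        _ = 2 ^ (a - p) * (2 ^ (m : ℝ) * A) ^ (a - p) :=
            ENNReal.mul_rpow_of_nonneg _ _ (by linarith)
        _ ≤ _ := by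
            gcongr
            · norm_num
            · linarith
    · calc f x ^ (a - p) ≤ (2 ^ (m : ℝ) * A) ^ (a - p) :=
            by
            rw [← neg_sub p a, ENNReal.rpow_neg, ENNReal.rpow_neg]
            exact ENNReal.inv_le_inv.2 (ENNReal.rpow_le_rpow hx.1 (by linarith))
        _ ≤ _ := by
            refine le_mul_of_one_le_left (by positivity) ?_
            exact ENNReal.one_le_rpow (by norm_num) (by linarith)
  have int : ∫⁻ x in level f A m, f x ^ a ∂μ ≤ 2 ^ a * 2 ^ (m * (a - p)) * A ^ a * lam := by
    calc ∫⁻ x in level f A m, f x ^ a ∂μ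
        ≤ ∫⁻ x in level f A m, 2 ^ a * ((2 : ℝ≥0∞) ^ (m : ℝ) * A) ^ (a - p) * f x ^ p ∂μ :=
          setLIntegral_mono' hm pt
      _ = 2 ^ a * ((2 : ℝ≥0∞) ^ (m : ℝ) * A) ^ (a - p) * ∫⁻ x in level f A m, f x ^ p ∂μ := by
          refine lintegral_const_mul' _ _ ?_
          exact ENNReal.mul_ne_top (two_rpow_ne_top _)
            (ENNReal.rpow_ne_top_of_ne_zero h2m h2m')
      _ = _ := by
          rw [ENNReal.mul_rpow_of_ne_top (two_rpow_ne_top _) hA', ← ENNReal.rpow_mul, hlam,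
            sub_eq_add_neg a p, ENNReal.rpow_add _ _ hA hA']
          ring
  calc (∫⁻ x in level f A m, f x ^ a ∂μ) ^ (1 / a)
      ≤ (2 ^ a * 2 ^ (m * (a - p)) * A ^ a * lam) ^ (1 / a) := by gcongr
    _ = 2 * 2 ^ (m * (1 - p / a)) * (A * lam ^ (1 / a)) := by
        have h1 : 0 ≤ 1 / a := by positivity
        simp only [ENNReal.mul_rpow_of_nonneg _ _ h1, ← ENNReal.rpow_mul]
        rw [mul_one_div_cancel ha0.ne', ENNReal.rpow_one, ENNReal.rpow_one,
          show m * (a - p) * (1 / a) = m * (1 - p / a) by field_simp]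
        ring
    _ ≤ _ := by
        gcongr 2 * 2 ^ (m * (1 - p / a)) * (A * ?_)
        exact ENNReal.rpow_le_rpow_of_exponent_ge hlam1 (by
          rw [div_le_div_iff₀] <;> linarith)

/-! ### The one-dimensional Hardy–Littlewood–Sobolev inequality -/

/-- The `L^p` norm of a nonnegative function, for a real exponent. -/
noncomputable def nrm {α : Type*} [MeasurableSpace α] (μ : Measure α) (p : ℝ) (f : α → ℝ≥0∞) :
    ℝ≥0∞ := (∫⁻ x, f x ^ p ∂μ) ^ (1 / p)

/-- The reference amplitude of a dyadic decomposition: the norm itself, replaced by `1` when the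
norm vanishes so that the level sets still exhaust the support. -/
noncomputable def amp (N : ℝ≥0∞) : ℝ≥0∞ := if N = 0 then 1 else N

/-- The coefficient attached to the `m`-th level set in the decomposition of an `L^p` function. -/
noncomputable def coef {α : Type*} [MeasurableSpace α] (μ : Measure α) (p : ℝ) (f : α → ℝ≥0∞)
    (m : ℤ) : ℝ≥0∞ :=
  amp (nrm μ p f) * (amp (nrm μ p f) ^ (-p) *
    ∫⁻ x in level f (amp (nrm μ p f)) m, f x ^ p ∂μ) ^ (1 / 2 : ℝ)

lemma amp_ne_zero (N : ℝ≥0∞) : amp N ≠ 0 := by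
  unfold amp; split_ifs with h <;> simp [h]

lemma amp_ne_top {N : ℝ≥0∞} (hN : N ≠ ∞) : amp N ≠ ∞ := by
  unfold amp; split_ifs with h <;> simp [hN]

lemma measurable_amp : Measurable amp :=
  Measurable.ite (measurableSet_singleton 0) measurable_const measurable_id

lemma nrm_rpow {α : Type*} [MeasurableSpace α] (μ : Measure α) {p : ℝ} (hp : 0 < p)
    (f : α → ℝ≥0∞) : nrm μ p f ^ p = ∫⁻ x, f x ^ p ∂μ := by
  unfold nrm
  rw [← ENNReal.rpow_mul, one_div_mul_cancel hp.ne', ENNReal.rpow_one]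

lemma nrm_mono {α : Type*} [MeasurableSpace α] (μ : Measure α) {p : ℝ} (hp : 0 < p)
    {f g : α → ℝ≥0∞} (h : ∀ x, f x ≤ g x) : nrm μ p f ≤ nrm μ p g := by
  unfold nrm
  refine ENNReal.rpow_le_rpow (lintegral_mono fun x => ENNReal.rpow_le_rpow (h x) hp.le) ?_
  positivity

lemma nrm_const_mul {α : Type*} [MeasurableSpace α] (μ : Measure α) {p : ℝ} (hp : 0 < p)
    {c : ℝ≥0∞} (hc : c ≠ ∞) (f : α → ℝ≥0∞) : nrm μ p (fun x => c * f x) = c * nrm μ p f := by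
  unfold nrm
  simp_rw [ENNReal.mul_rpow_of_nonneg _ _ hp.le]
  rw [lintegral_const_mul' _ _ (ENNReal.rpow_ne_top_of_nonneg hp.le hc),
    ENNReal.mul_rpow_of_nonneg _ _ (by positivity), ← ENNReal.rpow_mul,
    mul_one_div_cancel hp.ne', ENNReal.rpow_one]

lemma nrm_one {α : Type*} [MeasurableSpace α] (μ : Measure α) (f : α → ℝ≥0∞) :
    nrm μ 1 f = ∫⁻ x, f x ∂μ := by
  simp [nrm]

lemma nrm_indicator {α : Type*} [MeasurableSpace α] (μ : Measure α) {p : ℝ} (hp : 0 < p)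
    (f : α → ℝ≥0∞) {s : Set α} (hs : MeasurableSet s) :
    nrm μ p (s.indicator f) = (∫⁻ x in s, f x ^ p ∂μ) ^ (1 / p) := by
  unfold nrm
  congr 1
  rw [← lintegral_indicator hs]
  congr 1
  ext x
  by_cases h : x ∈ s <;> simp [h, hp]

/-- The `L^a` norm of a level piece, in terms of its coefficient. -/
lemma coef_bound {α : Type*} [MeasurableSpace α] (μ : Measure α) {f : α → ℝ≥0∞}
    (hf : Measurable f) {p a : ℝ} (hp : 0 < p) (hN : nrm μ p f ≠ ∞) (ha : 1 ≤ a) (ha2 : a ≤ 2)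
    (m : ℤ) :
    nrm μ a ((level f (amp (nrm μ p f)) m).indicator f) ≤
      2 * 2 ^ (m * (1 - p / a)) * coef μ p f m := by
  have hm : MeasurableSet (level f (amp (nrm μ p f)) m) :=
    measurableSet_level hf measurable_const m
  rw [nrm_indicator μ (by linarith) f hm]
  refine level_bound μ (amp_ne_zero _) (amp_ne_top hN) hp.le ha ha2 ?_ m hm
  rw [← nrm_rpow μ hp]
  by_cases h : nrm μ p f = 0
  · simp [h, hp]
  · rw [amp, if_neg h, ← ENNReal.rpow_add _ _ h hN]; simp

/-- The coefficients are square-summable, since the level sets are disjoint. -/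
lemma coef_sq_sum {α : Type*} [MeasurableSpace α] (μ : Measure α) {f : α → ℝ≥0∞}
    (hf : Measurable f) {p : ℝ} (hp : 0 < p) (hN : nrm μ p f ≠ ∞) :
    ∑' m, coef μ p f m ^ (2 : ℝ) ≤ nrm μ p f ^ (2 : ℝ) := by
  have hm : ∀ m, MeasurableSet (level f (amp (nrm μ p f)) m) :=
    measurableSet_level hf measurable_const
  unfold coef
  simp only [ENNReal.mul_rpow_of_nonneg _ _ (zero_le_two : (0 : ℝ) ≤ 2), rpow_half_sq,
    ENNReal.tsum_mul_left]
  rw [← lintegral_iUnion hm (fun i j h => level_disjoint _ _ h)]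
  refine le_trans (mul_le_mul_right (mul_le_mul_right
    (setLIntegral_le_lintegral _ _) _) _) ?_
  rw [← nrm_rpow μ hp]
  by_cases h : nrm μ p f = 0
  · simp [h, hp]
  · rw [amp, if_neg h, ← ENNReal.rpow_add _ _ h hN]; simp

/-- Every value of `f` is recovered from its dyadic pieces. -/
lemma le_tsum_level {α : Type*} {f : α → ℝ≥0∞} {A : ℝ≥0∞} (hA : A ≠ 0) (hA' : A ≠ ∞)
    (x : α) (hx : f x ≠ ∞) : f x ≤ ∑' m, (level f A m).indicator f x := by
  by_cases h : f x = 0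
  · simp [h]
  · obtain ⟨m, hm⟩ := exists_mem_level hA hA' h hx
    refine le_trans ?_ (ENNReal.le_tsum m)
    simp [hm]

/-- For `1 < p < 2`, one of the exponents `a = 1`, `a = 2` produces decay in `|X|`: the first for
`X ≥ 0`, the second for `X ≤ 0`. -/
lemma choose_exponent {p : ℝ} (X : ℝ) :
    ∃ a : ℝ, (a = 1 ∨ a = 2) ∧ X * (1 - p / a) ≤ -(min (p - 1) (1 - p / 2) * |X|) := by
  rcases le_total 0 X with h | h
  · refine ⟨1, Or.inl rfl, ?_⟩
    rw [abs_of_nonneg h]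
    have := min_le_left (p - 1) (1 - p / 2)
    have e := mul_le_mul_of_nonneg_right this h
    linarith [div_one p, show X * (1 - p / 1) = -((p - 1) * X) by ring]
  · refine ⟨2, Or.inr rfl, ?_⟩
    rw [abs_of_nonpos h]
    have := min_le_right (p - 1) (1 - p / 2)
    have e := mul_le_mul_of_nonneg_right this (neg_nonneg.2 h)
    linarith [show X * (1 - p / 2) = -((1 - p / 2) * -X) by ring]

/-- The indicator of the strip `|t - s| < L`. -/
noncomputable def strip (L : ℝ) (s t : ℝ) : ℝ≥0∞ := if |t - s| < L then 1 else 0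

lemma measurable_strip (L : ℝ) : Measurable (fun z : ℝ × ℝ => strip L z.1 z.2) := by
  refine Measurable.ite ?_ measurable_const measurable_const
  exact measurableSet_lt (by fun_prop) measurable_const

lemma measurable_strip_left (L s : ℝ) : Measurable (strip L s) :=
  (measurable_strip L).comp (measurable_const.prodMk measurable_id)

lemma measurable_strip_right (L t : ℝ) : Measurable (fun s => strip L s t) :=
  (measurable_strip L).comp (measurable_id.prodMk measurable_const)

lemma strip_comm (L s t : ℝ) : strip L s t = strip L t s := by
  simp [strip, abs_sub_comm]

lemma strip_sq (L s t : ℝ) : strip L s t ^ (2 : ℝ) = strip L s t := by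
  unfold strip; split_ifs <;> simp

lemma lintegral_strip (L s : ℝ) : ∫⁻ t, strip L s t = ENNReal.ofReal (2 * L) := by
  have : strip L s = (Metric.ball s L).indicator (fun _ => 1) := by
    ext t; simp [strip, Set.indicator, Metric.mem_ball, Real.dist_eq]
  rw [this, lintegral_indicator Metric.isOpen_ball.measurableSet]
  simp

lemma lintegral_strip' (L t : ℝ) : ∫⁻ s, strip L s t = ENNReal.ofReal (2 * L) := by
  simp_rw [strip_comm L _ t]; exact lintegral_strip L t

lemma nrm_two_strip (L : ℝ) {φ : ℝ → ℝ≥0∞} (hφ : Measurable φ) :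
    ∫⁻ s, ∫⁻ t, strip L s t * φ s ^ (2 : ℝ) = ENNReal.ofReal (2 * L) * nrm volume 2 φ ^ (2 : ℝ) := by
  rw [nrm_rpow _ (by norm_num), ← lintegral_const_mul _ (by fun_prop)]
  congr 1; ext s
  rw [lintegral_mul_const _ (measurable_strip_left L s), lintegral_strip]

lemma nrm_two_strip' (L : ℝ) {φ : ℝ → ℝ≥0∞} (hφ : Measurable φ) :
    ∫⁻ s, ∫⁻ t, strip L s t * φ t ^ (2 : ℝ) = ENNReal.ofReal (2 * L) * nrm volume 2 φ ^ (2 : ℝ) := by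
  rw [lintegral_lintegral_swap]
  · simp_rw [strip_comm L]; exact nrm_two_strip L hφ
  · exact ((measurable_strip L).mul (by fun_prop)).aemeasurable

/-- Corner `(2, 2)`, by Cauchy–Schwarz in both variables together. -/
lemma strip_22 (L : ℝ) {φ ψ : ℝ → ℝ≥0∞} (hφ : Measurable φ) (hψ : Measurable ψ) :
    ∫⁻ s, ∫⁻ t, strip L s t * (φ s * ψ t) ≤
      ENNReal.ofReal (2 * L) * (nrm volume 2 φ * nrm volume 2 ψ) := by
  have hm := measurable_strip L
  have h := cauchy_schwarz (volume : Measure (ℝ × ℝ))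
    (f := fun z => strip L z.1 z.2 * φ z.1) (g := fun z => strip L z.1 z.2 * ψ z.2)
    (by fun_prop) (by fun_prop)
  simp only [ENNReal.mul_rpow_of_nonneg _ _ (zero_le_two : (0 : ℝ) ≤ 2), strip_sq] at h
  rw [Measure.volume_eq_prod, lintegral_prod _ (by fun_prop), lintegral_prod _ (by fun_prop),
    lintegral_prod _ (by fun_prop)] at h
  simp only [] at h
  rw [nrm_two_strip L hφ, nrm_two_strip' L hψ] at h
  refine le_trans (le_of_eq ?_) (h.trans (le_of_eq ?_))
  · refine lintegral_congr fun s => lintegral_congr fun t => ?_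
    rw [mul_mul_mul_comm]
    congr 1
    unfold strip; split_ifs <;> simp
  · rw [ENNReal.mul_rpow_of_nonneg _ _ (by norm_num), ENNReal.mul_rpow_of_nonneg _ _ (by norm_num),
      sq_rpow_half, sq_rpow_half, mul_mul_mul_comm, half_mul_half]

/-- Corner `(1, 2)`, by Cauchy–Schwarz in `t` alone. -/
lemma strip_12 (L : ℝ) {φ ψ : ℝ → ℝ≥0∞} (hφ : Measurable φ) (hψ : Measurable ψ) :
    ∫⁻ s, ∫⁻ t, strip L s t * (φ s * ψ t) ≤
      ENNReal.ofReal (2 * L) ^ (1 / 2 : ℝ) * (nrm volume 1 φ * nrm volume 2 ψ) := by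
  have key : ∀ s, ∫⁻ t, strip L s t * (φ s * ψ t) ≤
      φ s * (ENNReal.ofReal (2 * L) ^ (1 / 2 : ℝ) * nrm volume 2 ψ) := by
    intro s
    have h := cauchy_schwarz (volume : Measure ℝ) (f := strip L s) (g := ψ)
      (measurable_strip_left L s).aemeasurable hψ.aemeasurable
    simp only [strip_sq, lintegral_strip] at h
    calc ∫⁻ t, strip L s t * (φ s * ψ t) = ∫⁻ t, φ s * (strip L s t * ψ t) := by
          congr 1; ext t; ring
      _ = φ s * ∫⁻ t, strip L s t * ψ t :=
          lintegral_const_mul _ ((measurable_strip_left L s).mul hψ)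
      _ ≤ _ := by gcongr; exact h
  refine (lintegral_mono key).trans (le_of_eq ?_)
  rw [lintegral_mul_const _ hφ, nrm_one]
  ring

lemma strip_swap (L : ℝ) {φ ψ : ℝ → ℝ≥0∞} (hφ : Measurable φ) (hψ : Measurable ψ) :
    ∫⁻ s, ∫⁻ t, strip L s t * (φ s * ψ t) = ∫⁻ s, ∫⁻ t, strip L s t * (ψ s * φ t) := by
  rw [lintegral_lintegral_swap]
  · simp_rw [strip_comm L, mul_comm (φ _)]
  · exact ((measurable_strip L).mul (by fun_prop)).aemeasurable

/-- Corner `(1, 1)`: the strip is bounded by one. -/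
lemma strip_11 (L : ℝ) {φ ψ : ℝ → ℝ≥0∞} (hφ : Measurable φ) (hψ : Measurable ψ) :
    ∫⁻ s, ∫⁻ t, strip L s t * (φ s * ψ t) ≤ nrm volume 1 φ * nrm volume 1 ψ := by
  rw [nrm_one, nrm_one, ← lintegral_mul_const _ hφ]
  refine lintegral_mono fun s => ?_
  simp only []
  rw [← lintegral_const_mul _ hψ]
  refine lintegral_mono fun t => ?_
  unfold strip; split_ifs <;> simp

/-- Young's inequality for the indicator of a strip, at the four corner exponents. -/
lemma strip_bound {L : ℝ} {φ ψ : ℝ → ℝ≥0∞} (hφ : Measurable φ)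
    (hψ : Measurable ψ) {a b : ℝ} (ha : a = 1 ∨ a = 2) (hb : b = 1 ∨ b = 2) :
    ∫⁻ s, ∫⁻ t, strip L s t * (φ s * ψ t) ≤
      ENNReal.ofReal (2 * L) ^ (2 - 1 / a - 1 / b) * (nrm volume a φ * nrm volume b ψ) := by
  rcases ha with rfl | rfl <;> rcases hb with rfl | rfl
  · norm_num; exact strip_11 L hφ hψ
  · norm_num; simpa using strip_12 L hφ hψ
  · norm_num; rw [strip_swap L hφ hψ, mul_comm (nrm volume 2 φ)]; simpa using strip_12 L hψ hφ
  · rw [show (2 : ℝ) - 1 / 2 - 1 / 2 = 1 by norm_num, ENNReal.rpow_one]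
    exact strip_22 L hφ hψ

lemma lintegral2_tsum {h : ℤ → ℝ → ℝ → ℝ≥0∞}
    (hh : ∀ i, Measurable (fun z : ℝ × ℝ => h i z.1 z.2)) :
    ∫⁻ s, ∫⁻ t, ∑' i, h i s t = ∑' i, ∫⁻ s, ∫⁻ t, h i s t := by
  rw [← lintegral_tsum fun i => (hh i).lintegral_prod_right'.aemeasurable]
  refine lintegral_congr fun s => ?_
  exact lintegral_tsum fun i => ((hh i).comp measurable_prodMk_left).aemeasurable

/-- The one-dimensional Hardy–Littlewood–Sobolev inequality on the diagonal `L^p × L^p`. -/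
theorem hls {p : ℝ} (hp1 : 1 < p) (hp2 : p < 2) :
    ∃ C : ℝ≥0∞, C ≠ ∞ ∧ ∀ φ ψ : ℝ → ℝ≥0∞, Measurable φ → Measurable ψ →
      (∀ t, φ t ≠ ∞) → (∀ t, ψ t ≠ ∞) → nrm volume p φ ≠ ∞ → nrm volume p ψ ≠ ∞ →
      ∫⁻ s, ∫⁻ t, ENNReal.ofReal |t - s| ^ (-(2 - 2 / p)) * (φ s * ψ t) ≤
        C * (nrm volume p φ * nrm volume p ψ) := by
  set ε := min (p - 1) (1 - p / 2) with hε
  have hε0 : 0 < ε := lt_min (by linarith) (by linarith)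
  obtain ⟨C, hC, hsum⟩ := triple_sum hε0 (κ := 1 / p) (by positivity)
  refine ⟨64 * C, ENNReal.mul_ne_top (by norm_num) hC, ?_⟩
  intro φ ψ hφ hψ hφt hψt hφN hψN
  set A := amp (nrm volume p φ)
  set B := amp (nrm volume p ψ)
  have hlam : 0 < 2 - 2 / p := by
    rw [sub_pos, div_lt_iff₀] <;> linarith
  have mφ : ∀ m, Measurable ((level φ A m).indicator φ) := fun m =>
    hφ.indicator (measurableSet_level hφ measurable_const m)
  have mψ : ∀ m, Measurable ((level ψ B m).indicator ψ) := fun m =>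
    hψ.indicator (measurableSet_level hψ measurable_const m)
  have mK : ∀ j : ℤ, Measurable (fun z : ℝ × ℝ => strip (2 ^ (j + 1 : ℝ)) z.1 z.2) :=
    fun j => measurable_strip _
  -- The kernel is dominated by a sum of dyadic strips off the diagonal.
  have hK : ∀ s t : ℝ, t ≠ s → ENNReal.ofReal |t - s| ^ (-(2 - 2 / p)) ≤
      ∑' j : ℤ, (2 : ℝ≥0∞) ^ (-(j * (2 - 2 / p))) * strip (2 ^ (j + 1 : ℝ)) s t := by
    intro s t hst
    have h0 : ENNReal.ofReal |t - s| ≠ 0 := by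
      simpa [sub_eq_zero] using hst
    obtain ⟨j, hj1, hj2⟩ := exists_mem_level (f := fun x : ℝ≥0∞ => x) (A := 1) (by simp) (by simp)
      h0 ENNReal.ofReal_ne_top
    refine le_trans ?_ (ENNReal.le_tsum j)
    rw [mul_one] at hj1 hj2
    have : strip (2 ^ (j + 1 : ℝ)) s t = 1 := by
      unfold strip
      rw [if_pos]
      rw [two_rpow_eq_ofReal] at hj2
      exact (ENNReal.ofReal_lt_ofReal_iff (by positivity)).1 hj2
    rw [this, mul_one, neg_mul_eq_mul_neg, ENNReal.rpow_mul, ENNReal.rpow_neg, ENNReal.rpow_neg]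
    exact ENNReal.inv_le_inv.2 (ENNReal.rpow_le_rpow hj1 hlam.le)
  -- Corner bound for one triple of dyadic pieces.
  have piece : ∀ j m n : ℤ, (2 : ℝ≥0∞) ^ (-(j * (2 - 2 / p))) *
      ∫⁻ s, ∫⁻ t, strip (2 ^ (j + 1 : ℝ)) s t *
        ((level φ A m).indicator φ s * (level ψ B n).indicator ψ t) ≤
      64 * (2 ^ (-(ε * (|m + 1 / p * j| + |n + 1 / p * j|))) *
        (coef volume p φ m * coef volume p ψ n)) := by
    intro j m n
    obtain ⟨a, ha, hae⟩ := choose_exponent (p := p) (m + 1 / p * j)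
    obtain ⟨b, hb, hbe⟩ := choose_exponent (p := p) (n + 1 / p * j)
    rw [← hε] at hae hbe
    have ha1 : 1 ≤ a ∧ a ≤ 2 := by rcases ha with rfl | rfl <;> norm_num
    have hb1 : 1 ≤ b ∧ b ≤ 2 := by rcases hb with rfl | rfl <;> norm_num
    have h1 := strip_bound (L := 2 ^ (j + 1 : ℝ)) (mφ m) (mψ n) ha hb
    have h2 := coef_bound volume hφ (by linarith) hφN ha1.1 ha1.2 m
    have h3 := coef_bound volume hψ (by linarith) hψN hb1.1 hb1.2 n
    have hE : 0 ≤ 2 - 1 / a - 1 / b := by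
      rcases ha with rfl | rfl <;> rcases hb with rfl | rfl <;> norm_num
    have hE2 : 2 - 1 / a - 1 / b ≤ 2 := by
      have : 0 ≤ 1 / a := by apply one_div_nonneg.2; linarith
      have : 0 ≤ 1 / b := by apply one_div_nonneg.2; linarith
      linarith
    have h4 : ENNReal.ofReal (2 * 2 ^ (j + 1 : ℝ)) ^ (2 - 1 / a - 1 / b) ≤
        16 * 2 ^ (j * (2 - 1 / a - 1 / b)) := by
      have : ENNReal.ofReal (2 * 2 ^ (j + 1 : ℝ)) = 2 ^ (2 + j : ℝ) := by
        rw [two_rpow_eq_ofReal]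
        congr 1
        rw [show (2 + j : ℝ) = 1 + (j + 1) by ring, Real.rpow_add (by norm_num) 1]
        simp
      rw [this, ← ENNReal.rpow_mul, add_mul, two_rpow_add]
      gcongr
      calc (2 : ℝ≥0∞) ^ (2 * (2 - 1 / a - 1 / b)) ≤ 2 ^ (4 : ℝ) := two_rpow_mono (by linarith)
        _ = 16 := by
          rw [show (4 : ℝ) = ((4 : ℕ) : ℝ) by norm_num, ENNReal.rpow_natCast]; norm_num
    calc _ ≤ (2 : ℝ≥0∞) ^ (-(j * (2 - 2 / p))) * (16 * 2 ^ (j * (2 - 1 / a - 1 / b)) *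
          ((2 * 2 ^ (m * (1 - p / a)) * coef volume p φ m) *
            (2 * 2 ^ (n * (1 - p / b)) * coef volume p ψ n))) := by
          gcongr
          exact h1.trans (by gcongr)
      _ = 64 * (2 ^ (-(j * (2 - 2 / p)) + j * (2 - 1 / a - 1 / b) + m * (1 - p / a)
            + n * (1 - p / b)) * (coef volume p φ m * coef volume p ψ n)) := by
          rw [two_rpow_add, two_rpow_add, two_rpow_add]; ring
      _ ≤ _ := by
          gcongr
          · norm_num
          · refine le_trans (le_of_eq ?_) ((add_le_add hae hbe).trans (le_of_eq (by ring)))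
            have ha0 : a ≠ 0 := by linarith
            have hb0 : b ≠ 0 := by linarith
            field_simp
            ring
  calc ∫⁻ s, ∫⁻ t, ENNReal.ofReal |t - s| ^ (-(2 - 2 / p)) * (φ s * ψ t)
      ≤ ∫⁻ s, ∫⁻ t, ∑' j : ℤ, ∑' m : ℤ, ∑' n : ℤ, (2 : ℝ≥0∞) ^ (-(j * (2 - 2 / p))) *
        (strip (2 ^ (j + 1 : ℝ)) s t *
          ((level φ A m).indicator φ s * (level ψ B n).indicator ψ t)) := by
        refine lintegral_mono fun s => lintegral_mono_ae ?_
        have : ∀ᵐ t : ℝ, t ≠ s := by simp [ae_iff]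
        filter_upwards [this] with t ht
        calc _ ≤ (∑' j : ℤ, (2 : ℝ≥0∞) ^ (-(j * (2 - 2 / p))) * strip (2 ^ (j + 1 : ℝ)) s t) *
              ((∑' m, (level φ A m).indicator φ s) * (∑' n, (level ψ B n).indicator ψ t)) := by
              gcongr
              · exact hK s t ht
              · exact le_tsum_level (amp_ne_zero _) (amp_ne_top hφN) s (hφt s)
              · exact le_tsum_level (amp_ne_zero _) (amp_ne_top hψN) t (hψt t)
          _ = _ := by
              simp only [ENNReal.tsum_mul_left, ENNReal.tsum_mul_right, ← mul_assoc]
    _ = ∑' j : ℤ, ∑' m : ℤ, ∑' n : ℤ, (2 : ℝ≥0∞) ^ (-(j * (2 - 2 / p))) *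
        ∫⁻ s, ∫⁻ t, strip (2 ^ (j + 1 : ℝ)) s t *
          ((level φ A m).indicator φ s * (level ψ B n).indicator ψ t) := by
        have hmeas : ∀ j m n : ℤ, Measurable (fun z : ℝ × ℝ =>
            (2 : ℝ≥0∞) ^ (-(j * (2 - 2 / p))) * (strip (2 ^ (j + 1 : ℝ)) z.1 z.2 *
            ((level φ A m).indicator φ z.1 * (level ψ B n).indicator ψ z.2))) := by
          intro j m n
          have := mK j
          have h1 := mφ m
          have h2 := mψ n
          fun_prop
        rw [lintegral2_tsum fun j => Measurable.tsum fun m =>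
          Measurable.tsum fun n => hmeas j m n]
        refine tsum_congr fun j => ?_
        rw [lintegral2_tsum fun m => Measurable.tsum fun n => hmeas j m n]
        refine tsum_congr fun m => ?_
        rw [lintegral2_tsum fun n => hmeas j m n]
        refine tsum_congr fun n => ?_
        simp_rw [lintegral_const_mul' _ _ (two_rpow_ne_top _)]
    _ ≤ ∑' j : ℤ, ∑' m : ℤ, ∑' n : ℤ, 64 *
        (2 ^ (-(ε * (|m + 1 / p * j| + |n + 1 / p * j|))) *
        (coef volume p φ m * coef volume p ψ n)) :=
        ENNReal.tsum_le_tsum fun j => ENNReal.tsum_le_tsum fun m => ENNReal.tsum_le_tsum fun n =>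
          piece j m n
    _ ≤ 64 * (C * ((∑' m, coef volume p φ m ^ (2 : ℝ)) ^ (1 / 2 : ℝ) *
          (∑' n, coef volume p ψ n ^ (2 : ℝ)) ^ (1 / 2 : ℝ))) := by
        simp only [ENNReal.tsum_mul_left]
        gcongr
        exact hsum _ _
    _ ≤ 64 * (C * ((nrm volume p φ ^ (2 : ℝ)) ^ (1 / 2 : ℝ) *
          (nrm volume p ψ ^ (2 : ℝ)) ^ (1 / 2 : ℝ))) := by
        gcongr
        · exact coef_sq_sum volume hφ (by linarith) hφN
        · exact coef_sq_sum volume hψ (by linarith) hψN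
    _ = _ := by rw [sq_rpow_half, sq_rpow_half, mul_assoc]

/-! ### The regularised Schrödinger kernel -/

/-- Physical space. -/
abbrev Sp (d : ℕ) := EuclideanSpace ℝ (Fin d)

/-- The complex time `ε + iτ`. -/
noncomputable def ctime (ε τ : ℝ) : ℂ := (ε : ℂ) + I * τ

/-- The Schrödinger kernel at the complex time `ε + iτ`; for `ε > 0` it is a bounded Gaussian. -/
noncomputable def kern {d : ℕ} (ε τ : ℝ) (x : Sp d) : ℂ :=
  (4 * (Real.pi : ℂ) * ctime ε τ) ^ (-(d : ℂ) / 2) *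
    cexp (-((‖x‖ ^ 2 : ℝ) : ℂ) / (4 * ctime ε τ))

@[simp] lemma ctime_re (ε τ : ℝ) : (ctime ε τ).re = ε := by simp [ctime]
@[simp] lemma ctime_im (ε τ : ℝ) : (ctime ε τ).im = τ := by simp [ctime]

lemma kern_neg {d : ℕ} (ε τ : ℝ) (x : Sp d) : kern ε τ (-x) = kern ε τ x := by
  simp [kern]

/-- The Gaussian kernel as a superposition of plane waves. -/
lemma kern_eq_integral {d : ℕ} {ε : ℝ} (hε : 0 < ε) (τ : ℝ) (x : Sp d) :
    kern ε τ x = ∫ ξ : Sp d, cexp (-(4 * Real.pi ^ 2 * ctime ε τ) * (‖ξ‖ : ℂ) ^ 2 +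
      (2 * Real.pi * I) * ((inner ℝ x ξ : ℝ) : ℂ)) := by
  have hre : 0 < (4 * (Real.pi : ℂ) ^ 2 * ctime ε τ).re := by
    have : (4 * (Real.pi : ℂ) ^ 2 * ctime ε τ) = ((4 * Real.pi ^ 2 : ℝ) : ℂ) * ctime ε τ := by
      push_cast; ring
    rw [this, re_ofReal_mul, ctime_re]
    positivity
  rw [GaussianFourier.integral_cexp_neg_mul_sq_norm_add hre]
  have hz : ctime ε τ ≠ 0 := by
    intro h; have := congrArg re h; simp at this; exact hε.ne' this
  have hpi : (Real.pi : ℂ) ≠ 0 := by exact_mod_cast Real.pi_ne_zero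
  unfold kern
  congr 1
  · have e1 : (Real.pi : ℂ) / (4 * Real.pi ^ 2 * ctime ε τ) = (4 * Real.pi * ctime ε τ)⁻¹ := by
      field_simp
    rw [e1, finrank_euclideanSpace_fin, inv_cpow, ← cpow_neg, neg_div]
    intro h
    have hre' : 0 < (4 * (Real.pi : ℂ) * ctime ε τ).re := by
      have : (4 * (Real.pi : ℂ) * ctime ε τ) = ((4 * Real.pi : ℝ) : ℂ) * ctime ε τ := by
        push_cast; ring
      rw [this, re_ofReal_mul, ctime_re]
      positivity
    rw [arg_eq_pi_iff] at h
    linarith [h.1]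
  · congr 1
    push_cast
    field_simp
    rw [I_sq]; ring

lemma continuous_kern {d : ℕ} {ε : ℝ} (hε : 0 < ε) :
    Continuous (fun p : ℝ × Sp d => kern ε p.1 p.2) := by
  have hz : ∀ τ : ℝ, ctime ε τ ≠ 0 := by
    intro τ h; have := congrArg re h; simp at this; exact hε.ne' this
  have hc : Continuous (fun p : ℝ × Sp d => ctime ε p.1) := by unfold ctime; fun_prop
  unfold kern
  refine Continuous.mul ?_ ?_
  · refine Continuous.cpow (by fun_prop) continuous_const ?_
    intro p
    left
    have : (4 * (Real.pi : ℂ) * ctime ε p.1) = ((4 * Real.pi : ℝ) : ℂ) * ctime ε p.1 := by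
      push_cast; ring
    rw [this, re_ofReal_mul, ctime_re]
    positivity
  · refine continuous_exp.comp (Continuous.div (by fun_prop) (by fun_prop) ?_)
    intro p
    simpa using hz p.1

lemma norm_kern_le_aux {d : ℕ} {ε : ℝ} (hε : 0 ≤ ε) (τ : ℝ) (x : Sp d) :
    ‖kern ε τ x‖ ≤ (4 * Real.pi * ‖ctime ε τ‖) ^ (-(d : ℝ) / 2) := by
  unfold kern
  rw [norm_mul]
  have h1 : ‖cexp (-((‖x‖ ^ 2 : ℝ) : ℂ) / (4 * ctime ε τ))‖ ≤ 1 := by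
    rw [norm_exp, Real.exp_le_one_iff, ← ofReal_neg, div_eq_mul_inv, re_ofReal_mul, inv_re]
    apply mul_nonpos_of_nonpos_of_nonneg (by simp)
    apply div_nonneg _ (normSq_nonneg _)
    simp [hε]
  have h2 : ‖(4 * (Real.pi : ℂ) * ctime ε τ) ^ (-(d : ℂ) / 2)‖ =
      (4 * Real.pi * ‖ctime ε τ‖) ^ (-(d : ℝ) / 2) := by
    have : (-(d : ℂ) / 2) = ((-(d : ℝ) / 2 : ℝ) : ℂ) := by push_cast; ring
    rw [this, norm_cpow_real]
    simp [abs_of_pos Real.pi_pos]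
  rw [h2]
  exact mul_le_of_le_one_right (by positivity) h1

/-- Dispersive decay of the kernel, uniform in the regularisation. -/
lemma norm_kern_le {d : ℕ} {ε : ℝ} (hε : 0 ≤ ε) {τ : ℝ} (hτ : τ ≠ 0) (x : Sp d) :
    ‖kern ε τ x‖ ≤ (4 * Real.pi * |τ|) ^ (-(d : ℝ) / 2) := by
  refine (norm_kern_le_aux hε τ x).trans ?_
  apply Real.rpow_le_rpow_of_nonpos
  · have := Real.pi_pos; positivity
  · have := abs_im_le_norm (ctime ε τ)
    rw [ctime_im] at this
    have := Real.pi_pos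
    gcongr
  · have : (0 : ℝ) ≤ d := by positivity
    linarith

/-- A crude bound making every integral against the regularised kernel absolutely convergent. -/
lemma norm_kern_le' {d : ℕ} {ε : ℝ} (hε : 0 < ε) (τ : ℝ) (x : Sp d) :
    ‖kern ε τ x‖ ≤ (4 * Real.pi * ε) ^ (-(d : ℝ) / 2) := by
  refine (norm_kern_le_aux hε.le τ x).trans ?_
  apply Real.rpow_le_rpow_of_nonpos
  · have := Real.pi_pos; positivity
  · have := abs_re_le_norm (ctime ε τ)
    rw [ctime_re, abs_of_pos hε] at this
    have := Real.pi_pos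
    gcongr
  · have : (0 : ℝ) ≤ d := by positivity
    linarith

/-- The heat kernel has total mass one. -/
lemma lintegral_kern_zero {d : ℕ} {ε : ℝ} (hε : 0 < ε) :
    ∫⁻ x : Sp d, ‖kern ε 0 x‖ₑ = 1 := by
  have hpi := Real.pi_pos
  have e : ∀ x : Sp d, kern ε 0 x =
      (((4 * Real.pi * ε) ^ (-(d : ℝ) / 2) * Real.exp (-(4 * ε)⁻¹ * ‖x‖ ^ 2) : ℝ) : ℂ) := by
    intro x
    unfold kern ctime
    rw [ofReal_mul, ofReal_cpow (by positivity)]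
    push_cast
    congr 1
    · simp
    · congr 1; simp; field_simp
  have hb : 0 < (4 * ε)⁻¹ := by positivity
  have hi := GaussianFourier.integral_rexp_neg_mul_sq_norm (V := Sp d) hb
  have hgauss : Integrable (fun x : Sp d => Real.exp (-(4 * ε)⁻¹ * ‖x‖ ^ 2)) := by
    by_contra h
    rw [integral_undef h] at hi
    have : 0 < (Real.pi / (4 * ε)⁻¹) ^ ((Module.finrank ℝ (Sp d) : ℝ) / 2) := by positivity
    exact this.ne hi
  have e2 : ∀ x : Sp d, ‖kern ε 0 x‖ₑ = ENNReal.ofReal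
      ((4 * Real.pi * ε) ^ (-(d : ℝ) / 2) * Real.exp (-(4 * ε)⁻¹ * ‖x‖ ^ 2)) := by
    intro x
    rw [e, ← ofReal_norm, norm_real, Real.norm_of_nonneg (by positivity)]
  simp_rw [e2]
  rw [← ofReal_integral_eq_lintegral_ofReal (hgauss.const_mul _)
    (Filter.Eventually.of_forall fun x => by positivity), integral_const_mul, hi,
    finrank_euclideanSpace_fin]
  have : Real.pi / (4 * ε)⁻¹ = 4 * Real.pi * ε := by field_simp
  rw [this, ← Real.rpow_add (by positivity)]
  have : -(d : ℝ) / 2 + d / 2 = 0 := by ring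
  simp [this]

/-! ### Gram structure and the `TT*` principle -/

/-- The unimodular phase `e^{4π²iσ|ξ|² - 2πi⟨η, ξ⟩}`. -/
noncomputable def wave {d : ℕ} (σ : ℝ) (η ξ : Sp d) : ℂ :=
  cexp (((4 * Real.pi ^ 2 * σ * ‖ξ‖ ^ 2 - 2 * Real.pi * inner ℝ η ξ : ℝ) : ℂ) * I)

lemma norm_wave {d : ℕ} (σ : ℝ) (η ξ : Sp d) : ‖wave σ η ξ‖ = 1 := norm_exp_ofReal_mul_I _

lemma continuous_wave {d : ℕ} :
    Continuous (fun p : ℝ × Sp d × Sp d => wave p.1 p.2.1 p.2.2) := by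
  unfold wave; fun_prop

/-- Fourier transform of data carried by the space-time points `(σ a, η a)`, transported to time
zero by the free flow. -/
noncomputable def amplitude {d : ℕ} {α : Type*} [MeasurableSpace α] (μ : Measure α) (σ : α → ℝ)
    (η : α → Sp d) (F : α → ℂ) (ξ : Sp d) : ℂ := ∫ a, wave (σ a) (η a) ξ * F a ∂μ

/-- The heat multiplier. -/
noncomputable def heat {d : ℕ} (ε : ℝ) (ξ : Sp d) : ℂ :=
  ((Real.exp (-(4 * Real.pi ^ 2 * ε) * ‖ξ‖ ^ 2) : ℝ) : ℂ)

lemma heat_mul_wave {d : ℕ} (ε σ σ' : ℝ) (η η' ξ : Sp d) :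
    heat ε ξ * (wave σ η ξ * (starRingEnd ℂ) (wave σ' η' ξ)) =
      cexp (-(4 * Real.pi ^ 2 * ctime ε (σ' - σ)) * (‖ξ‖ : ℂ) ^ 2 +
      (2 * Real.pi * I) * ((inner ℝ (η' - η) ξ : ℝ) : ℂ)) := by
  unfold heat wave ctime
  rw [← exp_conj, ofReal_exp, ← Complex.exp_add, ← Complex.exp_add, inner_sub_left]
  congr 1
  simp only [map_mul, conj_ofReal, conj_I]
  push_cast
  ring

lemma integrable_heat {d : ℕ} {ε : ℝ} (hε : 0 < ε) : Integrable (heat ε : Sp d → ℂ) := by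
  have h := GaussianFourier.integrable_cexp_neg_mul_sq_norm_add (V := Sp d)
    (b := 4 * Real.pi ^ 2 * ctime ε 0) (by
      have : (4 * (Real.pi : ℂ) ^ 2 * ctime ε 0) = ((4 * Real.pi ^ 2 : ℝ) : ℂ) * ctime ε 0 := by
        push_cast; ring
      rw [this, re_ofReal_mul, ctime_re]
      have := Real.pi_pos
      positivity) 0 0
  refine h.congr (Filter.Eventually.of_forall fun ξ => ?_)
  simp [heat, ctime]

lemma measurable_heat {d : ℕ} (ε : ℝ) : Measurable (heat ε : Sp d → ℂ) := by
  unfold heat; fun_prop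

lemma integrable_wave_mul {d : ℕ} {α : Type*} [MeasurableSpace α] {μ : Measure α} {σ : α → ℝ}
    {η : α → Sp d} (hσ : Measurable σ) (hη : Measurable η) {F : α → ℂ} (hF : Integrable F μ)
    (ξ : Sp d) : Integrable (fun a => wave (σ a) (η a) ξ * F a) μ := by
  refine hF.bdd_mul (c := 1) ?_ (Filter.Eventually.of_forall fun a => (norm_wave _ _ _).le)
  exact (continuous_wave.measurable.comp
    (hσ.prodMk (hη.prodMk measurable_const))).aestronglyMeasurable

/-- The kernel form is a Gram form: on the Fourier side it is an inner product of amplitudes with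
the heat weight. -/
lemma gram {d : ℕ} {α β : Type*} [MeasurableSpace α] [MeasurableSpace β] {μ : Measure α}
    {ν : Measure β} [SFinite μ] [SFinite ν] {σ : α → ℝ} {η : α → Sp d} {σ' : β → ℝ} {η' : β → Sp d}
    (hσ : Measurable σ) (hη : Measurable η) (hσ' : Measurable σ') (hη' : Measurable η')
    {F : α → ℂ} {G : β → ℂ} (hF : Integrable F μ) (hG : Integrable G ν) {ε : ℝ} (hε : 0 < ε) :
    ∫ p : α × β, kern ε (σ' p.2 - σ p.1) (η' p.2 - η p.1) * (F p.1 * (starRingEnd ℂ) (G p.2))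
        ∂(μ.prod ν) =
      ∫ ξ : Sp d, heat ε ξ * (amplitude μ σ η F ξ * (starRingEnd ℂ) (amplitude ν σ' η' G ξ)) := by
  have hG' : Integrable (fun b => (starRingEnd ℂ) (G b)) ν :=
    (LinearIsometryEquiv.integrable_comp_iff conjLIE).2 hG
  have hprod : ∀ ξ, amplitude μ σ η F ξ * (starRingEnd ℂ) (amplitude ν σ' η' G ξ) =
      ∫ p : α × β, (wave (σ p.1) (η p.1) ξ * F p.1) *
        ((starRingEnd ℂ) (wave (σ' p.2) (η' p.2) ξ * G p.2)) ∂(μ.prod ν) := by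
    intro ξ
    unfold amplitude
    rw [integral_prod_mul (fun a => wave (σ a) (η a) ξ * F a)
      (fun b => (starRingEnd ℂ) (wave (σ' b) (η' b) ξ * G b)), integral_conj]
  simp_rw [hprod, ← integral_const_mul]
  rw [integral_integral_swap]
  · congr 1; ext p
    rw [kern_eq_integral hε, ← integral_mul_const]
    congr 1; ext ξ
    rw [← heat_mul_wave, map_mul]
    ring
  · have h1 : Integrable (fun z : Sp d × (α × β) => heat ε z.1 *
        (F z.2.1 * (starRingEnd ℂ) (G z.2.2))) (volume.prod (μ.prod ν)) :=
      (integrable_heat hε).mul_prod (hF.mul_prod hG')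
    have h2 : Measurable (fun z : Sp d × (α × β) => wave (σ z.2.1) (η z.2.1) z.1 *
        (starRingEnd ℂ) (wave (σ' z.2.2) (η' z.2.2) z.1)) := by
      refine Measurable.mul ?_ ?_
      · exact continuous_wave.measurable.comp ((hσ.comp (by fun_prop)).prodMk
          ((hη.comp (by fun_prop)).prodMk (by fun_prop)))
      · refine continuous_conj.measurable.comp (continuous_wave.measurable.comp
          ((hσ'.comp (by fun_prop)).prodMk ((hη'.comp (by fun_prop)).prodMk (by fun_prop))))
    refine (h1.bdd_mul (c := 1) h2.aestronglyMeasurable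
      (Filter.Eventually.of_forall fun z => ?_)).congr (Filter.Eventually.of_forall fun z => ?_)
    · simp [norm_wave]
    · simp only [Function.uncurry, map_mul]; ring

lemma aesm_amplitude {d : ℕ} {α : Type*} [MeasurableSpace α] {μ : Measure α} [SFinite μ]
    {σ : α → ℝ} {η : α → Sp d} (hσ : Measurable σ) (hη : Measurable η) {F : α → ℂ}
    (hF : Integrable F μ) : AEStronglyMeasurable (amplitude μ σ η F) volume := by
  unfold amplitude
  apply AEStronglyMeasurable.integral_prod_right' (f := fun z : Sp d × α =>
    wave (σ z.2) (η z.2) z.1 * F z.2)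
  refine AEStronglyMeasurable.mul ?_ ?_
  · exact (continuous_wave.measurable.comp ((hσ.comp measurable_snd).prodMk
          ((hη.comp measurable_snd).prodMk measurable_fst))).aestronglyMeasurable
  · exact hF.aestronglyMeasurable.comp_snd

lemma norm_amplitude_le {d : ℕ} {α : Type*} [MeasurableSpace α] (μ : Measure α)
    (σ : α → ℝ) (η : α → Sp d) (F : α → ℂ) (ξ : Sp d) :
    ‖amplitude μ σ η F ξ‖ ≤ ∫ a, ‖F a‖ ∂μ := by
  refine (norm_integral_le_integral_norm _).trans (le_of_eq ?_)
  simp [norm_wave]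

/-- The quadratic form of the kernel, as a weighted `L²` norm. -/
lemma gram_diag {d : ℕ} {α : Type*} [MeasurableSpace α] {μ : Measure α} [SFinite μ]
    {σ : α → ℝ} {η : α → Sp d} (hσ : Measurable σ) (hη : Measurable η) {F : α → ℂ}
    (hF : Integrable F μ) {ε : ℝ} (hε : 0 < ε) :
    ‖∫ p : α × α, kern ε (σ p.2 - σ p.1) (η p.2 - η p.1) * (F p.1 * (starRingEnd ℂ) (F p.2))
        ∂(μ.prod μ)‖ₑ =
      ∫⁻ ξ : Sp d, ‖heat ε ξ‖ₑ * ‖amplitude μ σ η F ξ‖ₑ ^ (2 : ℝ) := by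
  rw [gram hσ hη hσ hη hF hF hε]
  have e : ∀ ξ : Sp d, heat ε ξ * (amplitude μ σ η F ξ * (starRingEnd ℂ) (amplitude μ σ η F ξ)) =
      ((Real.exp (-(4 * Real.pi ^ 2 * ε) * ‖ξ‖ ^ 2) * ‖amplitude μ σ η F ξ‖ ^ 2 : ℝ) : ℂ) := by
    intro ξ
    rw [mul_conj, normSq_eq_norm_sq]; unfold heat; push_cast; ring
  simp_rw [e]
  rw [integral_complex_ofReal, ← ofReal_norm, norm_real, Real.norm_of_nonneg
    (integral_nonneg fun ξ => by positivity), ofReal_integral_eq_lintegral_ofReal]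
  · refine lintegral_congr fun ξ => ?_
    rw [ENNReal.ofReal_mul (by positivity), ENNReal.ofReal_pow (by positivity), ofReal_norm,
      ← ofReal_norm (heat ε ξ), heat, norm_real, Real.norm_of_nonneg (by positivity)]
    norm_cast
  · have h : Integrable (fun ξ : Sp d => Real.exp (-(4 * Real.pi ^ 2 * ε) * ‖ξ‖ ^ 2)) := by
      refine (integrable_heat (d := d) hε).re.congr (Filter.Eventually.of_forall fun ξ => ?_)
      simp only [heat, RCLike.re_to_complex, ofReal_re]
    refine (h.mul_bdd (c := (∫ a, ‖F a‖ ∂μ) ^ 2) ((aesm_amplitude hσ hη hF).norm.pow 2)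
      (Filter.Eventually.of_forall fun ξ => ?_))
    simp only [norm_pow, norm_norm]
    gcongr
    exact norm_amplitude_le _ _ _ _ _
  · exact Filter.Eventually.of_forall fun ξ => by positivity

/-- Cauchy–Schwarz for the kernel form. This is the `TT*` principle. -/
theorem gram_cauchy {d : ℕ} {α β : Type*} [MeasurableSpace α] [MeasurableSpace β] {μ : Measure α}
    {ν : Measure β} [SFinite μ] [SFinite ν] {σ : α → ℝ} {η : α → Sp d} {σ' : β → ℝ} {η' : β → Sp d}
    (hσ : Measurable σ) (hη : Measurable η) (hσ' : Measurable σ') (hη' : Measurable η')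
    {F : α → ℂ} {G : β → ℂ} (hF : Integrable F μ) (hG : Integrable G ν) {ε : ℝ} (hε : 0 < ε) :
    ‖∫ p : α × β, kern ε (σ' p.2 - σ p.1) (η' p.2 - η p.1) * (F p.1 * (starRingEnd ℂ) (G p.2))
        ∂(μ.prod ν)‖ₑ ≤
      ‖∫ p : α × α, kern ε (σ p.2 - σ p.1) (η p.2 - η p.1) * (F p.1 * (starRingEnd ℂ) (F p.2))
        ∂(μ.prod μ)‖ₑ ^ (1 / 2 : ℝ) *
      ‖∫ p : β × β, kern ε (σ' p.2 - σ' p.1) (η' p.2 - η' p.1) *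
        (G p.1 * (starRingEnd ℂ) (G p.2)) ∂(ν.prod ν)‖ₑ ^ (1 / 2 : ℝ) := by
  rw [gram_diag hσ hη hF hε, gram_diag hσ' hη' hG hε, gram hσ hη hσ' hη' hF hG hε]
  refine (enorm_integral_le_lintegral_enorm _).trans ?_
  have hh : AEMeasurable (fun ξ : Sp d => ‖heat ε ξ‖ₑ ^ (1 / 2 : ℝ)) volume :=
    ((measurable_heat ε).enorm.pow_const _).aemeasurable
  have h := cauchy_schwarz (volume : Measure (Sp d))
    (f := fun ξ => ‖heat ε ξ‖ₑ ^ (1 / 2 : ℝ) * ‖amplitude μ σ η F ξ‖ₑ)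
    (g := fun ξ => ‖heat ε ξ‖ₑ ^ (1 / 2 : ℝ) * ‖amplitude ν σ' η' G ξ‖ₑ)
    (hh.mul (aesm_amplitude hσ hη hF).enorm) (hh.mul (aesm_amplitude hσ' hη' hG).enorm)
  simp only [ENNReal.mul_rpow_of_nonneg _ _ (zero_le_two : (0 : ℝ) ≤ 2), rpow_half_sq] at h
  refine le_trans (le_of_eq ?_) h
  refine lintegral_congr fun ξ => ?_
  rw [enorm_mul, enorm_mul, mul_mul_mul_comm, half_mul_half]
  congr 2
  simp [← ofReal_norm]

/-! ### Test functions, dispersive and energy estimates -/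

/-- Bounded measurable functions with bounded support; a class of test functions stable under
restriction to measurable sets. -/
structure Nice {α : Type*} [NormedAddCommGroup α] [MeasurableSpace α] (f : α → ℂ) : Prop where
  meas : Measurable f
  bdd : ∃ M : ℝ, ∀ x, ‖f x‖ ≤ M
  supp : ∃ R : ℝ, ∀ x, R < ‖x‖ → f x = 0

lemma Nice.indicator {α : Type*} [NormedAddCommGroup α] [MeasurableSpace α] {f : α → ℂ}
    (hf : Nice f) {s : Set α} (hs : MeasurableSet s) : Nice (s.indicator f) := by
  obtain ⟨M, hM⟩ := hf.bdd
  obtain ⟨R, hR⟩ := hf.supp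
  refine ⟨hf.meas.indicator hs, ⟨M, fun x => ?_⟩, ⟨R, fun x hx => ?_⟩⟩
  · exact (norm_indicator_le_norm_self _ _).trans (hM x)
  · simp [Set.indicator, hR x hx]

lemma Nice.conj {α : Type*} [NormedAddCommGroup α] [MeasurableSpace α] {f : α → ℂ}
    (hf : Nice f) : Nice (fun x => (starRingEnd ℂ) (f x)) := by
  obtain ⟨M, hM⟩ := hf.bdd
  obtain ⟨R, hR⟩ := hf.supp
  refine ⟨continuous_conj.measurable.comp hf.meas, ⟨M, fun x => ?_⟩, ⟨R, fun x hx => ?_⟩⟩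
  · simpa using hM x
  · simp [hR x hx]

lemma Nice.lintegral_lt_top {α : Type*} [NormedAddCommGroup α] [MeasureSpace α] [BorelSpace α]
    [ProperSpace α] [IsFiniteMeasureOnCompacts (volume : Measure α)] {f : α → ℂ}
    (hf : Nice f) {a : ℝ} (ha : 0 < a) : ∫⁻ x, ‖f x‖ₑ ^ a < ∞ := by
  obtain ⟨M, hM⟩ := hf.bdd
  obtain ⟨R, hR⟩ := hf.supp
  have h : ∀ x, ‖f x‖ₑ ^ a ≤
      (Metric.closedBall (0 : α) R).indicator (fun _ => ENNReal.ofReal M ^ a) x := by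
    intro x
    by_cases hx : x ∈ Metric.closedBall (0 : α) R
    · simp only [hx, Set.indicator_of_mem]
      refine ENNReal.rpow_le_rpow ?_ ha.le
      rw [← ofReal_norm]
      exact ENNReal.ofReal_le_ofReal (hM x)
    · have : f x = 0 := hR x (by simpa using hx)
      simp [this, ha]
  refine (lintegral_mono h).trans_lt ?_
  rw [lintegral_indicator Metric.isClosed_closedBall.measurableSet]
  simp only [lintegral_const, Measure.restrict_apply, MeasurableSet.univ, Set.univ_inter]
  exact ENNReal.mul_lt_top (ENNReal.rpow_lt_top_of_nonneg ha.le (by simp))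
    (isCompact_closedBall _ _).measure_lt_top

lemma Nice.integrable {α : Type*} [NormedAddCommGroup α] [MeasureSpace α] [BorelSpace α]
    [ProperSpace α] [IsFiniteMeasureOnCompacts (volume : Measure α)] {f : α → ℂ}
    (hf : Nice f) : Integrable f := by
  refine ⟨hf.meas.aestronglyMeasurable, ?_⟩
  have := hf.lintegral_lt_top (zero_lt_one)
  simpa [HasFiniteIntegral] using this

lemma Nice.slice {d : ℕ} {F : ℝ × Sp d → ℂ} (hF : Nice F) (t : ℝ) :
    Nice (fun x => F (t, x)) := by
  obtain ⟨M, hM⟩ := hF.bdd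
  obtain ⟨R, hR⟩ := hF.supp
  refine ⟨hF.meas.comp measurable_prodMk_left, ⟨M, fun x => hM _⟩, ⟨R, fun x hx => hR _ ?_⟩⟩
  exact hx.trans_le (le_max_right _ _)

/-- The `L^a` norm of a complex function. -/
noncomputable def lnorm {α : Type*} [MeasureSpace α] (a : ℝ) (f : α → ℂ) : ℝ≥0∞ :=
  nrm volume a (fun x => ‖f x‖ₑ)

lemma Nice.lnorm_ne_top {α : Type*} [NormedAddCommGroup α] [MeasureSpace α] [BorelSpace α]
    [ProperSpace α] [IsFiniteMeasureOnCompacts (volume : Measure α)] {f : α → ℂ}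
    (hf : Nice f) {a : ℝ} (ha : 0 < a) : lnorm a f ≠ ∞ := by
  unfold lnorm nrm
  exact ENNReal.rpow_ne_top_of_nonneg (by positivity) (hf.lintegral_lt_top ha).ne

/-- The triangle inequality for an integral cut along countably many disjoint pieces. -/
lemma enorm_integral_le_tsum {Ω ι : Type*} [MeasurableSpace Ω] [Countable ι] {μ : Measure Ω}
    {h : Ω → ℂ} (hh : Integrable h μ) {E : ι → Set Ω} (hE : ∀ i, MeasurableSet (E i))
    (hd : Pairwise (fun i j => Disjoint (E i) (E j))) (hc : ∀ x, h x ≠ 0 → ∃ i, x ∈ E i) :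
    ‖∫ x, h x ∂μ‖ₑ ≤ ∑' i, ‖∫ x, (E i).indicator h x ∂μ‖ₑ := by
  have h1 : ∫ x, h x ∂μ = ∫ x in ⋃ i, E i, h x ∂μ := by
    rw [← integral_indicator (MeasurableSet.iUnion hE)]
    congr 1; ext x
    by_cases hx : h x = 0
    · simp [Set.indicator, hx]
    · rw [Set.indicator_of_mem (Set.mem_iUnion.2 (hc x hx))]
  have h2 := hasSum_integral_iUnion hE hd hh.integrableOn
  rw [h1, ← h2.tsum_eq]
  simp_rw [integral_indicator (hE _)]
  exact enorm_tsum_le_tsum_enorm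

/-- The spatial form `∫∫ k_ε(τ, x - y) f(y) g(x) dy dx`. -/
noncomputable def bform {d : ℕ} (ε τ : ℝ) (f g : Sp d → ℂ) : ℂ :=
  ∫ p : Sp d × Sp d, kern ε τ (p.2 - p.1) * (f p.1 * g p.2)

lemma integrable_bform {d : ℕ} {ε : ℝ} (hε : 0 < ε) (τ : ℝ) {f g : Sp d → ℂ} (hf : Integrable f)
    (hg : Integrable g) :
    Integrable (fun p : Sp d × Sp d => kern ε τ (p.2 - p.1) * (f p.1 * g p.2)) := by
  refine (hf.mul_prod hg).bdd_mul (c := (4 * Real.pi * ε) ^ (-(d : ℝ) / 2)) ?_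
    (Filter.Eventually.of_forall fun p => norm_kern_le' hε _ _)
  exact ((continuous_kern hε).comp (f := fun p : Sp d × Sp d => (τ, p.2 - p.1))
    (by fun_prop)).aestronglyMeasurable

lemma enorm_kern_le {d : ℕ} {ε : ℝ} (hε : 0 ≤ ε) {τ : ℝ} (hτ : τ ≠ 0) (x : Sp d) :
    ‖kern ε τ x‖ₑ ≤ ENNReal.ofReal |τ| ^ (-(d : ℝ) / 2) := by
  have hp := abs_pos.2 hτ
  rw [ENNReal.ofReal_rpow_of_pos hp, ← ofReal_norm]
  refine ENNReal.ofReal_le_ofReal ((norm_kern_le hε hτ x).trans ?_)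
  apply Real.rpow_le_rpow_of_nonpos hp
  · nlinarith [Real.pi_gt_three]
  · have : (0 : ℝ) ≤ d := by positivity
    linarith

lemma lintegral_prod_mul_enorm {α β : Type*} [MeasurableSpace α] [MeasurableSpace β]
    {μ : Measure α} {ν : Measure β} [SFinite ν] {f : α → ℂ} {g : β → ℂ} (hf : Measurable f)
    (hg : Measurable g) : ∫⁻ p, ‖f p.1 * g p.2‖ₑ ∂(μ.prod ν) = (∫⁻ x, ‖f x‖ₑ ∂μ) * ∫⁻ y, ‖g y‖ₑ ∂ν := by
  simp_rw [enorm_mul]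
  exact lintegral_prod_mul hf.enorm.aemeasurable hg.enorm.aemeasurable

/-- The dispersive estimate. -/
lemma bform_one {d : ℕ} {ε : ℝ} (hε : 0 < ε) {τ : ℝ} (hτ : τ ≠ 0) {f g : Sp d → ℂ}
    (hf : Nice f) (hg : Nice g) :
    ‖bform ε τ f g‖ₑ ≤ ENNReal.ofReal |τ| ^ (-(d : ℝ) / 2) * (lnorm 1 f * lnorm 1 g) := by
  refine (enorm_integral_le_lintegral_enorm _).trans ?_
  unfold lnorm
  rw [nrm_one, nrm_one, ← lintegral_prod_mul_enorm hf.meas hg.meas,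
    ← lintegral_const_mul _ (by have := hf.meas; have := hg.meas; fun_prop)]
  refine lintegral_mono fun p => ?_
  rw [enorm_mul]
  gcongr
  exact enorm_kern_le hε.le hτ _

/-- The heat semigroup contracts `L²`: Cauchy–Schwarz with a kernel of total mass one. -/
lemma bform_zero_diag {d : ℕ} {ε : ℝ} (hε : 0 < ε) {f g : Sp d → ℂ}
    (hf : Nice f) (hg : Nice g) :
    ‖bform ε 0 f g‖ₑ ≤ lnorm 2 f * lnorm 2 g := by
  refine (enorm_integral_le_lintegral_enorm _).trans ?_
  have hk : Measurable (fun x : Sp d => ‖kern ε 0 x‖ₑ ^ (1 / 2 : ℝ)) :=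
    (((continuous_kern hε).comp (f := fun x : Sp d => ((0 : ℝ), x))
      (by fun_prop)).measurable.enorm).pow_const _
  have hk' : Measurable (fun x : Sp d => ‖kern ε 0 x‖ₑ) :=
    (((continuous_kern hε).comp (f := fun x : Sp d => ((0 : ℝ), x)) (by fun_prop)).measurable.enorm)
  have hfm := hf.meas
  have hgm := hg.meas
  have h := cauchy_schwarz (volume : Measure (Sp d × Sp d))
    (f := fun p => ‖kern ε 0 (p.2 - p.1)‖ₑ ^ (1 / 2 : ℝ) * ‖f p.1‖ₑ)
    (g := fun p => ‖kern ε 0 (p.2 - p.1)‖ₑ ^ (1 / 2 : ℝ) * ‖g p.2‖ₑ)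
    (((hk.comp (measurable_snd.sub measurable_fst)).mul (by fun_prop)).aemeasurable)
    (((hk.comp (measurable_snd.sub measurable_fst)).mul (by fun_prop)).aemeasurable)
  simp only [ENNReal.mul_rpow_of_nonneg _ _ (zero_le_two : (0 : ℝ) ≤ 2), rpow_half_sq] at h
  have m1 : Measurable (fun p : Sp d × Sp d => ‖kern ε 0 (p.2 - p.1)‖ₑ * ‖f p.1‖ₑ ^ (2 : ℝ)) :=
    (hk'.comp (measurable_snd.sub measurable_fst)).mul (by fun_prop)
  have m2 : Measurable (fun p : Sp d × Sp d => ‖kern ε 0 (p.2 - p.1)‖ₑ * ‖g p.2‖ₑ ^ (2 : ℝ)) :=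
    (hk'.comp (measurable_snd.sub measurable_fst)).mul (by fun_prop)
  have e1 : ∫⁻ p : Sp d × Sp d, ‖kern ε 0 (p.2 - p.1)‖ₑ * ‖f p.1‖ₑ ^ (2 : ℝ) =
      ∫⁻ y, ‖f y‖ₑ ^ (2 : ℝ) := by
    rw [Measure.volume_eq_prod, lintegral_prod _ m1.aemeasurable]
    refine lintegral_congr fun y => ?_
    simp only
    rw [lintegral_mul_const _ (by exact hk'.comp (measurable_id.sub_const y)), lintegral_sub_right_eq_self
      (fun x => ‖kern ε 0 x‖ₑ), lintegral_kern_zero hε, one_mul]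
  have e2 : ∫⁻ p : Sp d × Sp d, ‖kern ε 0 (p.2 - p.1)‖ₑ * ‖g p.2‖ₑ ^ (2 : ℝ) =
      ∫⁻ y, ‖g y‖ₑ ^ (2 : ℝ) := by
    rw [Measure.volume_eq_prod, lintegral_prod_symm _ m2.aemeasurable]
    refine lintegral_congr fun y => ?_
    simp only
    rw [lintegral_mul_const _ (by exact hk'.comp (measurable_id.const_sub y)), lintegral_sub_left_eq_self
      (fun x => ‖kern ε 0 x‖ₑ), lintegral_kern_zero hε, one_mul]
  rw [e1, e2] at h
  refine le_trans (le_of_eq ?_) h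
  refine lintegral_congr fun p => ?_
  rw [enorm_mul, enorm_mul, mul_mul_mul_comm, half_mul_half]

lemma lnorm_conj {α : Type*} [MeasureSpace α] (a : ℝ) (f : α → ℂ) :
    lnorm a (fun x => (starRingEnd ℂ) (f x)) = lnorm a f := by
  simp [lnorm, ← ofReal_norm]

/-- The flow is a contraction on `L²`. -/
lemma bform_two {d : ℕ} {ε : ℝ} (hε : 0 < ε) (τ : ℝ) {f g : Sp d → ℂ}
    (hf : Nice f) (hg : Nice g) :
    ‖bform ε τ f g‖ₑ ≤ lnorm 2 f * lnorm 2 g := by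
  have h := gram_cauchy (μ := (volume : Measure (Sp d))) (ν := (volume : Measure (Sp d)))
    (σ := fun _ => 0) (σ' := fun _ => τ) (η := id) (η' := id) measurable_const measurable_id
    measurable_const measurable_id hf.integrable hg.conj.integrable hε
  simp only [sub_zero, sub_self, id, RCLike.conj_conj] at h
  refine h.trans ?_
  have h1 := bform_zero_diag hε hf hf.conj
  have h2 := bform_zero_diag hε hg.conj hg
  rw [lnorm_conj] at h1 h2
  have e : ∀ x : ℝ≥0∞, (x * x) ^ (1 / 2 : ℝ) = x := by
    intro x
    rw [ENNReal.mul_rpow_of_nonneg _ _ (by norm_num), half_mul_half]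
  have := mul_le_mul' (ENNReal.rpow_le_rpow h1 (by norm_num : (0 : ℝ) ≤ 1 / 2))
    (ENNReal.rpow_le_rpow h2 (by norm_num : (0 : ℝ) ≤ 1 / 2))
  rwa [e, e] at this

/-! ### Fixed-time decay from `L^p` to the conjugate exponent -/

/-- The `m`-th dyadic piece of `f` relative to its `L^p` norm. -/
noncomputable def piece {α : Type*} [MeasureSpace α] (p : ℝ) (f : α → ℂ) (m : ℤ) : α → ℂ :=
  (level (fun x => ‖f x‖ₑ) (amp (lnorm p f)) m).indicator f

lemma lnorm_piece_le {α : Type*} [MeasureSpace α] {f : α → ℂ} (hf : Measurable f) {p a : ℝ}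
    (hp : 0 < p) (hN : lnorm p f ≠ ∞) (ha : 1 ≤ a) (ha2 : a ≤ 2) (m : ℤ) :
    lnorm a (piece p f m) ≤
      2 * 2 ^ (m * (1 - p / a)) * coef volume p (fun x => ‖f x‖ₑ) m := by
  have := coef_bound volume hf.enorm hp hN ha ha2 m
  refine le_trans (le_of_eq ?_) this
  unfold lnorm piece
  congr 1
  ext x
  simp only [enorm_indicator_eq_indicator_enorm]
  rfl

lemma exists_mem_level_of_ne {α : Type*} [MeasureSpace α] {f : α → ℂ} {p : ℝ}
    (hN : lnorm p f ≠ ∞) {x : α} (hx : f x ≠ 0) :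
    ∃ m, x ∈ level (fun x => ‖f x‖ₑ) (amp (lnorm p f)) m :=
  exists_mem_level (amp_ne_zero _) (amp_ne_top hN) (by simpa using hx) (by simp)

/-- Interpolation of the dispersive estimate with `L²` conservation, by dyadic decomposition. -/
lemma bform_interp_aux {d : ℕ} {p : ℝ} (hp1 : 1 < p) (hp2 : p < 2) :
    ∃ C : ℝ≥0∞, C ≠ ∞ ∧ ∀ ε : ℝ, 0 < ε → ∀ τ : ℝ, τ ≠ 0 → ∀ f g : Sp d → ℂ, Nice f → Nice g →
      ‖bform ε τ f g‖ₑ ≤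
        C * (ENNReal.ofReal |τ| ^ (-(d : ℝ) / 2 * (2 / p - 1)) * (lnorm p f * lnorm p g)) := by
  set e := min (p - 1) (1 - p / 2) with he
  have he0 : 0 < e := lt_min (by linarith) (by linarith)
  obtain ⟨C, hC, hsum⟩ := sum_weight he0 zero_lt_one
  refine ⟨4 * C, by finiteness, ?_⟩
  intro ε hε τ hτ f g hf hg
  have hp0 : 0 < p := by linarith
  have hNf := hf.lnorm_ne_top hp0
  have hNg := hg.lnorm_ne_top hp0
  -- the decay factor is a real power of two
  obtain ⟨δ, hδ⟩ : ∃ δ : ℝ, ENNReal.ofReal |τ| ^ (-(d : ℝ) / 2) = 2 ^ δ := by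
    refine ⟨Real.logb 2 (|τ| ^ (-(d : ℝ) / 2)), ?_⟩
    have hpos : 0 < |τ| ^ (-(d : ℝ) / 2) := Real.rpow_pos_of_pos (abs_pos.2 hτ) _
    rw [two_rpow_eq_ofReal, Real.rpow_logb (by norm_num) (by norm_num) hpos,
      ENNReal.ofReal_rpow_of_pos (abs_pos.2 hτ)]
  have hδ' : ENNReal.ofReal |τ| ^ (-(d : ℝ) / 2 * (2 / p - 1)) = 2 ^ (δ * (2 / p - 1)) := by
    rw [ENNReal.rpow_mul, hδ, ← ENNReal.rpow_mul]
  set c := coef volume p (fun x => ‖f x‖ₑ)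
  set c' := coef volume p (fun x => ‖g x‖ₑ)
  have hmf : ∀ m, MeasurableSet (level (fun x => ‖f x‖ₑ) (amp (lnorm p f)) m) :=
    measurableSet_level hf.meas.enorm measurable_const
  have hmg : ∀ m, MeasurableSet (level (fun x => ‖g x‖ₑ) (amp (lnorm p g)) m) :=
    measurableSet_level hg.meas.enorm measurable_const
  have key : ∀ m n : ℤ, ‖bform ε τ (piece p f m) (piece p g n)‖ₑ ≤
      (4 * 2 ^ (δ * (2 / p - 1))) *
        (2 ^ (-(e * |(m : ℝ) + n - 2 * δ / p|)) * (c m * c' n)) := by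
    intro m n
    obtain ⟨a, ha, hX⟩ := choose_exponent (p := p) ((m : ℝ) + n - 2 * δ / p)
    have h1a : 1 ≤ a := by rcases ha with rfl | rfl <;> norm_num
    have ha2 : a ≤ 2 := by rcases ha with rfl | rfl <;> norm_num
    have hb : ‖bform ε τ (piece p f m) (piece p g n)‖ₑ ≤
        2 ^ (δ * (2 / a - 1)) * (lnorm a (piece p f m) * lnorm a (piece p g n)) := by
      rcases ha with rfl | rfl
      · have := bform_one hε hτ (hf.indicator (hmf m)) (hg.indicator (hmg n))
        rw [hδ] at this
        norm_num
        exact this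
      · have := bform_two hε τ (hf.indicator (hmf m)) (hg.indicator (hmg n))
        norm_num
        exact this
    refine hb.trans ?_
    have hm := lnorm_piece_le hf.meas hp0 hNf h1a ha2 m
    have hn := lnorm_piece_le hg.meas hp0 hNg h1a ha2 n
    calc _ ≤ 2 ^ (δ * (2 / a - 1)) * ((2 * 2 ^ (m * (1 - p / a)) * c m) *
          (2 * 2 ^ (n * (1 - p / a)) * c' n)) := by gcongr
      _ = 4 * 2 ^ (δ * (2 / a - 1) + m * (1 - p / a) + n * (1 - p / a)) * (c m * c' n) := by
          rw [two_rpow_add, two_rpow_add]; ring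
      _ ≤ 4 * 2 ^ (δ * (2 / p - 1) + -(e * |(m : ℝ) + n - 2 * δ / p|)) * (c m * c' n) := by
          have : δ * (2 / a - 1) + m * (1 - p / a) + n * (1 - p / a) =
              δ * (2 / p - 1) + ((m : ℝ) + n - 2 * δ / p) * (1 - p / a) := by
            field_simp; ring
          refine mul_le_mul' (mul_le_mul' le_rfl (two_rpow_mono ?_)) le_rfl
          rw [this]; linarith
      _ = _ := by rw [two_rpow_add]; ring
  have hdec := enorm_integral_le_tsum (integrable_bform hε τ hf.integrable hg.integrable)
    (E := fun i : ℤ × ℤ => (level (fun x => ‖f x‖ₑ) (amp (lnorm p f)) i.1) ×ˢ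
      (level (fun x => ‖g x‖ₑ) (amp (lnorm p g)) i.2))
    (fun i => (hmf i.1).prod (hmg i.2))
    (by
      intro i j hij
      rw [Set.disjoint_prod]
      by_cases h : i.1 = j.1
      · right
        exact level_disjoint _ _ (fun h2 => hij (Prod.ext h h2))
      · left
        exact level_disjoint _ _ h)
    (by
      intro x hx
      have h1 : f x.1 ≠ 0 := by intro h; simp [h] at hx
      have h2 : g x.2 ≠ 0 := by intro h; simp [h] at hx
      obtain ⟨m, hm⟩ := exists_mem_level_of_ne hNf h1
      obtain ⟨n, hn⟩ := exists_mem_level_of_ne hNg h2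
      exact ⟨(m, n), hm, hn⟩)
  have hpiece : ∀ i : ℤ × ℤ, ∫ x : Sp d × Sp d,
      ((level (fun x => ‖f x‖ₑ) (amp (lnorm p f)) i.1) ×ˢ
      (level (fun x => ‖g x‖ₑ) (amp (lnorm p g)) i.2)).indicator
        (fun p => kern ε τ (p.2 - p.1) * (f p.1 * g p.2)) x =
      bform ε τ (piece p f i.1) (piece p g i.2) := by
    intro i
    unfold bform piece
    congr 1; ext x
    simp only [Set.indicator, Set.mem_prod]
    split_ifs <;> first | rfl | simp_all
  simp_rw [hpiece] at hdec
  rw [ENNReal.tsum_prod (f := fun m n => ‖bform ε τ (piece p f m) (piece p g n)‖ₑ)] at hdec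
  refine hdec.trans ((ENNReal.tsum_le_tsum fun m => ENNReal.tsum_le_tsum fun n => key m n).trans ?_)
  simp_rw [ENNReal.tsum_mul_left]
  have hs := schur (fun m n : ℤ => (2 : ℝ≥0∞) ^ (-(e * |(m : ℝ) + n - 2 * δ / p|))) c c' (A := C)
    (by
      intro m
      refine le_trans (le_of_eq ?_) (hsum (m - 2 * δ / p))
      congr 1; ext n; congr 4; ring)
    (by
      intro n
      refine le_trans (le_of_eq ?_) (hsum (n - 2 * δ / p))
      congr 1; ext m; congr 4; ring)
  have hc := coef_sq_sum volume hf.meas.enorm hp0 hNf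
  have hc' := coef_sq_sum volume hg.meas.enorm hp0 hNg
  have hc2 := ENNReal.rpow_le_rpow hc (by norm_num : (0 : ℝ) ≤ 1 / 2)
  have hc2' := ENNReal.rpow_le_rpow hc' (by norm_num : (0 : ℝ) ≤ 1 / 2)
  rw [sq_rpow_half] at hc2 hc2'
  rw [hδ']
  calc _ ≤ 4 * 2 ^ (δ * (2 / p - 1)) * (C * (lnorm p f * lnorm p g)) := by
        gcongr
        exact hs.trans (by gcongr <;> assumption)
    _ = _ := by ring

/-- The fixed-time decay estimate `L^p → L^{p'}`. -/
theorem bform_interp {d : ℕ} {p : ℝ} (hp1 : 1 ≤ p) (hp2 : p ≤ 2) :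
    ∃ C : ℝ≥0∞, C ≠ ∞ ∧ ∀ ε : ℝ, 0 < ε → ∀ τ : ℝ, τ ≠ 0 → ∀ f g : Sp d → ℂ, Nice f → Nice g →
      ‖bform ε τ f g‖ₑ ≤
        C * (ENNReal.ofReal |τ| ^ (-(d : ℝ) / 2 * (2 / p - 1)) * (lnorm p f * lnorm p g)) := by
  rcases hp1.eq_or_lt with rfl | h1
  · refine ⟨1, by simp, fun ε hε τ hτ f g hf hg => ?_⟩
    have := bform_one hε hτ hf hg
    norm_num
    exact this
  rcases hp2.eq_or_lt with rfl | h2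
  · refine ⟨1, by simp, fun ε hε τ hτ f g hf hg => ?_⟩
    have := bform_two hε τ hf hg
    norm_num
    exact this
  exact bform_interp_aux h1 h2

/-! ### Mixed norms and the space-time form -/

/-- Exchange of the two middle factors of a fourfold product. -/
def middleSwap (α β γ δ : Type*) [MeasurableSpace α] [MeasurableSpace β] [MeasurableSpace γ]
    [MeasurableSpace δ] : (α × β) × (γ × δ) ≃ᵐ (α × γ) × (β × δ) where
  toEquiv := Equiv.prodProdProdComm α β γ δ
  measurable_toFun := by
    change Measurable (fun z : (α × β) × (γ × δ) => ((z.1.1, z.2.1), (z.1.2, z.2.2)))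
    fun_prop
  measurable_invFun := by
    change Measurable (fun z : (α × γ) × (β × δ) => ((z.1.1, z.2.1), (z.1.2, z.2.2)))
    fun_prop

lemma middleSwap_apply {α β γ δ : Type*} [MeasurableSpace α] [MeasurableSpace β]
    [MeasurableSpace γ] [MeasurableSpace δ] (z : (α × β) × (γ × δ)) :
    middleSwap α β γ δ z = ((z.1.1, z.2.1), (z.1.2, z.2.2)) := rfl

lemma measurePreserving_middleSwap {α β γ δ : Type*} [MeasureSpace α] [MeasureSpace β]
    [MeasureSpace γ] [MeasureSpace δ] [SigmaFinite (volume : Measure α)]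
    [SigmaFinite (volume : Measure β)] [SigmaFinite (volume : Measure γ)]
    [SigmaFinite (volume : Measure δ)] :
    MeasurePreserving (middleSwap α β γ δ) volume volume := by
  have h1 := measurePreserving_prodAssoc (volume : Measure α) (volume : Measure β)
    (volume : Measure (γ × δ))
  have h2 := (MeasurePreserving.id (volume : Measure α)).prod
    (measurePreserving_prodAssoc (volume : Measure β) (volume : Measure γ)
      (volume : Measure δ)).symm
  have h3 := (MeasurePreserving.id (volume : Measure α)).prod
    ((Measure.measurePreserving_swap (μ := (volume : Measure β)) (ν := (volume : Measure γ))).prod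
      (MeasurePreserving.id (volume : Measure δ)))
  have h4 := (MeasurePreserving.id (volume : Measure α)).prod
    (measurePreserving_prodAssoc (volume : Measure γ) (volume : Measure β)
      (volume : Measure δ))
  have h5 := (measurePreserving_prodAssoc (volume : Measure α) (volume : Measure γ)
    (volume : Measure (β × δ))).symm
  exact h5.comp (h4.comp (h3.comp (h2.comp h1)))

/-- The mixed norm `L^p` in time, `L^m` in space, for finite exponents. -/
noncomputable def mnorm {d : ℕ} (p m : ℝ) (F : ℝ × Sp d → ℂ) : ℝ≥0∞ :=
  nrm volume p (fun t => lnorm m (fun x => F (t, x)))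

lemma measurable_lnorm_slice {d : ℕ} {F : ℝ × Sp d → ℂ} (hF : Measurable F) (m : ℝ) :
    Measurable (fun t => lnorm m (fun x => F (t, x))) := by
  unfold lnorm nrm
  exact (Measurable.lintegral_prod_right' (f := fun z => ‖F z‖ₑ ^ m)
    (hF.enorm.pow_const m)).pow_const _

lemma lnorm_mono {α : Type*} [MeasureSpace α] {a : ℝ} (ha : 0 < a) {f g : α → ℂ}
    (h : ∀ x, ‖f x‖ₑ ≤ ‖g x‖ₑ) : lnorm a f ≤ lnorm a g := nrm_mono _ ha h

lemma mnorm_mono {d : ℕ} {p m : ℝ} (hp : 0 < p) (hm : 0 < m) {F G : ℝ × Sp d → ℂ}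
    (h : ∀ z, ‖F z‖ₑ ≤ ‖G z‖ₑ) : mnorm p m F ≤ mnorm p m G :=
  nrm_mono _ hp fun _ => lnorm_mono hm fun _ => h _

lemma mnorm_conj {d : ℕ} (p m : ℝ) (F : ℝ × Sp d → ℂ) :
    mnorm p m (fun z => (starRingEnd ℂ) (F z)) = mnorm p m F := by
  unfold mnorm
  congr 1; ext t
  exact lnorm_conj m (fun x => F (t, x))

lemma Nice.lnorm_slice_le {d : ℕ} {F : ℝ × Sp d → ℂ} (hF : Nice F) {m : ℝ} (hm : 0 < m) :
    ∃ (R : ℝ) (B : ℝ≥0∞), B ≠ ∞ ∧ ∀ t, lnorm m (fun x => F (t, x)) ≤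
      (Metric.closedBall (0 : ℝ) R).indicator (fun _ => B) t := by
  obtain ⟨M, hM⟩ := hF.bdd
  obtain ⟨R, hR⟩ := hF.supp
  have hg : Nice ((Metric.closedBall (0 : Sp d) R).indicator (fun _ => (M : ℂ))) := by
    refine ⟨measurable_const.indicator Metric.isClosed_closedBall.measurableSet, ⟨|M|, fun x => ?_⟩,
      ⟨R, fun x hx => ?_⟩⟩
    · refine (norm_indicator_le_norm_self _ _).trans (by simp)
    · exact Set.indicator_of_notMem (by simpa using hx) _
  refine ⟨R, _, hg.lnorm_ne_top hm, fun t => ?_⟩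
  by_cases ht : t ∈ Metric.closedBall (0 : ℝ) R
  · simp only [ht, Set.indicator_of_mem]
    refine lnorm_mono hm fun x => ?_
    by_cases hx : x ∈ Metric.closedBall (0 : Sp d) R
    · simp only [hx, Set.indicator_of_mem]
      rw [← ofReal_norm, ← ofReal_norm]
      refine ENNReal.ofReal_le_ofReal ((hM _).trans ?_)
      simpa using le_abs_self M
    · rw [hR (t, x) (lt_of_lt_of_le (by simpa using hx) (le_max_right _ _))]
      simp
  · have : ∀ x, F (t, x) = 0 := fun x =>
      hR (t, x) (lt_of_lt_of_le (by simpa using ht) (le_max_left _ _))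
    simp only [this, ht, not_false_eq_true, Set.indicator_of_notMem, lnorm, nrm]
    simp [hm]

lemma Nice.mnorm_ne_top {d : ℕ} {F : ℝ × Sp d → ℂ} (hF : Nice F) {p m : ℝ} (hp : 0 < p)
    (hm : 0 < m) : mnorm p m F ≠ ∞ := by
  obtain ⟨R, B, hB, h⟩ := hF.lnorm_slice_le hm
  refine ne_top_of_le_ne_top ?_ (nrm_mono volume hp h)
  rw [nrm_indicator _ hp _ Metric.isClosed_closedBall.measurableSet]
  simp only [lintegral_const, Measure.restrict_apply, MeasurableSet.univ, Set.univ_inter]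
  refine ENNReal.rpow_ne_top_of_nonneg (by positivity) (ENNReal.mul_ne_top
    (ENNReal.rpow_ne_top_of_nonneg hp.le hB) (isCompact_closedBall _ _).measure_lt_top.ne)

/-- The integrand of the space-time form, at source time `s`, target time `t`, source point `y`,
target point `x`. -/
noncomputable def formFun {d : ℕ} (ε : ℝ) (χ : ℝ → ℂ) (F G : ℝ × Sp d → ℂ)
    (z : (ℝ × ℝ) × (Sp d × Sp d)) : ℂ :=
  χ (z.1.2 - z.1.1) * (kern ε (z.1.2 - z.1.1) (z.2.2 - z.2.1) *
    (F (z.1.1, z.2.1) * G (z.1.2, z.2.2)))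

/-- The space-time form `∫∫ χ(t - s) ⟨U(t - s) F(s), G(t)⟩ ds dt` with regularised propagator. -/
noncomputable def form {d : ℕ} (ε : ℝ) (χ : ℝ → ℂ) (F G : ℝ × Sp d → ℂ) : ℂ :=
  ∫ z, formFun ε χ F G z

/-- Admissible time cutoffs. -/
structure Cutoff (χ : ℝ → ℂ) : Prop where
  meas : Measurable χ
  le_one : ∀ τ, ‖χ τ‖ ≤ 1

lemma Cutoff.indicator {χ : ℝ → ℂ} (h : Cutoff χ) {s : Set ℝ} (hs : MeasurableSet s) :
    Cutoff (s.indicator χ) :=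
  ⟨h.meas.indicator hs, fun τ => (norm_indicator_le_norm_self _ _).trans (h.le_one τ)⟩

lemma cutoff_one : Cutoff (fun _ => 1) := ⟨measurable_const, by simp⟩

lemma measurable_kern {d : ℕ} {ε : ℝ} (hε : 0 < ε) :
    Measurable (fun p : ℝ × Sp d => kern ε p.1 p.2) := (continuous_kern hε).measurable

lemma measurable_formFun {d : ℕ} {ε : ℝ} (hε : 0 < ε) {χ : ℝ → ℂ} (hχ : Cutoff χ)
    {F G : ℝ × Sp d → ℂ} (hF : Nice F) (hG : Nice G) : Measurable (formFun ε χ F G) := by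
  have h1 := hχ.meas
  have h2 := hF.meas
  have h3 := hG.meas
  have h4 := (measurable_kern (d := d) hε).comp
    (f := fun z : (ℝ × ℝ) × (Sp d × Sp d) => (z.1.2 - z.1.1, z.2.2 - z.2.1)) (by fun_prop)
  unfold formFun
  refine Measurable.mul (by fun_prop) (Measurable.mul h4 (by fun_prop))

lemma integrable_formFun {d : ℕ} {ε : ℝ} (hε : 0 < ε) {χ : ℝ → ℂ} (hχ : Cutoff χ)
    {F G : ℝ × Sp d → ℂ} (hF : Nice F) (hG : Nice G) : Integrable (formFun ε χ F G) := by
  have h := (measurePreserving_middleSwap (α := ℝ) (β := ℝ) (γ := Sp d)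
    (δ := Sp d)).integrable_comp_of_integrable (hF.integrable.mul_prod hG.integrable)
  refine Integrable.mono' (h.norm.const_mul ((4 * Real.pi * ε) ^ (-(d : ℝ) / 2)))
    (measurable_formFun hε hχ hF hG).aestronglyMeasurable
    (Filter.Eventually.of_forall fun z => ?_)
  unfold formFun
  rw [norm_mul, norm_mul]
  simp only [Function.comp_apply, middleSwap_apply]
  calc _ ≤ 1 * ((4 * Real.pi * ε) ^ (-(d : ℝ) / 2) * ‖F (z.1.1, z.2.1) * G (z.1.2, z.2.2)‖) := by
        gcongr
        · exact hχ.le_one _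
        · exact norm_kern_le' hε _ _
    _ = _ := one_mul _

/-- Slicing the form at fixed times. -/
lemma form_le_slices {d : ℕ} {ε : ℝ} (hε : 0 < ε) {χ : ℝ → ℂ} (hχ : Cutoff χ)
    {F G : ℝ × Sp d → ℂ} (hF : Nice F) (hG : Nice G) :
    ‖form ε χ F G‖ₑ ≤ ∫⁻ s, ∫⁻ t, ‖χ (t - s)‖ₑ *
      ‖bform ε (t - s) (fun y => F (s, y)) (fun x => G (t, x))‖ₑ := by
  have hi := integrable_formFun hε hχ hF hG
  unfold form
  rw [Measure.volume_eq_prod] at hi ⊢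
  rw [integral_prod _ hi]
  refine (enorm_integral_le_lintegral_enorm _).trans ?_
  have hm : Measurable (fun w : ℝ × ℝ => ‖∫ y, formFun ε χ F G (w, y)‖ₑ) :=
    ((measurable_formFun hε hχ hF hG).stronglyMeasurable.integral_prod_right').measurable.enorm
  rw [Measure.volume_eq_prod, lintegral_prod _ hm.aemeasurable]
  refine lintegral_mono fun s => lintegral_mono fun t => ?_
  rw [← enorm_mul]
  unfold formFun bform
  rw [← integral_const_mul]

/-! ### Non-endpoint diagonal estimates and `TT*` at a fixed time -/

/-- The diagonal retarded estimate for the exponents `(p, m)`, uniformly in the regularisation and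
in the time cutoff. -/
def DiagBound (d : ℕ) (p m : ℝ) (C : ℝ≥0∞) : Prop :=
  ∀ ε : ℝ, 0 < ε → ∀ χ : ℝ → ℂ, Cutoff χ → ∀ F G : ℝ × Sp d → ℂ, Nice F → Nice G →
    ‖form ε χ F G‖ₑ ≤ C * (mnorm p m F * mnorm p m G)

/-- Conservation of the `L²` norm settles the pair `(∞, 2)`. -/
lemma diag_one_two (d : ℕ) : DiagBound d 1 2 1 := by
  intro ε hε χ hχ F G hF hG
  refine (form_le_slices hε hχ hF hG).trans ?_
  have h1 := measurable_lnorm_slice hF.meas 2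
  have h2 := measurable_lnorm_slice hG.meas 2
  unfold mnorm
  rw [one_mul, nrm_one, nrm_one, ← lintegral_mul_const _ h1]
  refine lintegral_mono fun s => ?_
  simp only
  rw [← lintegral_const_mul _ h2]
  refine lintegral_mono fun t => ?_
  calc _ ≤ 1 * _ := mul_le_mul'
        (by rw [← ofReal_norm, ENNReal.ofReal_le_one]; exact hχ.le_one _)
        (bform_two hε _ (hF.slice s) (hG.slice t))
    _ = _ := one_mul _

/-- Non-endpoint diagonal estimates: fixed-time decay followed by fractional integration. -/
lemma diag_nonendpoint {d : ℕ} {p m : ℝ} (hp1 : 1 < p) (hp2 : p < 2) (hm1 : 1 ≤ m) (hm2 : m ≤ 2)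
    (hadm : 1 - 1 / p = (d : ℝ) / 2 * (1 / m - 1 / 2)) : ∃ C ≠ ∞, DiagBound d p m C := by
  obtain ⟨C₁, hC₁, h₁⟩ := bform_interp (d := d) hm1 hm2
  obtain ⟨C₂, hC₂, h₂⟩ := hls hp1 hp2
  refine ⟨C₁ * C₂, by finiteness, ?_⟩
  intro ε hε χ hχ F G hF hG
  refine (form_le_slices hε hχ hF hG).trans ?_
  have hm0 : 0 < m := by linarith
  have hp0 : 0 < p := by linarith
  have m1 := measurable_lnorm_slice hF.meas m
  have m2 := measurable_lnorm_slice hG.meas m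
  have key := h₂ _ _ m1 m2 (fun t => (hF.slice t).lnorm_ne_top hm0)
    (fun t => (hG.slice t).lnorm_ne_top hm0) (hF.mnorm_ne_top hp0 hm0) (hG.mnorm_ne_top hp0 hm0)
  have hexp : -(d : ℝ) / 2 * (2 / m - 1) = -(2 - 2 / p) := by
    linear_combination 2 * hadm
  rw [mul_assoc]
  refine le_trans ?_ (mul_le_mul_right key C₁)
  rw [← lintegral_const_mul' _ _ hC₁]
  refine lintegral_mono fun s => ?_
  simp only
  rw [← lintegral_const_mul' _ _ hC₁]
  refine lintegral_mono_ae ?_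
  have hne : ∀ᵐ t : ℝ, t ≠ s := by
    simp [ae_iff]
  filter_upwards [hne] with t ht
  have hb := h₁ ε hε (t - s) (sub_ne_zero.2 ht) _ _ (hF.slice s) (hG.slice t)
  rw [hexp] at hb
  calc _ ≤ 1 * _ := mul_le_mul'
        (by rw [← ofReal_norm, ENNReal.ofReal_le_one]; exact hχ.le_one _) hb
    _ = _ := one_mul _

/-- Cutting off a space-time function with a time cutoff seen from time `t`. -/
noncomputable def cut {d : ℕ} (χ : ℝ → ℂ) (t : ℝ) (F : ℝ × Sp d → ℂ) (z : ℝ × Sp d) : ℂ :=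
  χ (t - z.1) * F z

lemma nice_cut {d : ℕ} {χ : ℝ → ℂ} (hχ : Cutoff χ) (t : ℝ) {F : ℝ × Sp d → ℂ} (hF : Nice F) :
    Nice (cut χ t F) := by
  obtain ⟨M, hM⟩ := hF.bdd
  obtain ⟨R, hR⟩ := hF.supp
  have h1 := hχ.meas
  have h2 := hF.meas
  refine ⟨by unfold cut; fun_prop, ⟨M, fun z => ?_⟩, ⟨R, fun z hz => ?_⟩⟩
  · unfold cut
    rw [norm_mul]
    exact (mul_le_of_le_one_left (norm_nonneg _) (hχ.le_one _)).trans (hM z)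
  · simp [cut, hR z hz]

/-- The `TT*` argument: the outgoing wave is controlled in `L²` at every time. -/
lemma tt_star_slice {d : ℕ} {p m : ℝ} {C : ℝ≥0∞} (hD : DiagBound d p m C) {ε : ℝ} (hε : 0 < ε)
    {F : ℝ × Sp d → ℂ} (hF : Nice F) (t : ℝ) {g : Sp d → ℂ} (hg : Nice g) :
    ‖∫ z : (ℝ × Sp d) × Sp d, kern ε (t - z.1.1) (z.2 - z.1.2) * (F z.1 * g z.2)‖ₑ ≤
      C ^ (1 / 2 : ℝ) * (mnorm p m F * lnorm 2 g) := by
  have h := gram_cauchy (μ := (volume : Measure (ℝ × Sp d))) (ν := (volume : Measure (Sp d)))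
    (σ := fun z => z.1) (σ' := fun _ => t) (η := fun z => z.2) (η' := fun x => x)
    measurable_fst measurable_snd
    measurable_const measurable_id hF.integrable hg.conj.integrable hε
  simp only [sub_self, RCLike.conj_conj] at h
  refine h.trans ?_
  have e1 : ∫ q : (ℝ × Sp d) × (ℝ × Sp d), kern ε (q.2.1 - q.1.1) (q.2.2 - q.1.2) *
      (F q.1 * (starRingEnd ℂ) (F q.2)) =
      form ε (fun _ => 1) F (fun z => (starRingEnd ℂ) (F z)) := by
    unfold form
    rw [← (measurePreserving_middleSwap (α := ℝ) (β := Sp d) (γ := ℝ)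
      (δ := Sp d)).integral_comp (middleSwap ℝ (Sp d) ℝ (Sp d)).measurableEmbedding]
    simp only [formFun, middleSwap_apply, one_mul]
  have h1 := hD ε hε _ cutoff_one _ _ hF hF.conj
  rw [mnorm_conj, ← e1] at h1
  have h2 := bform_zero_diag hε hg.conj hg
  rw [lnorm_conj] at h2
  have e : ∀ x : ℝ≥0∞, (x * x) ^ (1 / 2 : ℝ) = x := by
    intro x
    rw [ENNReal.mul_rpow_of_nonneg _ _ (by norm_num), half_mul_half]
  have := mul_le_mul' (ENNReal.rpow_le_rpow h1 (by norm_num : (0 : ℝ) ≤ 1 / 2))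
    (ENNReal.rpow_le_rpow h2 (by norm_num : (0 : ℝ) ≤ 1 / 2))
  rw [ENNReal.mul_rpow_of_nonneg _ _ (by norm_num), e, e, mul_assoc] at this
  exact this

/-- The form, with `tt_star_slice` applied at each target time `t` to `F` cut off by `χ(t - ·)`. -/
lemma form_le_tt_star {d : ℕ} {p m : ℝ} {C : ℝ≥0∞} (hD : DiagBound d p m C) {ε : ℝ} (hε : 0 < ε)
    {χ : ℝ → ℂ} (hχ : Cutoff χ) {F G : ℝ × Sp d → ℂ} (hF : Nice F) (hG : Nice G) :
    ‖form ε χ F G‖ₑ ≤ ∫⁻ t, C ^ (1 / 2 : ℝ) *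
      (mnorm p m (cut χ t F) * lnorm 2 (fun x => G (t, x))) := by
  have hi := integrable_formFun hε hχ hF hG
  have hmeas := measurable_formFun hε hχ hF hG
  have hperm : MeasurePreserving
      (fun w : ℝ × ((ℝ × Sp d) × Sp d) => ((w.2.1.1, w.1), (w.2.1.2, w.2.2))) volume volume := by
    have h1 := (MeasurePreserving.id (volume : Measure ℝ)).prod (measurePreserving_prodAssoc
      (volume : Measure ℝ) (volume : Measure (Sp d)) (volume : Measure (Sp d)))
    have h2 := (measurePreserving_prodAssoc (volume : Measure ℝ) (volume : Measure ℝ)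
      (volume : Measure (Sp d × Sp d))).symm
    have h3 := (Measure.measurePreserving_swap (μ := (volume : Measure ℝ))
      (ν := (volume : Measure ℝ))).prod (MeasurePreserving.id (volume : Measure (Sp d × Sp d)))
    exact h3.comp (h2.comp h1)
  have hi' : Integrable (fun w : ℝ × ((ℝ × Sp d) × Sp d) =>
      formFun ε χ F G ((w.2.1.1, w.1), (w.2.1.2, w.2.2))) :=
    hperm.integrable_comp_of_integrable hi
  have e : form ε χ F G = ∫ w : ℝ × ((ℝ × Sp d) × Sp d),
      formFun ε χ F G ((w.2.1.1, w.1), (w.2.1.2, w.2.2)) := by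
    unfold form
    rw [← hperm.map_eq, integral_map hperm.measurable.aemeasurable
      hmeas.aestronglyMeasurable]
  rw [e]
  rw [Measure.volume_eq_prod] at hi' ⊢
  rw [integral_prod _ hi']
  refine (enorm_integral_le_lintegral_enorm _).trans (lintegral_mono fun t => ?_)
  refine le_trans (le_of_eq ?_) (tt_star_slice hD hε (nice_cut hχ t hF) t (hG.slice t))
  congr 2
  ext z
  simp only [formFun, cut]
  ring

/-- Time reflection. -/
def reflect {d : ℕ} (F : ℝ × Sp d → ℂ) (z : ℝ × Sp d) : ℂ := F (-z.1, z.2)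

lemma nice_reflect {d : ℕ} {F : ℝ × Sp d → ℂ} (hF : Nice F) : Nice (reflect F) := by
  obtain ⟨M, hM⟩ := hF.bdd
  obtain ⟨R, hR⟩ := hF.supp
  have h2 := hF.meas
  refine ⟨by unfold reflect; fun_prop, ⟨M, fun z => hM _⟩, ⟨R, fun z hz => hR _ ?_⟩⟩
  simpa [Prod.norm_def] using hz

lemma mnorm_reflect {d : ℕ} (p m : ℝ) (F : ℝ × Sp d → ℂ) :
    mnorm p m (reflect F) = mnorm p m F := by
  unfold mnorm nrm reflect
  simp only
  rw [lintegral_neg_eq_self (fun t => lnorm m (fun x => F (t, x)) ^ p)]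

/-- Reflecting both arguments in time transposes the form. -/
lemma form_reflect {d : ℕ} (ε : ℝ) (χ : ℝ → ℂ) (F G : ℝ × Sp d → ℂ) :
    form ε χ (reflect G) (reflect F) = form ε χ F G := by
  have hmp : MeasurePreserving (((MeasurableEquiv.prodComm (α := ℝ) (β := ℝ)).trans
      ((MeasurableEquiv.neg ℝ).prodCongr (MeasurableEquiv.neg ℝ))).prodCongr
        (MeasurableEquiv.prodComm (α := Sp d) (β := Sp d))) volume volume := by
    have hn := Measure.measurePreserving_neg (volume : Measure ℝ)
    have h1 := (hn.prod hn).comp (Measure.measurePreserving_swap (μ := (volume : Measure ℝ))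
      (ν := (volume : Measure ℝ)))
    have h2 := (Measure.measurePreserving_swap (μ := (volume : Measure (Sp d)))
      (ν := (volume : Measure (Sp d))))
    exact h1.prod h2
  unfold form
  rw [← hmp.integral_comp (MeasurableEquiv.measurableEmbedding _)]
  congr 1; ext z
  change χ (-z.1.1 - -z.1.2) * (kern ε (-z.1.1 - -z.1.2) (z.2.1 - z.2.2) *
    (reflect G (-z.1.2, z.2.2) * reflect F (-z.1.1, z.2.1))) = χ (z.1.2 - z.1.1) *
    (kern ε (z.1.2 - z.1.1) (z.2.2 - z.2.1) * (F (z.1.1, z.2.1) * G (z.1.2, z.2.2)))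
  rw [← kern_neg]
  simp only [reflect, neg_neg, neg_sub_neg, neg_sub]
  ring

/-! ### The Keel–Tao endpoint -/

/-- Dyadic time shells `2^j ≤ |τ| < 2^{j+1}`. -/
def shell (j : ℤ) : Set ℝ := level (fun τ : ℝ => ENNReal.ofReal |τ|) 1 j

lemma measurableSet_shell (j : ℤ) : MeasurableSet (shell j) :=
  measurableSet_level (f := fun τ : ℝ => ENNReal.ofReal |τ|) (by fun_prop)
    (measurable_const (a := (1 : ℝ≥0∞))) j

lemma shell_ne_zero {j : ℤ} {τ : ℝ} (h : τ ∈ shell j) : τ ≠ 0 := by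
  rintro rfl
  have := h.1
  simp only [abs_zero, ENNReal.ofReal_zero, mul_one, nonpos_iff_eq_zero] at this
  exact two_rpow_ne_zero _ this

lemma ofReal_two_mul_rpow (j : ℤ) :
    ENNReal.ofReal (2 * (2 : ℝ) ^ ((j : ℝ) + 1)) = 4 * 2 ^ (j : ℝ) := by
  rw [ENNReal.ofReal_mul (by norm_num), ← two_rpow_eq_ofReal, two_rpow_add]
  simp only [ENNReal.rpow_one, ENNReal.ofReal_ofNat]
  ring

lemma shell_le_strip {χ : ℝ → ℂ} (hχ : Cutoff χ) (j : ℤ) (s t : ℝ) :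
    ‖(shell j).indicator χ (t - s)‖ₑ ≤ strip ((2 : ℝ) ^ ((j : ℝ) + 1)) s t := by
  by_cases h : t - s ∈ shell j
  · have h2 := h.2
    simp only [mul_one] at h2
    rw [two_rpow_eq_ofReal] at h2
    have h3 : |t - s| < (2 : ℝ) ^ ((j : ℝ) + 1) := by
      exact (ENNReal.ofReal_lt_ofReal_iff (by positivity)).1 h2
    rw [Set.indicator_of_mem h, strip, if_pos h3, ← ofReal_norm, ENNReal.ofReal_le_one]
    exact hχ.le_one _
  · rw [Set.indicator_of_notMem h]; simp

/-- The dispersive estimate on a time shell. -/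
lemma shell_one {d : ℕ} {ε : ℝ} (hε : 0 < ε) {χ : ℝ → ℂ} (hχ : Cutoff χ) (j : ℤ)
    {F G : ℝ × Sp d → ℂ} (hF : Nice F) (hG : Nice G) :
    ‖form ε ((shell j).indicator χ) F G‖ₑ ≤
      4 * 2 ^ ((j : ℝ) * (1 - d / 2)) * (mnorm 2 1 F * mnorm 2 1 G) := by
  refine (form_le_slices hε (hχ.indicator (measurableSet_shell j)) hF hG).trans ?_
  have key : ∀ s t, ‖(shell j).indicator χ (t - s)‖ₑ *
      ‖bform ε (t - s) (fun y => F (s, y)) (fun x => G (t, x))‖ₑ ≤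
      2 ^ ((j : ℝ) * (-(d : ℝ) / 2)) * (strip ((2 : ℝ) ^ ((j : ℝ) + 1)) s t *
        (lnorm 1 (fun y => F (s, y)) * lnorm 1 (fun x => G (t, x)))) := by
    intro s t
    by_cases h : t - s ∈ shell j
    · have h1 := bform_one hε (shell_ne_zero h) (hF.slice s) (hG.slice t)
      have h2 : ENNReal.ofReal |t - s| ^ (-(d : ℝ) / 2) ≤ 2 ^ ((j : ℝ) * (-(d : ℝ) / 2)) := by
        rw [ENNReal.rpow_mul]
        have h0 : (2 : ℝ≥0∞) ^ (j : ℝ) ≤ ENNReal.ofReal |t - s| := by simpa using h.1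
        rw [neg_div, ENNReal.rpow_neg, ENNReal.rpow_neg]
        exact ENNReal.inv_le_inv.2 (ENNReal.rpow_le_rpow h0 (by positivity))
      calc _ ≤ strip ((2 : ℝ) ^ ((j : ℝ) + 1)) s t * (2 ^ ((j : ℝ) * (-(d : ℝ) / 2)) *
            (lnorm 1 (fun y => F (s, y)) * lnorm 1 (fun x => G (t, x)))) :=
            mul_le_mul' (shell_le_strip hχ j s t) (h1.trans (mul_le_mul' h2 le_rfl))
        _ = _ := by ring
    · rw [Set.indicator_of_notMem h]; simp
  refine (lintegral_mono fun s => lintegral_mono fun t => key s t).trans ?_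
  have hne := two_rpow_ne_top ((j : ℝ) * (-(d : ℝ) / 2))
  simp_rw [lintegral_const_mul' _ _ hne]
  have h22 := strip_22 ((2 : ℝ) ^ ((j : ℝ) + 1)) (measurable_lnorm_slice hF.meas 1)
    (measurable_lnorm_slice hG.meas 1)
  refine (mul_le_mul_right h22 _).trans (le_of_eq ?_)
  rw [ofReal_two_mul_rpow, show (j : ℝ) * (1 - d / 2) = (j : ℝ) * (-(d : ℝ) / 2) + j by ring,
    two_rpow_add]
  unfold mnorm
  ring

lemma strip_rpow (L s t : ℝ) {p : ℝ} (hp : 0 < p) : strip L s t ^ p = strip L s t := by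
  unfold strip; split_ifs <;> simp [hp]

lemma nrm_strip_le (L t : ℝ) {p : ℝ} (hp : 0 < p) (hp2 : p < 2) {φ : ℝ → ℝ≥0∞}
    (hφ : Measurable φ) :
    nrm volume p (fun s => strip L s t * φ s) ≤
      nrm volume 2 (fun s => strip L s t * φ s) * ENNReal.ofReal (2 * L) ^ (1 / p - 1 / 2) := by
  have hr : 0 < 1 / p - 1 / 2 := by
    rw [sub_pos]; exact one_div_lt_one_div_of_lt hp hp2
  have h := ENNReal.lintegral_Lp_mul_le_Lq_mul_Lr (p := p) (q := 2) (r := 1 / (1 / p - 1 / 2)) hp hp2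
    (by rw [one_div_one_div]; ring) volume
    (f := fun s => strip L s t * φ s) (g := fun s => strip L s t)
    ((measurable_strip_right L t).mul hφ).aemeasurable (measurable_strip_right L t).aemeasurable
  simp only [strip_rpow L _ t (one_div_pos.2 hr), lintegral_strip', one_div_one_div] at h
  refine le_trans (le_of_eq ?_) h
  unfold nrm
  congr 2
  ext s
  simp only [Pi.mul_apply]
  congr 1
  rw [mul_right_comm]
  congr 1
  unfold strip; split_ifs <;> simp

/-- The mixed estimate on a time shell: `TT*` for the first factor, Hölder on the shell. -/
lemma shell_two {d : ℕ} {p a : ℝ} {C : ℝ≥0∞} (hp : 0 < p) (hp2 : p < 2) (ha : 0 < a)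
    (hC : C ≠ ∞) (hD : DiagBound d p a C) {ε : ℝ}
    (hε : 0 < ε) {χ : ℝ → ℂ} (hχ : Cutoff χ) (j : ℤ)
    {F G : ℝ × Sp d → ℂ} (hF : Nice F) (hG : Nice G) :
    ‖form ε ((shell j).indicator χ) F G‖ₑ ≤
      C ^ (1 / 2 : ℝ) * 4 ^ (1 / p) * 2 ^ ((j : ℝ) * (1 / p)) * (mnorm 2 a F * mnorm 2 2 G) := by
  set L := (2 : ℝ) ^ ((j : ℝ) + 1)
  have hχj := hχ.indicator (measurableSet_shell j)
  refine (form_le_tt_star hD hε hχj hF hG).trans ?_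
  set φ := fun s => lnorm a (fun y => F (s, y))
  set ψ := fun t => lnorm 2 (fun y => G (t, y))
  have mφ : Measurable φ := measurable_lnorm_slice hF.meas a
  have mψ : Measurable ψ := measurable_lnorm_slice hG.meas 2
  have hcut : ∀ t, mnorm p a (cut ((shell j).indicator χ) t F) ≤
      nrm volume p (fun s => strip L s t * φ s) := by
    intro t
    refine nrm_mono _ hp fun s => ?_
    have : lnorm a (fun x => cut ((shell j).indicator χ) t F (s, x)) =
        ‖(shell j).indicator χ (t - s)‖ₑ * φ s := by
      unfold lnorm cut
      simp only [enorm_mul]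
      rw [nrm_const_mul _ ha enorm_ne_top]
      rfl
    rw [this]
    exact mul_le_mul' (shell_le_strip hχ j s t) le_rfl
  have hC2 : C ^ (1 / 2 : ℝ) ≠ ∞ := ENNReal.rpow_ne_top_of_nonneg (by norm_num) hC
  set K := ENNReal.ofReal (2 * L) with hK
  have hKt : K ^ (1 / p - 1 / 2) ≠ ∞ := by
    refine ENNReal.rpow_ne_top_of_nonneg ?_ ENNReal.ofReal_ne_top
    rw [sub_nonneg]; exact one_div_le_one_div_of_le hp hp2.le
  have mN : Measurable (fun t => nrm volume 2 (fun s => strip L s t * φ s)) := by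
    unfold nrm
    have hm := measurable_strip L
    exact (Measurable.lintegral_prod_left' (f := fun z : ℝ × ℝ => (strip L z.1 z.2 * φ z.1) ^ (2:ℝ))
      (by fun_prop)).pow_const _
  have hcs := cauchy_schwarz volume mN.aemeasurable mψ.aemeasurable
  have hN2 : ∫⁻ t, nrm volume 2 (fun s => strip L s t * φ s) ^ (2 : ℝ) =
      K * nrm volume 2 φ ^ (2 : ℝ) := by
    rw [hK, ← nrm_two_strip' L mφ]
    refine lintegral_congr fun t => ?_
    rw [nrm_rpow _ (by norm_num)]
    refine lintegral_congr fun s => ?_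
    rw [ENNReal.mul_rpow_of_nonneg _ _ (by norm_num), strip_sq, strip_comm]
  rw [hN2] at hcs
  calc _ ≤ ∫⁻ t, (C ^ (1 / 2 : ℝ) * K ^ (1 / p - 1 / 2)) *
        (nrm volume 2 (fun s => strip L s t * φ s) * ψ t) := by
        refine lintegral_mono fun t => ?_
        calc _ ≤ C ^ (1 / 2 : ℝ) * ((nrm volume 2 (fun s => strip L s t * φ s) *
              K ^ (1 / p - 1 / 2)) * ψ t) :=
              mul_le_mul' le_rfl (mul_le_mul'
                ((hcut t).trans (nrm_strip_le L t hp hp2 mφ)) le_rfl)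
          _ = _ := by ring
    _ = (C ^ (1 / 2 : ℝ) * K ^ (1 / p - 1 / 2)) *
        ∫⁻ t, (nrm volume 2 (fun s => strip L s t * φ s) * ψ t) :=
        lintegral_const_mul' _ _ (ENNReal.mul_ne_top hC2 hKt)
    _ ≤ (C ^ (1 / 2 : ℝ) * K ^ (1 / p - 1 / 2)) * ((K * nrm volume 2 φ ^ (2 : ℝ)) ^ (1 / 2 : ℝ) *
          (∫⁻ t, ψ t ^ (2 : ℝ)) ^ (1 / 2 : ℝ)) := mul_le_mul_right hcs _
    _ = C ^ (1 / 2 : ℝ) * (K ^ (1 / p - 1 / 2) * K ^ (1 / 2 : ℝ)) *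
          (nrm volume 2 φ * nrm volume 2 ψ) := by
        rw [ENNReal.mul_rpow_of_nonneg _ _ (by norm_num), sq_rpow_half]
        unfold nrm
        ring
    _ = _ := by
        have hK0 : K ≠ 0 := by
          rw [hK, ofReal_two_mul_rpow]
          exact mul_ne_zero (by norm_num) (two_rpow_ne_zero _)
        rw [← ENNReal.rpow_add _ _ hK0 ENNReal.ofReal_ne_top, sub_add_cancel, hK,
          ofReal_two_mul_rpow, ENNReal.mul_rpow_of_nonneg _ _ (by positivity), ← ENNReal.rpow_mul]
        unfold mnorm
        simp only [φ, ψ]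
        ring

/-- The transpose of `shell_two`; time reflection exchanges the roles of `F` and `G`. -/
lemma shell_two' {d : ℕ} {p a : ℝ} {C : ℝ≥0∞} (hp : 0 < p) (hp2 : p < 2) (ha : 0 < a)
    (hC : C ≠ ∞) (hD : DiagBound d p a C) {ε : ℝ}
    (hε : 0 < ε) {χ : ℝ → ℂ} (hχ : Cutoff χ) (j : ℤ)
    {F G : ℝ × Sp d → ℂ} (hF : Nice F) (hG : Nice G) :
    ‖form ε ((shell j).indicator χ) F G‖ₑ ≤
      C ^ (1 / 2 : ℝ) * 4 ^ (1 / p) * 2 ^ ((j : ℝ) * (1 / p)) * (mnorm 2 2 F * mnorm 2 a G) := by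
  have h := shell_two hp hp2 ha hC hD hε hχ j (nice_reflect hG) (nice_reflect hF)
  rw [form_reflect, mnorm_reflect, mnorm_reflect, mul_comm (mnorm 2 a G)] at h
  exact h

/-- The space-time function whose time slices are the `m`-th dyadic pieces of the slices of `F`. -/
noncomputable def tpiece {d : ℕ} (p : ℝ) (F : ℝ × Sp d → ℂ) (m : ℤ) : ℝ × Sp d → ℂ :=
  {z | z ∈ level (fun z => ‖F z‖ₑ) (amp (lnorm p (fun x => F (z.1, x)))) m}.indicator F

lemma measurableSet_tlevel {d : ℕ} (p : ℝ) {F : ℝ × Sp d → ℂ} (hF : Measurable F) (m : ℤ) :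
    MeasurableSet {z | z ∈ level (fun z => ‖F z‖ₑ) (amp (lnorm p (fun x => F (z.1, x)))) m} :=
  measurableSet_level hF.enorm
    (measurable_amp.comp ((measurable_lnorm_slice hF p).comp measurable_fst)) m

lemma nice_tpiece {d : ℕ} (p : ℝ) {F : ℝ × Sp d → ℂ} (hF : Nice F) (m : ℤ) :
    Nice (tpiece p F m) := hF.indicator (measurableSet_tlevel p hF.meas m)

lemma tpiece_slice {d : ℕ} (p : ℝ) (F : ℝ × Sp d → ℂ) (m : ℤ) (t : ℝ) :
    (fun x => tpiece p F m (t, x)) = piece p (fun x => F (t, x)) m := rfl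

/-- The square-integrated coefficients of the dyadic pieces. -/
noncomputable def tcoef {d : ℕ} (p : ℝ) (F : ℝ × Sp d → ℂ) (m : ℤ) : ℝ≥0∞ :=
  nrm volume 2 (fun t => coef volume p (fun x => ‖F (t, x)‖ₑ) m)

lemma mnorm_tpiece_le {d : ℕ} {p a : ℝ} (hp : 0 < p) (ha : 1 ≤ a) (ha2 : a ≤ 2)
    {F : ℝ × Sp d → ℂ} (hF : Nice F) (m : ℤ) :
    mnorm 2 a (tpiece p F m) ≤ 2 * 2 ^ (m * (1 - p / a)) * tcoef p F m := by
  unfold mnorm tcoef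
  rw [← nrm_const_mul _ (by norm_num) (ENNReal.mul_ne_top (by norm_num) (two_rpow_ne_top _))]
  refine nrm_mono _ (by norm_num) fun t => ?_
  rw [tpiece_slice]
  exact lnorm_piece_le (hF.slice t).meas hp ((hF.slice t).lnorm_ne_top hp) ha ha2 m

lemma measurable_coef_slice {d : ℕ} (p : ℝ) {F : ℝ × Sp d → ℂ} (hF : Measurable F) (m : ℤ) :
    Measurable (fun t => coef volume p (fun x => ‖F (t, x)‖ₑ) m) := by
  have h1 : Measurable (fun t => amp (nrm volume p (fun x => ‖F (t, x)‖ₑ))) :=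
    measurable_amp.comp (measurable_lnorm_slice hF p)
  have h2 : Measurable (fun t => ∫⁻ x in level (fun x => ‖F (t, x)‖ₑ)
      (amp (nrm volume p (fun x => ‖F (t, x)‖ₑ))) m, ‖F (t, x)‖ₑ ^ p) := by
    have h3 := Measurable.lintegral_prod_right' (ν := (volume : Measure (Sp d)))
      ((hF.enorm.pow_const p).indicator (measurableSet_tlevel p hF m))
    convert h3 using 2 with t
    have hl : MeasurableSet (level (fun x => ‖F (t, x)‖ₑ)
        (amp (nrm volume p fun x => ‖F (t, x)‖ₑ)) m) :=
      measurableSet_level (hF.comp measurable_prodMk_left).enorm measurable_const m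
    rw [← lintegral_indicator hl]
    rfl
  unfold coef
  exact h1.mul (((h1.pow_const _).mul h2).pow_const _)

/-- The coefficients `tcoef` are square-summable with sum controlled by the `L²_t L^p_x` norm. -/
lemma tcoef_sq_sum {d : ℕ} {p : ℝ} (hp : 0 < p) {F : ℝ × Sp d → ℂ} (hF : Nice F) :
    (∑' m, tcoef p F m ^ (2 : ℝ)) ^ (1 / 2 : ℝ) ≤ mnorm 2 p F := by
  unfold tcoef
  simp_rw [nrm_rpow _ (zero_lt_two' ℝ)]
  rw [← lintegral_tsum (fun m => ((measurable_coef_slice p hF.meas m).pow_const _).aemeasurable)]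
  unfold mnorm nrm
  refine ENNReal.rpow_le_rpow (lintegral_mono fun t => ?_) (by norm_num)
  exact coef_sq_sum volume (hF.slice t).meas.enorm hp ((hF.slice t).lnorm_ne_top hp)

/-- Three competing exponents: whichever of the three bounds is best decays in both variables. -/
lemma choose_three {σ β γ : ℝ} (hσ : 0 < σ) (hβ : 0 < β) (hγ : β < γ) :
    ∃ e : ℝ, 0 < e ∧ ∀ X Y : ℝ, -σ * (X + Y) ≤ -(e * (|X| + |Y|)) ∨
      β * X + γ * Y ≤ -(e * (|X| + |Y|)) ∨ γ * X + β * Y ≤ -(e * (|X| + |Y|)) := by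
  set b := (β + γ) / 2 with hb
  set c := (γ - β) / 2 with hc
  have hb0 : 0 < b := by linarith
  have hc0 : 0 < c := by linarith
  set k := min b c
  have hk0 : 0 < k := lt_min hb0 hc0
  have hkb : k ≤ b := min_le_left _ _
  have hkc : k ≤ c := min_le_right _ _
  have hβ' : β = b - c := by rw [hb, hc]; ring
  have hγ' : γ = b + c := by rw [hb, hc]; ring
  set e := σ * k / (σ + 2 * b) with he
  have hs : 0 < σ + 2 * b := by linarith
  have he0 : 0 < e := by positivity
  have hee : (σ + 2 * b) * e = σ * k := by rw [he]; field_simp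
  have hek : e ≤ k := by nlinarith
  refine ⟨e, he0, fun X Y => ?_⟩
  by_contra! hcon
  obtain ⟨h1, h2, h3⟩ := hcon
  rw [hβ', hγ'] at h2 h3
  have hD : -(e * (|X| + |Y|)) < b * (X + Y) - c * |X - Y| := by
    rcases abs_cases (X - Y) with ⟨h, -⟩ | ⟨h, -⟩ <;> rw [h] <;> linarith
  have hT : |X| + |Y| ≤ |X + Y| + |X - Y| := by
    rcases abs_cases X with ⟨h, _⟩ | ⟨h, _⟩ <;> rcases abs_cases Y with ⟨h', _⟩ | ⟨h', _⟩ <;>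
    rcases abs_cases (X + Y) with ⟨h'', _⟩ | ⟨h'', _⟩ <;>
    rcases abs_cases (X - Y) with ⟨h''', _⟩ | ⟨h''', _⟩ <;> linarith
  set T := |X| + |Y|
  have hT0 : 0 ≤ T := by positivity
  set D := |X - Y|
  have hD0 : 0 ≤ D := abs_nonneg _
  rcases le_total 0 (X + Y) with hS | hS
  · rw [abs_of_nonneg hS] at hT
    set S := X + Y
    have i1 : k * T ≤ b * S + c * D := by
      calc k * T ≤ k * (S + D) := by gcongr
        _ ≤ b * S + c * D := by nlinarith
    have i2 : 2 * b * (-(e * T)) + σ * (-(e * T)) < 2 * b * (-σ * S) + σ * (b * S - c * D) := by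
      have := mul_lt_mul_of_pos_left h1 (by linarith : 0 < 2 * b)
      have := mul_lt_mul_of_pos_left hD hσ
      linarith
    have i3 : 2 * b * (-(e * T)) + σ * (-(e * T)) = -(σ * (k * T)) := by
      linear_combination -T * hee
    have i4 := mul_le_mul_of_nonneg_left i1 hσ.le
    nlinarith
  · rw [abs_of_nonpos hS] at hT
    set S := X + Y
    have i1 : e * T ≤ k * T := by gcongr
    have i2 : k * T ≤ k * (-S + D) := by gcongr
    nlinarith

lemma ae_ne_zero_sub {d : ℕ} : ∀ᵐ z : (ℝ × ℝ) × (Sp d × Sp d), z.1.2 - z.1.1 ≠ 0 := by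
  have h : ∀ᵐ p : ℝ × ℝ, p.2 - p.1 ≠ 0 := by
    rw [ae_iff, Measure.volume_eq_prod, Measure.measure_prod_null]
    · refine Filter.Eventually.of_forall fun s => ?_
      have : Prod.mk s ⁻¹' {a : ℝ × ℝ | ¬a.2 - a.1 ≠ 0} = {s} := by
        ext t; simp [sub_eq_zero]
      change volume (Prod.mk s ⁻¹' {a : ℝ × ℝ | ¬a.2 - a.1 ≠ 0}) = 0
      rw [this]; simp
    · have : Measurable (fun p : ℝ × ℝ => p.2 - p.1) := by fun_prop
      convert this (measurableSet_singleton 0) using 1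
      ext p; simp
  exact Measure.quasiMeasurePreserving_fst.ae h

/-- The endpoint diagonal estimate in dimension at least three, by decomposing dyadically both in
time and in the amplitudes of the two functions. -/
theorem diag_endpoint {d : ℕ} (hd : 3 ≤ d) {p : ℝ} (hp : p = 2 * d / (d + 2)) :
    ∃ C ≠ ∞, DiagBound d 2 p C := by
  have hd' : (3 : ℝ) ≤ d := by exact_mod_cast hd
  have hp1 : 1 < p := by rw [hp, lt_div_iff₀ (by linarith)]; linarith
  have hp2 : p < 2 := by rw [hp, div_lt_iff₀ (by linarith)]; linarith
  have hp0 : 0 < p := by linarith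
  -- any space exponent strictly between the endpoint `p` and `2` would do
  set a := (p + 2) / 2 with ha
  have hpa : p < a := by linarith
  have ha2 : a < 2 := by linarith
  have ha0 : 0 < a := by linarith
  have hinvp : 1 / p = 1 / 2 + 1 / d := by rw [hp]; field_simp
  have hinva : 1 / a < 1 / p := one_div_lt_one_div_of_lt hp0 hpa
  have hinva2 : 1 / 2 < 1 / a := one_div_lt_one_div_of_lt ha0 ha2
  -- the time exponent matching the non-endpoint space exponent `a`
  set θ := 1 - (d : ℝ) / 2 * (1 / a - 1 / 2) with hθ
  have hθ1 : θ < 1 := by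
    have : 0 < (d : ℝ) / 2 * (1 / a - 1 / 2) := mul_pos (by linarith) (by linarith)
    linarith
  have hθ2 : 1 / 2 < θ := by
    have : (d : ℝ) / 2 * (1 / a - 1 / 2) < (d : ℝ) / 2 * (1 / d) := by
      apply mul_lt_mul_of_pos_left _ (by linarith); linarith
    have h2 : (d : ℝ) / 2 * (1 / d) = 1 / 2 := by field_simp
    linarith
  have hθi : 1 / (1 / θ) = θ := one_div_one_div θ
  have hP1 : 1 < 1 / θ := by rw [lt_div_iff₀ (by linarith)]; linarith
  have hP2 : 1 / θ < 2 := by rw [div_lt_iff₀ (by linarith)]; linarith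
  obtain ⟨C₀, hC₀, hD⟩ := diag_nonendpoint (d := d) hP1 hP2 (m := a) (by linarith) ha2.le
    (by rw [hθi, hθ]; ring)
  obtain ⟨e, he0, he⟩ := choose_three (σ := p - 1) (β := 1 - p / a) (γ := 1 - p / 2)
    (by linarith) (by rw [sub_pos, div_lt_one ha0]; exact hpa)
    (by have := div_lt_div_of_pos_left hp0 ha0 ha2; linarith)
  -- the slope of time scale against amplitude for which the exponents of all three bounds below
  -- depend only on `m + κ j` and `n + κ j`
  set κ := ((d : ℝ) + 2) / 4 with hκ
  have hpκ : p * κ = d / 2 := by rw [hp, hκ]; field_simp; norm_num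
  obtain ⟨C₁, hC₁, hsum⟩ := triple_sum he0 (κ := κ) (by positivity)
  set K : ℝ≥0∞ := max 4 (C₀ ^ (1 / 2 : ℝ) * 4 ^ θ) with hK
  have hKt : K ≠ ∞ := by
    have h1 : C₀ ^ (1 / 2 : ℝ) ≠ ∞ := ENNReal.rpow_ne_top_of_nonneg (by norm_num) hC₀
    have h2 : (4 : ℝ≥0∞) ^ θ ≠ ∞ := ENNReal.rpow_ne_top_of_nonneg (by linarith) (by norm_num)
    exact (max_lt (by simp) (ENNReal.mul_lt_top h1.lt_top h2.lt_top)).ne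
  refine ⟨4 * K * C₁, by finiteness, ?_⟩
  intro ε hε χ hχ F G hF hG
  have key : ∀ j m n : ℤ, ‖form ε ((shell j).indicator χ) (tpiece p F m) (tpiece p G n)‖ₑ ≤
      4 * K * (2 ^ (-(e * (|m + κ * j| + |n + κ * j|))) * (tcoef p F m * tcoef p G n)) := by
    intro j m n
    have gen : ∀ (w x y : ℝ) (B : ℝ≥0∞), B ≤ K → 1 ≤ x → x ≤ 2 → 1 ≤ y → y ≤ 2 →
        w + m * (1 - p / x) + n * (1 - p / y) ≤ -(e * (|m + κ * j| + |n + κ * j|)) →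
        ‖form ε ((shell j).indicator χ) (tpiece p F m) (tpiece p G n)‖ₑ ≤
          B * 2 ^ w * (mnorm 2 x (tpiece p F m) * mnorm 2 y (tpiece p G n)) →
        ‖form ε ((shell j).indicator χ) (tpiece p F m) (tpiece p G n)‖ₑ ≤
          4 * K * (2 ^ (-(e * (|m + κ * j| + |n + κ * j|))) * (tcoef p F m * tcoef p G n)) := by
      intro w x y B hB hx hx2 hy hy2 hle h
      calc _ ≤ _ := h
        _ ≤ K * 2 ^ w * ((2 * 2 ^ (m * (1 - p / x)) * tcoef p F m) *
            (2 * 2 ^ (n * (1 - p / y)) * tcoef p G n)) := by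
            exact mul_le_mul' (mul_le_mul' hB le_rfl) (mul_le_mul'
              (mnorm_tpiece_le hp0 hx hx2 hF m) (mnorm_tpiece_le hp0 hy hy2 hG n))
        _ = 4 * K * (2 ^ (w + m * (1 - p / x) + n * (1 - p / y)) *
            (tcoef p F m * tcoef p G n)) := by rw [two_rpow_add, two_rpow_add]; ring
        _ ≤ _ := by
            exact mul_le_mul' le_rfl (mul_le_mul' (two_rpow_mono hle) le_rfl)
    have nF := nice_tpiece p hF m
    have nG := nice_tpiece p hG n
    have hpa' : p / a * κ = (d : ℝ) / 2 * (1 / a) := by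
      rw [div_mul_eq_mul_div, hpκ]; ring
    -- the dispersive bound, the mixed bound, or its transpose, whichever decays
    rcases he (m + κ * j) (n + κ * j) with h | h | h
    · refine gen ((j : ℝ) * (1 - d / 2)) 1 1 4 (le_max_left _ _) le_rfl (by norm_num) le_rfl
        (by norm_num) (le_trans (le_of_eq ?_) h) (shell_one hε hχ j nF nG)
      rw [div_one]
      have h4 : 2 * κ = (d : ℝ) / 2 + 1 := by rw [hκ]; ring
      linear_combination (2 * (j : ℝ)) * hpκ - (j : ℝ) * h4
    · refine gen ((j : ℝ) * θ) a 2 _ (le_max_right _ _) (by linarith) ha2.le (by norm_num)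
        le_rfl (le_trans (le_of_eq ?_) h) ?_
      · have h4 : 2 * κ = (d : ℝ) / 2 + 1 := by rw [hκ]; ring
        rw [hθ]
        linear_combination (-(j : ℝ)) * h4 + (j : ℝ) * hpa' + (j : ℝ) / 2 * hpκ
      · have := shell_two (by linarith) hP2 ha0 hC₀ hD hε hχ j nF nG
        rwa [hθi] at this
    · refine gen ((j : ℝ) * θ) 2 a _ (le_max_right _ _) (by norm_num) le_rfl (by linarith) ha2.le
        (le_trans (le_of_eq ?_) h) ?_
      · have h4 : 2 * κ = (d : ℝ) / 2 + 1 := by rw [hκ]; ring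
        rw [hθ]
        linear_combination (-(j : ℝ)) * h4 + (j : ℝ) * hpa' + (j : ℝ) / 2 * hpκ
      · have := shell_two' (by linarith) hP2 ha0 hC₀ hD hε hχ j nF nG
        rwa [hθi] at this
  -- the diagonal `s = t` is null, so the cutoff may be assumed to vanish at the origin
  have hχ0 : Cutoff (({0} : Set ℝ)ᶜ.indicator χ) :=
    hχ.indicator (measurableSet_singleton 0).compl
  have hform : form ε χ F G = form ε (({0} : Set ℝ)ᶜ.indicator χ) F G := by
    unfold form
    refine integral_congr_ae ?_
    filter_upwards [ae_ne_zero_sub (d := d)] with z hz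
    unfold formFun
    rw [Set.indicator_of_mem (by simpa using hz)]
  have hdec := enorm_integral_le_tsum (integrable_formFun hε hχ0 hF hG)
    (E := fun i : ℤ × ℤ × ℤ => {z | z.1.2 - z.1.1 ∈ shell i.1 ∧
      (z.1.1, z.2.1) ∈ {z | z ∈ level (fun z => ‖F z‖ₑ) (amp (lnorm p (fun x => F (z.1, x)))) i.2.1} ∧
      (z.1.2, z.2.2) ∈ {z | z ∈ level (fun z => ‖G z‖ₑ) (amp (lnorm p (fun x => G (z.1, x)))) i.2.2}})
    (by
      intro i
      refine MeasurableSet.inter ?_ (MeasurableSet.inter ?_ ?_)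
      · have h : Measurable (fun z : (ℝ × ℝ) × (Sp d × Sp d) => z.1.2 - z.1.1) := by fun_prop
        exact h (measurableSet_shell i.1)
      · have h : Measurable (fun z : (ℝ × ℝ) × (Sp d × Sp d) => (z.1.1, z.2.1)) := by fun_prop
        exact h (measurableSet_tlevel p hF.meas i.2.1)
      · have h : Measurable (fun z : (ℝ × ℝ) × (Sp d × Sp d) => (z.1.2, z.2.2)) := by fun_prop
        exact h (measurableSet_tlevel p hG.meas i.2.2))
    (by
      intro i k hik
      rw [Set.disjoint_left]
      rintro z ⟨h1, h2, h3⟩ ⟨h1', h2', h3'⟩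
      refine hik (Prod.ext ?_ (Prod.ext ?_ ?_))
      · by_contra hne
        exact Set.disjoint_left.1 (level_disjoint _ _ hne) h1 h1'
      · by_contra hne
        exact Set.disjoint_left.1 (level_disjoint _ _ hne) h2 h2'
      · by_contra hne
        exact Set.disjoint_left.1 (level_disjoint _ _ hne) h3 h3')
    (by
      intro z hz
      have h0 : z.1.2 - z.1.1 ≠ 0 := by intro h; simp [formFun, h] at hz
      have h1 : F (z.1.1, z.2.1) ≠ 0 := by intro h; simp [formFun, h] at hz
      have h2 : G (z.1.2, z.2.2) ≠ 0 := by intro h; simp [formFun, h] at hz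
      obtain ⟨j, hj⟩ := exists_mem_level (f := fun τ : ℝ => ENNReal.ofReal |τ|) one_ne_zero
        ENNReal.one_ne_top (x := z.1.2 - z.1.1) (by simpa using h0) (by simp)
      obtain ⟨m, hm⟩ := exists_mem_level (f := fun z => ‖F z‖ₑ) (amp_ne_zero _)
        (amp_ne_top ((hF.slice z.1.1).lnorm_ne_top hp0)) (x := (z.1.1, z.2.1))
        (by simpa using h1) (by simp)
      obtain ⟨n, hn⟩ := exists_mem_level (f := fun z => ‖G z‖ₑ) (amp_ne_zero _)
        (amp_ne_top ((hG.slice z.1.2).lnorm_ne_top hp0)) (x := (z.1.2, z.2.2))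
        (by simpa using h2) (by simp)
      exact ⟨(j, m, n), hj, hm, hn⟩)
  have hpiece : ∀ i : ℤ × ℤ × ℤ, ∫ z, {z : (ℝ × ℝ) × (Sp d × Sp d) | z.1.2 - z.1.1 ∈ shell i.1 ∧
      (z.1.1, z.2.1) ∈ {z | z ∈ level (fun z => ‖F z‖ₑ) (amp (lnorm p (fun x => F (z.1, x)))) i.2.1} ∧
      (z.1.2, z.2.2) ∈ {z | z ∈ level (fun z => ‖G z‖ₑ) (amp (lnorm p (fun x => G (z.1, x))))
        i.2.2}}.indicator (formFun ε (({0} : Set ℝ)ᶜ.indicator χ) F G) z =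
      form ε ((shell i.1).indicator χ) (tpiece p F i.2.1) (tpiece p G i.2.2) := by
    intro i
    unfold form
    congr 1; ext z
    by_cases h1 : z.1.2 - z.1.1 ∈ shell i.1
    · by_cases h2 : (z.1.1, z.2.1) ∈
          {z | z ∈ level (fun z => ‖F z‖ₑ) (amp (lnorm p (fun x => F (z.1, x)))) i.2.1}
      · by_cases h3 : (z.1.2, z.2.2) ∈
            {z | z ∈ level (fun z => ‖G z‖ₑ) (amp (lnorm p (fun x => G (z.1, x)))) i.2.2}
        · rw [Set.indicator_of_mem (by exact ⟨h1, h2, h3⟩)]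
          unfold formFun tpiece
          rw [Set.indicator_of_mem (by simpa using shell_ne_zero h1), Set.indicator_of_mem h1,
            Set.indicator_of_mem h2, Set.indicator_of_mem h3]
        · rw [Set.indicator_of_notMem (fun h => h3 h.2.2)]
          unfold formFun tpiece
          rw [Set.indicator_of_notMem h3]
          simp
      · rw [Set.indicator_of_notMem (fun h => h2 h.2.1)]
        unfold formFun tpiece
        rw [Set.indicator_of_notMem h2]
        simp
    · rw [Set.indicator_of_notMem (fun h => h1 h.1)]
      unfold formFun
      rw [Set.indicator_of_notMem h1]
      simp
  simp_rw [hpiece] at hdec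
  rw [hform]
  refine (show _ ≤ _ from hdec).trans ?_
  rw [ENNReal.tsum_prod (f := fun j (k : ℤ × ℤ) => ‖form ε ((shell j).indicator χ) (tpiece p F k.1)
    (tpiece p G k.2)‖ₑ)]
  have hj : ∀ j, ∑' k : ℤ × ℤ, ‖form ε ((shell j).indicator χ) (tpiece p F k.1)
      (tpiece p G k.2)‖ₑ = ∑' m, ∑' n, ‖form ε ((shell j).indicator χ) (tpiece p F m)
      (tpiece p G n)‖ₑ := fun j => ENNReal.tsum_prod (f := fun m n =>
        ‖form ε ((shell j).indicator χ) (tpiece p F m) (tpiece p G n)‖ₑ)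
  simp_rw [hj]
  refine (ENNReal.tsum_le_tsum fun j => ENNReal.tsum_le_tsum fun m =>
    ENNReal.tsum_le_tsum fun n => key j m n).trans ?_
  simp_rw [ENNReal.tsum_mul_left]
  have hs := hsum (tcoef p F) (tcoef p G)
  rw [mul_assoc (4 * K) C₁]
  refine mul_le_mul' le_rfl (hs.trans ?_)
  exact mul_le_mul' le_rfl (mul_le_mul' (tcoef_sq_sum hp0 hF) (tcoef_sq_sum hp0 hG))

/-! ### All diagonal estimates; the Duhamel operator -/

/-- All diagonal estimates. Here `p`, `m` are the conjugates of an admissible pair. -/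
lemma diag_all {d : ℕ} (hd : 1 ≤ d) {p m : ℝ} (hp1 : 1 ≤ p) (hp2 : p ≤ 2) (hm1 : 1 ≤ m)
    (hm2 : m ≤ 2) (hadm : 1 - 1 / p = (d : ℝ) / 2 * (1 / m - 1 / 2)) (hex : ¬(d = 2 ∧ p = 2)) :
    ∃ C ≠ ∞, DiagBound d p m C := by
  have hd0 : (0 : ℝ) < d := by exact_mod_cast hd
  have hm0 : 0 < m := by linarith
  rcases hp1.eq_or_lt with rfl | hp1
  · have h : 1 / m - 1 / 2 = 0 := by
      have : (d : ℝ) / 2 * (1 / m - 1 / 2) = 0 := by rw [← hadm]; norm_num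
      rcases mul_eq_zero.1 this with h | h
      · linarith
      · exact h
    have : m = 2 := by field_simp at h; linarith
    subst this
    exact ⟨1, by simp, diag_one_two d⟩
  rcases hp2.lt_or_eq with hp2 | rfl
  · exact diag_nonendpoint hp1 hp2 hm1 hm2 hadm
  · have hinv : 1 / m = 1 / 2 + 1 / d := by
      field_simp at hadm ⊢
      linarith
    have hle : 1 / m ≤ 1 := by rw [div_le_one hm0]; exact hm1
    have h2 : (2 : ℝ) ≤ d := by
      rw [hinv] at hle
      have : 1 / (d : ℝ) ≤ 1 / 2 := by linarith
      exact (one_div_le_one_div hd0 (by norm_num)).1 this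
    have h2' : 2 ≤ d := by exact_mod_cast h2
    have h3 : 3 ≤ d := by
      rcases h2'.eq_or_lt with h | h
      · exact absurd ⟨h.symm, rfl⟩ hex
      · exact h
    refine diag_endpoint h3 ?_
    field_simp at hinv ⊢
    linarith

/-- The regularised Duhamel operator with time cutoff `χ`. -/
noncomputable def duh {d : ℕ} (ε : ℝ) (χ : ℝ → ℂ) (F : ℝ × Sp d → ℂ) (w : ℝ × Sp d) : ℂ :=
  ∫ z : ℝ × Sp d, χ (w.1 - z.1) * (kern ε (w.1 - z.1) (w.2 - z.2) * F z)

lemma measurable_duhFun {d : ℕ} {ε : ℝ} (hε : 0 < ε) {χ : ℝ → ℂ} (hχ : Cutoff χ)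
    {F : ℝ × Sp d → ℂ} (hF : Nice F) :
    Measurable (fun p : (ℝ × Sp d) × (ℝ × Sp d) =>
      χ (p.1.1 - p.2.1) * (kern ε (p.1.1 - p.2.1) (p.1.2 - p.2.2) * F p.2)) := by
  have h1 := hχ.meas
  have h2 := hF.meas
  have h4 := (measurable_kern (d := d) hε).comp
    (f := fun p : (ℝ × Sp d) × (ℝ × Sp d) => (p.1.1 - p.2.1, p.1.2 - p.2.2)) (by fun_prop)
  exact Measurable.mul (by fun_prop) (Measurable.mul h4 (by fun_prop))

lemma measurable_duh {d : ℕ} {ε : ℝ} (hε : 0 < ε) {χ : ℝ → ℂ} (hχ : Cutoff χ)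
    {F : ℝ × Sp d → ℂ} (hF : Nice F) : Measurable (duh ε χ F) :=
  ((measurable_duhFun hε hχ hF).stronglyMeasurable.integral_prod_right').measurable

lemma bounded_duh {d : ℕ} {ε : ℝ} (hε : 0 < ε) {χ : ℝ → ℂ} (hχ : Cutoff χ)
    {F : ℝ × Sp d → ℂ} (hF : Nice F) : ∃ M : ℝ, ∀ w, ‖duh ε χ F w‖ ≤ M := by
  refine ⟨∫ z, (4 * Real.pi * ε) ^ (-(d : ℝ) / 2) * ‖F z‖, fun w => ?_⟩
  refine norm_integral_le_of_norm_le (hF.integrable.norm.const_mul _)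
    (Filter.Eventually.of_forall fun z => ?_)
  rw [norm_mul, norm_mul]
  calc _ ≤ 1 * ((4 * Real.pi * ε) ^ (-(d : ℝ) / 2) * ‖F z‖) := by
        gcongr
        · exact hχ.le_one _
        · exact norm_kern_le' hε _ _
    _ = _ := one_mul _

/-- Pairing the Duhamel operator with `G` gives back the form. -/
lemma integral_duh_mul {d : ℕ} {ε : ℝ} (hε : 0 < ε) {χ : ℝ → ℂ} (hχ : Cutoff χ)
    {F G : ℝ × Sp d → ℂ} (hF : Nice F) (hG : Nice G) :
    ∫ w, duh ε χ F w * G w = form ε χ F G := by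
  have mp := measurePreserving_middleSwap (α := ℝ) (β := ℝ) (γ := Sp d) (δ := Sp d)
  have hi := integrable_formFun hε hχ hF hG
  have hsymm : form ε χ F G = ∫ z : (ℝ × Sp d) × (ℝ × Sp d),
      formFun ε χ F G ((middleSwap ℝ ℝ (Sp d) (Sp d)).symm z) := by
    rw [mp.symm.integral_comp' (g := formFun ε χ F G)]
    rfl
  have hi2 : Integrable (fun z : (ℝ × Sp d) × (ℝ × Sp d) =>
      formFun ε χ F G ((middleSwap ℝ ℝ (Sp d) (Sp d)).symm z)) :=
    mp.symm.integrable_comp_of_integrable hi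
  rw [hsymm]
  rw [Measure.volume_eq_prod] at hi2
  refine Eq.trans ?_ (integral_prod_symm _ hi2).symm
  refine integral_congr_ae (Filter.Eventually.of_forall fun w => ?_)
  simp only [duh]
  rw [← integral_mul_const]
  refine integral_congr_ae (Filter.Eventually.of_forall fun z => ?_)
  change _ = formFun ε χ F G ((z.1, w.1), (z.2, w.2))
  simp only [formFun]
  ring

/-! ### Duality in mixed norms -/

lemma measurable_lnorm_slice_real {d : ℕ} {F : ℝ × Sp d → ℂ} (hF : Measurable F) (m : ℝ) :
    Measurable (fun z : ℝ × Sp d => (lnorm m (fun x => F (z.1, x))).toReal) :=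
  (measurable_lnorm_slice hF m).ennreal_toReal.comp measurable_fst

/-- Duality tested against the extremal function `G = conj v · |v|^(r-2) · n^(q-r)`, where `n(t)` is
the `L^r` norm of the slice of `v` at time `t`. The lower bound on the nonzero slices keeps `G`
bounded when `q < r`. -/
lemma dual_core {d : ℕ} {q r q' r' : ℝ} (hr2 : 2 ≤ r) (hq : q.HolderConjugate q')
    (hr : r.HolderConjugate r') {v : ℝ × Sp d → ℂ} (hv : Nice v) {c : ℝ} (hc : 0 < c)
    (hlow : ∀ t, lnorm r (fun x => v (t, x)) = 0 ∨
      ENNReal.ofReal c ≤ lnorm r (fun x => v (t, x))) {M : ℝ≥0∞}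
    (h : ∀ G, Nice G → ‖∫ w, v w * G w‖ₑ ≤ M * mnorm q' r' G) : mnorm q r v ≤ M := by
  have hr0 : 0 < r := by linarith
  have hq0 : 0 < q := hq.pos
  have hr'0 : 0 < r' := hr.symm.pos
  have hq'0 : 0 < q' := hq.symm.pos
  set n : ℝ → ℝ≥0∞ := fun t => lnorm r (fun x => v (t, x)) with hn
  have hnfin : ∀ t, n t ≠ ∞ := fun t => (hv.slice t).lnorm_ne_top hr0
  set G : ℝ × Sp d → ℂ := fun z => (starRingEnd ℂ) (v z) *
    ((‖v z‖ ^ (r - 2) * (n z.1).toReal ^ (q - r) : ℝ) : ℂ) with hG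
  have hGn : Nice G := by
    obtain ⟨K, hK⟩ := hv.bdd
    obtain ⟨R, hR⟩ := hv.supp
    obtain ⟨R', B, hB, hle⟩ := hv.lnorm_slice_le hr0
    have hnB : ∀ t, n t ≤ B := fun t => (hle t).trans (Set.indicator_le_self' (by simp) _)
    have hK0 : 0 ≤ K := (norm_nonneg _).trans (hK 0)
    refine ⟨?_, ⟨K * (K ^ (r - 2) * (1 + B.toReal ^ (q - r) + c ^ (q - r))), fun z => ?_⟩,
      ⟨R, fun z hz => ?_⟩⟩
    · have h1 := hv.meas
      have h2 := measurable_lnorm_slice_real hv.meas r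
      refine (continuous_conj.measurable.comp h1).mul (measurable_ofReal.comp ?_)
      exact (h1.norm.pow_const _).mul (h2.pow_const _)
    · rw [hG]
      simp only [norm_mul, RCLike.norm_conj, Complex.norm_real, Real.norm_eq_abs]
      rw [abs_of_nonneg (by positivity), abs_of_nonneg (by positivity)]
      have hcp : 0 ≤ c ^ (q - r) := by positivity
      have hBp : 0 ≤ B.toReal ^ (q - r) := by positivity
      refine mul_le_mul (hK z) (mul_le_mul ?_ ?_ (by positivity) (by positivity))
        (by positivity) hK0
      · exact Real.rpow_le_rpow (norm_nonneg _) (hK z) (by linarith)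
      · rcases hlow z.1 with h0 | h0
        · have : n z.1 = 0 := h0
          rw [this, ENNReal.toReal_zero]
          have := Real.zero_rpow_le_one (q - r)
          linarith
        · have h1 : c ≤ (n z.1).toReal := (ENNReal.ofReal_le_iff_le_toReal (hnfin _)).1 h0
          have h2 : (n z.1).toReal ≤ B.toReal := ENNReal.toReal_mono hB (hnB _)
          rcases le_total 0 (q - r) with h3 | h3
          · have := Real.rpow_le_rpow (hc.le.trans h1) h2 h3
            linarith
          · have := Real.rpow_le_rpow_of_nonpos hc h1 h3
            linarith
    · simp [hG, hR z hz]
  set W : ℝ → ℝ≥0∞ := fun t => ENNReal.ofReal ((n t).toReal ^ (q - r)) with hW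
  have hWfin : ∀ t, W t ≠ ∞ := fun t => ENNReal.ofReal_ne_top
  -- away from the zeros of `n`, the weight is the extended power of `n`
  have hWn : ∀ t, n t ≠ 0 → W t = n t ^ (q - r) := by
    intro t ht
    have : 0 < (n t).toReal := ENNReal.toReal_pos ht (hnfin t)
    rw [hW]
    simp only
    rw [← ENNReal.ofReal_rpow_of_pos this, ENNReal.ofReal_toReal (hnfin t)]
  have hpow : ∀ t, n t ^ r = ∫⁻ x, ‖v (t, x)‖ₑ ^ r := fun t => nrm_rpow volume hr0 _
  have hmulr : ∀ t, W t * n t ^ r = n t ^ q := by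
    intro t
    by_cases ht : n t = 0
    · simp [ht, hr0, hq0]
    · rw [hWn t ht, ← ENNReal.rpow_add _ _ ht (hnfin t)]; simp
  have hmulr' : ∀ t, W t * n t ^ (r / r') = n t ^ (q - 1) := by
    intro t
    have hrr : r / r' = r - 1 := by
      have := hr.inv_add_inv_eq_one
      field_simp at this ⊢
      linarith
    by_cases ht : n t = 0
    · simp [ht, hrr, hr.sub_one_pos, hq.sub_one_pos]
    · rw [hWn t ht, ← ENNReal.rpow_add _ _ ht (hnfin t), hrr]; congr 1; ring
  have hGe : ∀ t x, ‖G (t, x)‖ₑ = W t * ‖v (t, x)‖ₑ ^ (r - 1) := by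
    intro t x
    by_cases hx : v (t, x) = 0
    · simp [hG, hx, hr.sub_one_pos]
    have hpos : 0 < ‖v (t, x)‖ := norm_pos_iff.2 hx
    rw [← ofReal_norm, ← ofReal_norm, ENNReal.ofReal_rpow_of_pos hpos, hW,
      ← ENNReal.ofReal_mul (by positivity)]
    congr 1
    rw [hG]
    simp only [norm_mul, RCLike.norm_conj, Complex.norm_real, Real.norm_eq_abs]
    rw [abs_of_nonneg (by positivity), abs_of_nonneg (by positivity)]
    have : r - 1 = 1 + (r - 2) := by ring
    rw [this, Real.rpow_add hpos, Real.rpow_one]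
    ring
  have hlG : ∀ t, lnorm r' (fun x => G (t, x)) = n t ^ (q - 1) := by
    intro t
    rw [← hmulr' t]
    have : (fun x => ‖G (t, x)‖ₑ) = fun x => W t * ‖v (t, x)‖ₑ ^ (r - 1) := by
      ext x; exact hGe t x
    unfold lnorm
    rw [this, nrm_const_mul _ hr'0 (hWfin t)]
    congr 1
    unfold nrm
    rw [div_eq_mul_one_div r, ENNReal.rpow_mul, hpow t]
    congr 2
    ext x
    rw [← ENNReal.rpow_mul, hr.sub_one_mul_conj]
  set A : ℝ≥0∞ := ∫⁻ t, n t ^ q with hA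
  have hmG : mnorm q' r' G = A ^ (1 / q') := by
    unfold mnorm nrm
    simp_rw [hlG, ← ENNReal.rpow_mul, hq.sub_one_mul_conj]
    rfl
  have hAfin : A ≠ ∞ := by
    have := hv.mnorm_ne_top hq0 hr0
    intro hAt
    apply this
    unfold mnorm nrm
    rw [← hn, ← hA, hAt]
    exact ENNReal.top_rpow_of_pos (by positivity)
  have hgauss : ‖∫ w, v w * G w‖ₑ = A := by
    have e1 : ∀ w, v w * G w = ((‖v w * G w‖ : ℝ) : ℂ) := by
      intro w
      rw [hG]
      simp only [norm_mul, RCLike.norm_conj, Complex.norm_real, Real.norm_eq_abs]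
      rw [abs_of_nonneg (by positivity), abs_of_nonneg (by positivity), ← mul_assoc,
        Complex.mul_conj, Complex.normSq_eq_norm_sq]
      push_cast
      ring
    have e2 : ∫ w, v w * G w = ((∫ w, ‖v w * G w‖ : ℝ) : ℂ) := by
      exact (integral_congr_ae (Filter.Eventually.of_forall e1)).trans integral_ofReal
    rw [e2, ← ofReal_norm, Complex.norm_real, Real.norm_of_nonneg
      (integral_nonneg fun _ => norm_nonneg _)]
    obtain ⟨K, hK⟩ := hv.bdd
    rw [ofReal_integral_norm_eq_lintegral_enorm (hGn.integrable.bdd_mul (c := K)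
      hv.meas.aestronglyMeasurable (Filter.Eventually.of_forall hK))]
    have hm : Measurable (fun w => ‖v w * G w‖ₑ) := (hv.meas.mul hGn.meas).enorm
    rw [Measure.volume_eq_prod, lintegral_prod _ hm.aemeasurable, hA]
    refine lintegral_congr fun t => ?_
    rw [← hmulr t, hpow t, ← lintegral_const_mul' _ _ (hWfin t)]
    refine lintegral_congr fun x => ?_
    rw [enorm_mul, hGe, mul_left_comm]
    congr 1
    by_cases hx : v (t, x) = 0
    · simp [hx, hr0]
    · nth_rewrite 1 [← ENNReal.rpow_one ‖v (t, x)‖ₑ]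
      rw [← ENNReal.rpow_add _ _ (by simpa using hx) (by simp)]
      congr 1; ring
  have key := h G hGn
  rw [hgauss, hmG] at key
  change A ^ (1 / q) ≤ M
  by_cases hA0 : A = 0
  · rw [hA0, ENNReal.zero_rpow_of_pos (by positivity)]; exact zero_le
  have h1 : A = A ^ (1 / q) * A ^ (1 / q') := by
    rw [← ENNReal.rpow_add _ _ hA0 hAfin]
    have := hq.inv_add_inv_eq_one
    rw [one_div, one_div, this, ENNReal.rpow_one]
  have h2 : A ^ (1 / q') ≠ 0 := by
    simp [ENNReal.rpow_eq_zero_iff, hA0, hAfin]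
  have h3 : A ^ (1 / q') ≠ ∞ := ENNReal.rpow_ne_top_of_nonneg (by positivity) hAfin
  rw [h1] at key
  nth_rewrite 2 [← h1] at key
  exact (ENNReal.mul_le_mul_iff_left h2 h3).1 key

/-- Fatou's lemma for the norms `nrm`. -/
lemma nrm_le_liminf {α : Type*} [MeasurableSpace α] {μ : Measure α} {p : ℝ} (hp : 0 < p)
    {f : α → ℝ≥0∞} {g : ℕ → α → ℝ≥0∞} (hg : ∀ k, Measurable (g k))
    (h : ∀ᵐ x ∂μ, f x ≤ Filter.liminf (fun k => g k x) Filter.atTop) :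
    nrm μ p f ≤ Filter.liminf (fun k => nrm μ p (g k)) Filter.atTop := by
  have h1 : ∫⁻ x, f x ^ p ∂μ ≤ Filter.liminf (fun k => ∫⁻ x, g k x ^ p ∂μ) Filter.atTop := by
    calc ∫⁻ x, f x ^ p ∂μ ≤ ∫⁻ x, Filter.liminf (fun k => g k x ^ p) Filter.atTop ∂μ := by
          refine lintegral_mono_ae ?_
          filter_upwards [h] with x hx
          have := (ENNReal.orderIsoRpow p hp).liminf_apply (u := fun k => g k x)
            (f := Filter.atTop)
          simp only [ENNReal.orderIsoRpow_apply] at this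
          rw [← this]
          exact ENNReal.rpow_le_rpow hx hp.le
      _ ≤ _ := lintegral_liminf_le fun k => (hg k).pow_const _
  have hp' : 0 < 1 / p := by positivity
  have := (ENNReal.orderIsoRpow (1 / p) hp').liminf_apply (u := fun k => ∫⁻ x, g k x ^ p ∂μ)
    (f := Filter.atTop)
  simp only [ENNReal.orderIsoRpow_apply] at this
  unfold nrm
  rw [← this]
  exact ENNReal.rpow_le_rpow h1 hp'.le

lemma liminf_le_of_forall_le {b : ℕ → ℝ≥0∞} {M : ℝ≥0∞} (h : ∀ k, b k ≤ M) :
    Filter.liminf b Filter.atTop ≤ M := by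
  refine Filter.liminf_le_of_le (by isBoundedDefault) fun a ha => ?_
  obtain ⟨k, hk⟩ := ha.exists
  exact hk.trans (h k)

lemma le_liminf_of_eventually_eq {a : ℝ≥0∞} {b : ℕ → ℝ≥0∞}
    (h : ∀ᶠ k in Filter.atTop, b k = a) : a ≤ Filter.liminf b Filter.atTop :=
  Filter.le_liminf_of_le (by isBoundedDefault) (h.mono fun _ hk => hk.ge)

/-- Duality for finite exponents: `u` is truncated to a large ball, and to times at which the slice
norm is not too small, so that `dual_core` applies; Fatou removes the truncation. -/
lemma dual_finite {d : ℕ} {q r q' r' : ℝ} (hr2 : 2 ≤ r) (hq : q.HolderConjugate q')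
    (hr : r.HolderConjugate r') {u : ℝ × Sp d → ℂ} (hu : Measurable u)
    (hub : ∃ K : ℝ, ∀ w, ‖u w‖ ≤ K) {M : ℝ≥0∞}
    (h : ∀ G, Nice G → ‖∫ w, u w * G w‖ₑ ≤ M * mnorm q' r' G) : mnorm q r u ≤ M := by
  have hr0 : 0 < r := by linarith
  obtain ⟨K, hK⟩ := hub
  let B : ℕ → Set (ℝ × Sp d) := fun k => {z | ‖z.2‖ ≤ k}
  have hBm : ∀ k, MeasurableSet (B k) := fun k =>
    measurableSet_le (by fun_prop) measurable_const
  let N : ℕ → ℝ → ℝ≥0∞ := fun k t => lnorm r (fun x => (B k).indicator u (t, x))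
  have hNm : ∀ k, Measurable (N k) := fun k => measurable_lnorm_slice (hu.indicator (hBm k)) r
  let T : ℕ → Set ℝ := fun k => {t | |t| ≤ k ∧ ENNReal.ofReal (1 / (k + 1)) ≤ N k t}
  have hTm : ∀ k, MeasurableSet (T k) := fun k =>
    (measurableSet_le (f := fun t : ℝ => |t|) (by fun_prop) measurable_const).inter
      (measurableSet_le measurable_const (hNm k))
  let E : ℕ → Set (ℝ × Sp d) := fun k => (Prod.fst ⁻¹' T k) ∩ B k
  have hEm : ∀ k, MeasurableSet (E k) := fun k => (measurable_fst (hTm k)).inter (hBm k)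
  let v : ℕ → ℝ × Sp d → ℂ := fun k => (E k).indicator u
  have hvn : ∀ k, Nice (v k) := by
    intro k
    refine ⟨hu.indicator (hEm k), ⟨K, fun w => (norm_indicator_le_norm_self _ _).trans (hK w)⟩,
      ⟨k, fun w hw => Set.indicator_of_notMem ?_ _⟩⟩
    rintro ⟨h1, h2⟩
    exact absurd hw (not_lt.2 (max_le h1.1 h2))
  have hvt : ∀ k t, t ∈ T k → ∀ x, v k (t, x) = (B k).indicator u (t, x) := by
    intro k t ht x
    have hiff : (t, x) ∈ E k ↔ (t, x) ∈ B k := ⟨fun h => h.2, fun h => ⟨ht, h⟩⟩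
    by_cases hx : (t, x) ∈ B k
    · simp only [v]
      rw [Set.indicator_of_mem hx, Set.indicator_of_mem (hiff.2 hx)]
    · simp only [v]
      rw [Set.indicator_of_notMem hx, Set.indicator_of_notMem (fun h => hx (hiff.1 h))]
  have hvb : ∀ k, mnorm q r (v k) ≤ M := by
    intro k
    refine dual_core hr2 hq hr (hvn k) (c := 1 / (k + 1)) (by positivity) (fun t => ?_) ?_
    · by_cases ht : t ∈ T k
      · right
        have : (fun x => v k (t, x)) = fun x => (B k).indicator u (t, x) := by
          ext x; exact hvt k t ht x
        rw [this]
        exact ht.2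
      · left
        have : (fun x => v k (t, x)) = fun _ => 0 := by
          ext x; exact Set.indicator_of_notMem (fun h => ht h.1) _
        rw [this]
        simp [lnorm, nrm, hr0]
    · intro G hG
      have : ∀ w, v k w * G w = u w * (E k).indicator G w := by
        intro w
        simp only [v]
        by_cases hw : w ∈ E k <;> simp [hw]
      simp_rw [this]
      refine (h _ (hG.indicator (hEm k))).trans ?_
      gcongr
      exact mnorm_mono hq.symm.pos hr.symm.pos fun z => enorm_indicator_le_enorm_self _ _
  refine (nrm_le_liminf hq.pos (fun k => measurable_lnorm_slice (hvn k).meas r)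
    (Filter.Eventually.of_forall fun t => ?_)).trans (liminf_le_of_forall_le hvb)
  by_cases h0 : lnorm r (fun x => u (t, x)) = 0
  · rw [h0]; exact zero_le
  -- some truncation of the slice is nonzero, hence eventually above the threshold
  obtain ⟨k₀, hk₀⟩ : ∃ k, N k t ≠ 0 := by
    by_contra! hcon
    apply h0
    have hz : ∀ k : ℕ, ∀ᵐ x, (B k).indicator u (t, x) = 0 := by
      intro k
      have := hcon k
      simp only [N, lnorm, nrm] at this
      rw [ENNReal.rpow_eq_zero_iff_of_pos (by positivity), lintegral_eq_zero_iff] at this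
      · filter_upwards [this] with x hx
        simpa [hr0, hr0.not_gt, ENNReal.rpow_eq_zero_iff] using hx
      · exact ((hu.indicator (hBm k)).comp measurable_prodMk_left).enorm.pow_const _
    have hz' : ∀ᵐ x, u (t, x) = 0 := by
      filter_upwards [ae_all_iff.2 hz] with x hx
      obtain ⟨k, hk⟩ := exists_nat_ge ‖x‖
      have := hx k
      rwa [Set.indicator_of_mem (show (t, x) ∈ B k from hk)] at this
    unfold lnorm nrm
    have hmu : Measurable (fun x => ‖u (t, x)‖ₑ ^ r) :=
      (hu.comp measurable_prodMk_left).enorm.pow_const _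
    rw [ENNReal.rpow_eq_zero_iff_of_pos (by positivity), lintegral_eq_zero_iff hmu]
    filter_upwards [hz'] with x hx
    simp [hx, hr0]
  have hNmono : ∀ {k l : ℕ}, k ≤ l → N k t ≤ N l t := by
    intro k l hkl
    refine lnorm_mono hr0 fun x => ?_
    refine enorm_indicator_le_of_subset ?_ _ _
    intro z (hz : ‖z.2‖ ≤ k)
    exact hz.trans (by exact_mod_cast hkl)
  have hev : ∀ᶠ k : ℕ in Filter.atTop, t ∈ T k := by
    obtain ⟨k₁, hk₁⟩ := exists_nat_ge |t|
    have hlim : Filter.Tendsto (fun k : ℕ => ENNReal.ofReal (1 / ((k : ℝ) + 1))) Filter.atTop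
        (nhds 0) := by
      rw [← ENNReal.ofReal_zero]
      exact ENNReal.tendsto_ofReal tendsto_one_div_add_atTop_nhds_zero_nat
    filter_upwards [Filter.eventually_ge_atTop k₀, Filter.eventually_ge_atTop k₁,
      hlim.eventually (gt_mem_nhds (pos_iff_ne_zero.2 hk₀))] with k h1 h2 h3
    exact ⟨hk₁.trans (by exact_mod_cast h2), h3.le.trans (hNmono h1)⟩
  have hvm : ∀ k, Measurable (fun x => ‖v k (t, x)‖ₑ) := fun k =>
    ((hvn k).meas.comp measurable_prodMk_left).enorm
  refine nrm_le_liminf hr0 hvm (Filter.Eventually.of_forall fun x => ?_)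
  refine le_liminf_of_eventually_eq ?_
  obtain ⟨k₂, hk₂⟩ := exists_nat_ge ‖x‖
  filter_upwards [hev, Filter.eventually_ge_atTop k₂] with k h1 h2
  rw [hvt k t h1, Set.indicator_of_mem (show (t, x) ∈ B k from hk₂.trans (by exact_mod_cast h2))]

/-- Hölder's inequality on a ball. -/
lemma lnorm_one_le {d : ℕ} {k : ℝ} {n n' : ℝ} (hn : n.HolderConjugate n')
    {σ : ℝ≥0∞} (hσ : volume (Metric.closedBall (0 : Sp d) k) ≤ σ ^ n) {g : Sp d → ℂ}
    (hg : Measurable g) (hsupp : ∀ x, k < ‖x‖ → g x = 0) : lnorm 1 g ≤ σ * lnorm n' g := by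
  set b : Sp d → ℝ≥0∞ := (Metric.closedBall (0 : Sp d) k).indicator 1 with hb
  have hbm : Measurable b := measurable_one.indicator Metric.isClosed_closedBall.measurableSet
  have h := ENNReal.lintegral_mul_le_Lp_mul_Lq volume hn hbm.aemeasurable
    hg.enorm.aemeasurable
  unfold lnorm
  rw [nrm_one]
  have e : ∀ x, (b * fun x => ‖g x‖ₑ) x = ‖g x‖ₑ := by
    intro x
    by_cases hx : x ∈ Metric.closedBall (0 : Sp d) k
    · simp [hb, hx]
    · have : g x = 0 := hsupp x (by simpa using hx)
      simp [this]
  simp_rw [e] at h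
  refine h.trans (mul_le_mul' ?_ le_rfl)
  have e2 : ∀ x, b x ^ n = b x := by
    intro x
    by_cases hx : x ∈ Metric.closedBall (0 : Sp d) k
    · simp [hb, hx]
    · simp [hb, hx, hn.pos]
  simp_rw [e2, hb]
  rw [lintegral_indicator_one Metric.isClosed_closedBall.measurableSet, one_div,
    ENNReal.rpow_inv_le_iff hn.pos]
  exact hσ

/-- The `L^∞` norm is recovered from `L^n` norms on growing balls as `n → ∞`. -/
lemma linf_le_liminf {d : ℕ} {f : Sp d → ℂ} (hf : Measurable f) {n : ℕ → ℝ}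
    (hn0 : ∀ k, 0 < n k) (hn : Filter.Tendsto n Filter.atTop Filter.atTop) :
    eLpNorm f ∞ volume ≤ Filter.liminf
      (fun k : ℕ => lnorm (n k) ((Metric.closedBall 0 (k : ℝ)).indicator f)) Filter.atTop := by
  rw [eLpNorm_exponent_top]
  refine le_of_forall_lt fun a ha => ?_
  obtain ⟨a', ha1, ha2⟩ := exists_between ha
  refine ha1.trans_le ?_
  have ha'top : a' ≠ ∞ := ha2.ne_top
  set S : Set (Sp d) := {x | a' < ‖f x‖ₑ} with hS
  have hSm : MeasurableSet S := measurableSet_lt measurable_const hf.enorm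
  have hpos : volume S ≠ 0 := by
    intro h0
    refine absurd (essSup_le_of_ae_le a' ?_) (not_le.2 ha2)
    have : ∀ᵐ x, x ∉ S := measure_eq_zero_iff_ae_notMem.1 h0
    filter_upwards [this] with x hx
    exact not_lt.1 hx
  obtain ⟨K, hK⟩ : ∃ K : ℕ, volume (S ∩ Metric.closedBall 0 (K : ℝ)) ≠ 0 := by
    by_contra! hcon
    apply hpos
    have : S = ⋃ K : ℕ, S ∩ Metric.closedBall 0 (K : ℝ) := by
      rw [← Set.inter_iUnion, Metric.iUnion_closedBall_nat, Set.inter_univ]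
    rw [this]
    exact measure_iUnion_null hcon
  set σ := volume (S ∩ Metric.closedBall 0 (K : ℝ)) with hσ
  have hσtop : σ ≠ ∞ := ((measure_mono Set.inter_subset_right).trans_lt
    (isCompact_closedBall _ _).measure_lt_top).ne
  have hlim : Filter.Tendsto (fun k => a' * σ ^ (1 / n k)) Filter.atTop (nhds a') := by
    have h1 : Filter.Tendsto (fun k => 1 / n k) Filter.atTop (nhds 0) := by
      simp_rw [one_div]
      exact hn.inv_tendsto_atTop
    have hs : 0 < σ.toReal := ENNReal.toReal_pos hK hσtop
    have h2 : Filter.Tendsto (fun k => σ ^ (1 / n k)) Filter.atTop (nhds 1) := by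
      have h3 := ENNReal.tendsto_ofReal
        (((Real.continuous_const_rpow hs.ne').tendsto 0).comp h1)
      simp only [Function.comp_def, Real.rpow_zero, ENNReal.ofReal_one] at h3
      refine h3.congr fun k => ?_
      rw [← ENNReal.ofReal_rpow_of_pos hs, ENNReal.ofReal_toReal hσtop]
    simpa using ENNReal.Tendsto.const_mul h2 (Or.inr ha'top)
  rw [← hlim.liminf_eq]
  refine Filter.liminf_le_liminf ?_
  filter_upwards [Filter.eventually_ge_atTop K] with k hk
  have h1 : nrm volume (n k) ((S ∩ Metric.closedBall 0 (K : ℝ)).indicator (fun _ => a')) =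
      a' * σ ^ (1 / n k) := by
    rw [nrm_indicator _ (hn0 k) _ (hSm.inter Metric.isClosed_closedBall.measurableSet)]
    simp only [lintegral_const, Measure.restrict_apply, MeasurableSet.univ, Set.univ_inter]
    rw [ENNReal.mul_rpow_of_nonneg _ _ (by have := hn0 k; positivity), ← ENNReal.rpow_mul,
      mul_one_div_cancel (hn0 k).ne', ENNReal.rpow_one]
  rw [← h1]
  refine nrm_mono _ (hn0 k) fun x => ?_
  by_cases hx : x ∈ S ∩ Metric.closedBall 0 (K : ℝ)
  · have hxk : x ∈ Metric.closedBall (0 : Sp d) (k : ℝ) :=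
      Metric.closedBall_subset_closedBall (by exact_mod_cast hk) hx.2
    rw [Set.indicator_of_mem hx, Set.indicator_of_mem hxk]
    exact hx.1.le
  · simp [hx]

/-- The mixed norm with finite time exponent and arbitrary space exponent. -/
noncomputable def dnorm {d : ℕ} (q : ℝ) (r : ℝ≥0∞) (u : ℝ × Sp d → ℂ) : ℝ≥0∞ :=
  nrm volume q (fun t => eLpNorm (fun x => u (t, x)) r volume)

lemma eLpNorm_eq_lnorm {α : Type*} [MeasureSpace α] {r : ℝ} (hr : 0 < r) (f : α → ℂ) :
    eLpNorm f (ENNReal.ofReal r) volume = lnorm r f := by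
  rw [eLpNorm_eq_lintegral_rpow_enorm_toReal (by simpa using hr) ENNReal.ofReal_ne_top,
    ENNReal.toReal_ofReal hr.le]
  rfl

lemma dnorm_eq_mnorm {d : ℕ} (q : ℝ) {r : ℝ} (hr : 0 < r) (u : ℝ × Sp d → ℂ) :
    dnorm q (ENNReal.ofReal r) u = mnorm q r u := by
  unfold dnorm mnorm
  simp_rw [eLpNorm_eq_lnorm hr]

/-- Duality for the space exponent `∞`: apply `dual_finite` on growing balls, with exponents `n`
so large that the ball has volume at most `2 ^ n`; this costs the factor `2`. -/
lemma dual_infty {d : ℕ} {q q' : ℝ} (hq : q.HolderConjugate q')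
    {u : ℝ × Sp d → ℂ} (hu : Measurable u)
    (hub : ∃ K : ℝ, ∀ w, ‖u w‖ ≤ K) {M : ℝ≥0∞}
    (h : ∀ G, Nice G → ‖∫ w, u w * G w‖ₑ ≤ M * mnorm q' 1 G) : dnorm q ∞ u ≤ M * 2 := by
  let B : ℕ → Set (ℝ × Sp d) := fun k => {z | ‖z.2‖ ≤ k}
  have hBm : ∀ k, MeasurableSet (B k) := fun k =>
    measurableSet_le (by fun_prop) measurable_const
  have hvol : ∀ k : ℕ, ∃ n : ℕ, k + 2 ≤ n ∧
      volume (Metric.closedBall (0 : Sp d) k) ≤ 2 ^ (n : ℝ) := by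
    intro k
    have hfin : volume (Metric.closedBall (0 : Sp d) k) ≠ ∞ :=
      (isCompact_closedBall _ _).measure_lt_top.ne
    obtain ⟨j, hj⟩ := ENNReal.exists_nat_gt hfin
    refine ⟨k + 2 + j, by omega, hj.le.trans ?_⟩
    rw [ENNReal.rpow_natCast]
    have h1 : j ≤ 2 ^ (k + 2 + j) :=
      (Nat.lt_two_pow_self (n := j)).le.trans (Nat.pow_le_pow_right (by norm_num) (by omega))
    exact_mod_cast h1
  choose n hn1 hn2 using hvol
  have hn2' : ∀ k, (2 : ℝ) ≤ n k := fun k => by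
    have := hn1 k; exact_mod_cast (by omega : 2 ≤ n k)
  have hntop : Filter.Tendsto (fun k => (n k : ℝ)) Filter.atTop Filter.atTop :=
    tendsto_natCast_atTop_atTop.comp
      (Filter.tendsto_atTop_mono (fun k => by have := hn1 k; rw [id]; omega) Filter.tendsto_id)
  have hvm : ∀ k, Measurable ((B k).indicator u) := fun k => hu.indicator (hBm k)
  have hb : ∀ k, mnorm q (n k) ((B k).indicator u) ≤ M * 2 := by
    intro k
    have hc : (n k : ℝ).HolderConjugate ((n k : ℝ).conjExponent) :=
      Real.HolderConjugate.conjExponent (by have := hn2' k; linarith)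
    obtain ⟨K, hK⟩ := hub
    refine dual_finite (hn2' k) hq hc (hvm k)
      ⟨K, fun w => (norm_indicator_le_norm_self _ _).trans (hK w)⟩ fun G hG => ?_
    have e : ∀ w, (B k).indicator u w * G w = u w * (B k).indicator G w := by
      intro w
      by_cases hw : w ∈ B k <;> simp [hw]
    simp_rw [e]
    refine (h _ (hG.indicator (hBm k))).trans ?_
    rw [mul_assoc]
    gcongr
    unfold mnorm
    rw [← nrm_const_mul _ hq.symm.pos (by norm_num)]
    refine nrm_mono _ hq.symm.pos fun t => ?_
    have hGk := (hG.indicator (hBm k)).slice t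
    refine (lnorm_one_le hc (hn2 k) hGk.meas fun x hx =>
      Set.indicator_of_notMem (show (t, x) ∉ B k from not_le.2 hx) _).trans ?_
    gcongr
    exact lnorm_mono hc.symm.pos fun x => enorm_indicator_le_enorm_self _ _
  refine (nrm_le_liminf hq.pos (fun k => measurable_lnorm_slice (hvm k) (n k))
    (Filter.Eventually.of_forall fun t => ?_)).trans (liminf_le_of_forall_le hb)
  have := linf_le_liminf (f := fun x => u (t, x)) (hu.comp measurable_prodMk_left)
    (n := fun k => n k) (fun k => by have := hn2' k; linarith) hntop
  refine this.trans (le_of_eq ?_)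
  congr 1; ext k
  congr 1; ext x
  by_cases hx : ‖x‖ ≤ k
  · rw [Set.indicator_of_mem (by simpa using hx), Set.indicator_of_mem (show (t, x) ∈ B k from hx)]
  · rw [Set.indicator_of_notMem (by simpa using hx),
      Set.indicator_of_notMem (show (t, x) ∉ B k from hx)]

/-! ### Conjugate exponents and the energy bound -/

/-- The conjugate of an exponent `m ∈ [1, ∞)`, with value `∞` at `m = 1`. -/
noncomputable def rdual (m : ℝ) : ℝ≥0∞ := if m = 1 then ∞ else ENNReal.ofReal m.conjExponent

lemma two_le_conjExponent {m : ℝ} (h1 : 1 < m) (h2 : m ≤ 2) : 2 ≤ m.conjExponent := by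
  unfold Real.conjExponent
  rw [le_div_iff₀ (by linarith)]
  linarith

/-- Duality: a bounded function is estimated by its pairings with test functions. -/
lemma dual_bound {d : ℕ} {p m : ℝ} (hp : 1 < p) (hm1 : 1 ≤ m) (hm2 : m ≤ 2)
    {u : ℝ × Sp d → ℂ} (hu : Measurable u) (hub : ∃ K : ℝ, ∀ w, ‖u w‖ ≤ K) {M : ℝ≥0∞}
    (h : ∀ G, Nice G → ‖∫ w, u w * G w‖ₑ ≤ M * mnorm p m G) :
    dnorm p.conjExponent (rdual m) u ≤ M * 2 := by
  have hq := (Real.HolderConjugate.conjExponent hp).symm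
  rcases hm1.eq_or_lt with rfl | hm1
  · simp only [rdual, if_true]
    exact dual_infty hq hu hub h
  · have hr := (Real.HolderConjugate.conjExponent hm1).symm
    rw [rdual, if_neg hm1.ne', dnorm_eq_mnorm _ hr.pos]
    refine (dual_finite (two_le_conjExponent hm1 hm2) hq hr hu hub h).trans ?_
    nth_rewrite 1 [← mul_one M]
    gcongr
    norm_num

/-- Duality in `L²` of space alone. -/
lemma dual_two {d : ℕ} {f : Sp d → ℂ} (hf : Measurable f) (hfb : ∃ K : ℝ, ∀ x, ‖f x‖ ≤ K)
    {M : ℝ≥0∞} (h : ∀ g, Nice g → ‖∫ x, f x * g x‖ₑ ≤ M * lnorm 2 g) : lnorm 2 f ≤ M := by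
  obtain ⟨K, hK⟩ := hfb
  let v : ℕ → Sp d → ℂ := fun k => (Metric.closedBall 0 (k : ℝ)).indicator f
  have hBm : ∀ k : ℕ, MeasurableSet (Metric.closedBall (0 : Sp d) (k : ℝ)) := fun k =>
    Metric.isClosed_closedBall.measurableSet
  have hvn : ∀ k, Nice (v k) := fun k =>
    ⟨hf.indicator (hBm k), ⟨K, fun w => (norm_indicator_le_norm_self _ _).trans (hK w)⟩,
      ⟨k, fun w hw => Set.indicator_of_notMem (by simpa using hw) _⟩⟩
  have hvb : ∀ k, lnorm 2 (v k) ≤ M := by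
    intro k
    have key := h _ (hvn k).conj
    rw [lnorm_conj] at key
    set a := lnorm 2 (v k) with ha
    have hafin : a ≠ ∞ := (hvn k).lnorm_ne_top (by norm_num)
    have e1 : ∀ x, f x * (starRingEnd ℂ) (v k x) = ((‖v k x‖ ^ 2 : ℝ) : ℂ) := by
      intro x
      have : f x * (starRingEnd ℂ) (v k x) = v k x * (starRingEnd ℂ) (v k x) := by
        by_cases hx : x ∈ Metric.closedBall (0 : Sp d) (k : ℝ)
        · simp only [v]; rw [Set.indicator_of_mem hx]
        · simp only [v]; rw [Set.indicator_of_notMem hx]; simp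
      rw [this, Complex.mul_conj, Complex.normSq_eq_norm_sq]
    have e2 : ‖∫ x, f x * (starRingEnd ℂ) (v k x)‖ₑ = a * a := by
      have e3 : ∫ x, f x * (starRingEnd ℂ) (v k x) = ((∫ x, ‖v k x‖ ^ 2 : ℝ) : ℂ) :=
        (integral_congr_ae (Filter.Eventually.of_forall e1)).trans
          (integral_ofReal (f := fun x => ‖v k x‖ ^ 2))
      rw [e3, ← ofReal_norm, Complex.norm_real, Real.norm_of_nonneg (integral_nonneg fun _ => by positivity),
        ofReal_integral_eq_lintegral_ofReal _ (Filter.Eventually.of_forall fun _ => by positivity)]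
      · have : a ^ (2 : ℝ) = ∫⁻ x, ‖v k x‖ₑ ^ (2 : ℝ) := nrm_rpow volume (by norm_num) _
        rw [← sq, ← ENNReal.rpow_two, this]
        refine lintegral_congr fun x => ?_
        rw [ENNReal.ofReal_pow (norm_nonneg _), ofReal_norm, ENNReal.rpow_two]
      · have hi : Integrable (fun x => ‖v k x * v k x‖) :=
          ((hvn k).integrable.bdd_mul (c := K) (hvn k).meas.aestronglyMeasurable
            (Filter.Eventually.of_forall fun w =>
              (norm_indicator_le_norm_self _ _).trans (hK w))).norm
        refine hi.congr (Filter.Eventually.of_forall fun x => ?_)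
        simp [sq]
    rw [e2] at key
    by_cases ha0 : a = 0
    · rw [ha0]; exact zero_le
    · exact (ENNReal.mul_le_mul_iff_left ha0 hafin).1 key
  refine (nrm_le_liminf (by norm_num) (fun k => (hvn k).meas.enorm)
    (Filter.Eventually.of_forall fun x => ?_)).trans (liminf_le_of_forall_le hvb)
  refine le_liminf_of_eventually_eq ?_
  obtain ⟨k₂, hk₂⟩ := exists_nat_ge ‖x‖
  filter_upwards [Filter.eventually_ge_atTop k₂] with k h2
  simp only [v]
  rw [Set.indicator_of_mem]
  simpa using hk₂.trans (by exact_mod_cast h2)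

/-- The uniform-in-time energy bound: the dual homogeneous estimate. -/
lemma duh_two {d : ℕ} {p m : ℝ} (hp : 0 < p) (hm : 0 < m) {C : ℝ≥0∞} (hD : DiagBound d p m C)
    {ε : ℝ} (hε : 0 < ε)
    {χ : ℝ → ℂ} (hχ : Cutoff χ) {F : ℝ × Sp d → ℂ} (hF : Nice F) (t : ℝ) :
    lnorm 2 (fun x => duh ε χ F (t, x)) ≤ C ^ (1 / 2 : ℝ) * mnorm p m F := by
  obtain ⟨K, hK⟩ := bounded_duh hε hχ hF
  refine dual_two ((measurable_duh hε hχ hF).comp measurable_prodMk_left) ⟨K, fun x => hK _⟩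
    fun g hg => ?_
  have hc := nice_cut hχ t hF
  have key := tt_star_slice hD hε hc t hg
  have hi : Integrable (fun z : (ℝ × Sp d) × Sp d =>
      kern ε (t - z.1.1) (z.2 - z.1.2) * (cut χ t F z.1 * g z.2)) := by
    refine (hc.integrable.mul_prod hg.integrable).bdd_mul
      (c := (4 * Real.pi * ε) ^ (-(d : ℝ) / 2)) ?_
      (Filter.Eventually.of_forall fun p => norm_kern_le' hε _ _)
    exact ((continuous_kern hε).comp
      (f := fun z : (ℝ × Sp d) × Sp d => (t - z.1.1, z.2 - z.1.2)) (by fun_prop)).aestronglyMeasurable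
  have e : ∫ x, duh ε χ F (t, x) * g x = ∫ z : (ℝ × Sp d) × Sp d,
      kern ε (t - z.1.1) (z.2 - z.1.2) * (cut χ t F z.1 * g z.2) := by
    rw [Measure.volume_eq_prod] at hi
    refine Eq.trans ?_ (integral_prod_symm _ hi).symm
    refine integral_congr_ae (Filter.Eventually.of_forall fun x => ?_)
    simp only [duh]
    rw [← integral_mul_const]
    refine integral_congr_ae (Filter.Eventually.of_forall fun z => ?_)
    simp only [cut]
    ring
  simp only [Function.comp_apply]
  rw [e, mul_assoc]
  refine key.trans ?_
  gcongr
  refine mnorm_mono hp hm fun z => ?_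
  simp only [cut, enorm_mul]
  calc _ ≤ 1 * ‖F z‖ₑ := mul_le_mul'
        (by rw [← ofReal_norm, ENNReal.ofReal_le_one]; exact hχ.le_one _) le_rfl
    _ = _ := one_mul _

/-! ### Hölder and interpolation in mixed norms -/

lemma measurable_linf_slice {d : ℕ} {u : ℝ × Sp d → ℂ} (hu : Measurable u) :
    Measurable (fun t => eLpNorm (fun x => u (t, x)) ∞ volume) := by
  refine measurable_of_Ioi fun a => ?_
  have hS : MeasurableSet {z : ℝ × Sp d | a < ‖u z‖ₑ} := measurableSet_lt measurable_const hu.enorm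
  have e : (fun t => eLpNorm (fun x => u (t, x)) ∞ volume) ⁻¹' Set.Ioi a =
      {t | volume (Prod.mk t ⁻¹' {z : ℝ × Sp d | a < ‖u z‖ₑ}) ≠ 0} := by
    ext t
    simp only [Set.mem_preimage, Set.mem_Ioi, Set.mem_ofPred_eq, eLpNorm_exponent_top]
    constructor
    · intro h h0
      refine absurd (essSup_le_of_ae_le a ?_) (not_le.2 h)
      have : ∀ᵐ x, x ∉ Prod.mk t ⁻¹' {z : ℝ × Sp d | a < ‖u z‖ₑ} :=
        measure_eq_zero_iff_ae_notMem.1 h0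
      filter_upwards [this] with x hx
      exact not_lt.1 hx
    · intro h
      by_contra hcon
      apply h
      rw [measure_eq_zero_iff_ae_notMem]
      filter_upwards [enorm_ae_le_eLpNormEssSup (fun x => u (t, x)) volume] with x hx
      exact not_lt.2 (hx.trans (not_lt.1 hcon))
  rw [e]
  exact (measurable_measure_prodMk_left hS) (measurableSet_singleton 0).compl

lemma measurable_slice_rdual {d : ℕ} {m : ℝ} (hm : 1 ≤ m) {u : ℝ × Sp d → ℂ} (hu : Measurable u) :
    Measurable (fun t => eLpNorm (fun x => u (t, x)) (rdual m) volume) := by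
  unfold rdual
  split_ifs with h
  · exact measurable_linf_slice hu
  · have hm1 : 1 < m := lt_of_le_of_ne hm (Ne.symm h)
    simp_rw [eLpNorm_eq_lnorm (Real.HolderConjugate.conjExponent hm1).symm.pos]
    exact measurable_lnorm_slice hu _

lemma holder_slice {d : ℕ} {m : ℝ} (hm : 1 ≤ m) {f g : Sp d → ℂ} (hf : Measurable f)
    (hg : Measurable g) :
    ∫⁻ x, ‖f x * g x‖ₑ ≤ eLpNorm f (rdual m) volume * lnorm m g := by
  simp_rw [enorm_mul]
  unfold rdual
  split_ifs with h
  · subst h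
    unfold lnorm
    rw [nrm_one, ← lintegral_const_mul _ hg.enorm, eLpNorm_exponent_top]
    refine lintegral_mono_ae ?_
    filter_upwards [enorm_ae_le_eLpNormEssSup f volume] with x hx
    gcongr
  · have hm1 : 1 < m := lt_of_le_of_ne hm (Ne.symm h)
    have hc := (Real.HolderConjugate.conjExponent hm1).symm
    rw [eLpNorm_eq_lnorm hc.pos]
    exact ENNReal.lintegral_mul_le_Lp_mul_Lq volume hc hf.enorm.aemeasurable hg.enorm.aemeasurable

/-- Hölder's inequality in the mixed norms. -/
lemma holder_mixed {d : ℕ} {p m : ℝ} (hp : 1 < p) (hm : 1 ≤ m) {u G : ℝ × Sp d → ℂ}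
    (hu : Measurable u) (hG : Measurable G) :
    ‖∫ w, u w * G w‖ₑ ≤ dnorm p.conjExponent (rdual m) u * mnorm p m G := by
  refine (enorm_integral_le_lintegral_enorm _).trans ?_
  have hm' : Measurable (fun w => ‖u w * G w‖ₑ) := (hu.mul hG).enorm
  rw [Measure.volume_eq_prod, lintegral_prod _ hm'.aemeasurable]
  refine (lintegral_mono fun t => holder_slice hm (hu.comp measurable_prodMk_left)
    (hG.comp measurable_prodMk_left)).trans ?_
  exact ENNReal.lintegral_mul_le_Lp_mul_Lq volume (Real.HolderConjugate.conjExponent hp).symm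
    (measurable_slice_rdual hm hu).aemeasurable (measurable_lnorm_slice hG m).aemeasurable

/-- Log-convexity of the Lebesgue norms between `L²` and a finite exponent. -/
lemma lnorm_interp_fin {α : Type*} [MeasureSpace α] {r s θ : ℝ} (hr : 0 < r) (hs : 0 < s)
    (hθ0 : 0 ≤ θ) (hθ1 : θ ≤ 1) (h : 1 / r = θ / s + (1 - θ) / 2) {f : α → ℂ}
    (hf : Measurable f) : lnorm r f ≤ lnorm s f ^ θ * lnorm 2 f ^ (1 - θ) := by
  have h1 := ENNReal.lintegral_mul_norm_pow_le (μ := (volume : Measure α))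
    (f := fun x => ‖f x‖ₑ ^ s) (g := fun x => ‖f x‖ₑ ^ (2 : ℝ)) (by fun_prop) (by fun_prop)
    (p := θ * r / s) (q := (1 - θ) * r / 2) (by positivity)
    (by have : 0 ≤ 1 - θ := by linarith
        positivity)
    (by field_simp at h ⊢; linarith)
  have e : ∀ x, (‖f x‖ₑ ^ s) ^ (θ * r / s) * (‖f x‖ₑ ^ (2 : ℝ)) ^ ((1 - θ) * r / 2) =
      ‖f x‖ₑ ^ r := by
    intro x
    rw [← ENNReal.rpow_mul, ← ENNReal.rpow_mul, ← ENNReal.rpow_add_of_nonneg]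
    · congr 1; field_simp; ring
    · have : s * (θ * r / s) = θ * r := by field_simp
      rw [this]; positivity
    · have : 0 ≤ 1 - θ := by linarith
      positivity
  simp_rw [e] at h1
  unfold lnorm nrm
  refine (ENNReal.rpow_le_rpow h1 (by positivity : 0 ≤ 1 / r)).trans (le_of_eq ?_)
  rw [ENNReal.mul_rpow_of_nonneg _ _ (by positivity), ← ENNReal.rpow_mul, ← ENNReal.rpow_mul,
    ← ENNReal.rpow_mul, ← ENNReal.rpow_mul]
  congr 2 <;> field_simp

/-- Log-convexity of the Lebesgue norms between `L²` and `L^∞`. -/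
lemma lnorm_interp_top {α : Type*} [MeasureSpace α] {r : ℝ} (hr : 2 ≤ r)
    {f : α → ℂ} (hf : Measurable f) :
    lnorm r f ≤ eLpNorm f ∞ volume ^ (1 - 2 / r) * lnorm 2 f ^ (2 / r) := by
  have hr0 : 0 < r := by linarith
  rw [eLpNorm_exponent_top]
  set S := eLpNormEssSup f volume
  have h1 : ∫⁻ x, ‖f x‖ₑ ^ r ≤ S ^ (r - 2) * ∫⁻ x, ‖f x‖ₑ ^ (2 : ℝ) := by
    rw [← lintegral_const_mul _ (by fun_prop)]
    refine lintegral_mono_ae ?_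
    filter_upwards [enorm_ae_le_eLpNormEssSup f volume] with x hx
    calc ‖f x‖ₑ ^ r = ‖f x‖ₑ ^ (r - 2) * ‖f x‖ₑ ^ (2 : ℝ) := by
          rw [← ENNReal.rpow_add_of_nonneg _ _ (by linarith) (by norm_num)]
          congr 1; ring
      _ ≤ _ := by
          gcongr
  unfold lnorm nrm
  refine (ENNReal.rpow_le_rpow h1 (by positivity : 0 ≤ 1 / r)).trans (le_of_eq ?_)
  rw [ENNReal.mul_rpow_of_nonneg _ _ (by positivity), ← ENNReal.rpow_mul, ← ENNReal.rpow_mul]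
  congr 2 <;> field_simp

/-- Interpolation between an admissible space exponent and `L²`, in conjugate exponents. -/
lemma lnorm_interp {d : ℕ} {m n θ : ℝ} (hn : 1 ≤ n) (hnm : n ≤ m) (hm1 : 1 < m) (hm2 : m < 2)
    (hθ0 : 0 ≤ θ) (hθ1 : θ ≤ 1) (hθ : 1 / m - 1 / 2 = θ * (1 / n - 1 / 2)) {f : Sp d → ℂ}
    (hf : Measurable f) :
    lnorm m.conjExponent f ≤ eLpNorm f (rdual n) volume ^ θ * lnorm 2 f ^ (1 - θ) := by
  have hcm := Real.HolderConjugate.conjExponent hm1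
  have hm := hcm.inv_add_inv_eq_one
  have h1 : 1 / m.conjExponent = 1 - 1 / m := by rw [one_div, one_div]; linarith
  rcases hn.eq_or_lt with rfl | hn1
  · have hθ' : θ = 1 - 2 / m.conjExponent := by
      rw [div_eq_mul_one_div, h1]; linarith
    have := lnorm_interp_top (two_le_conjExponent hm1 hm2.le) hf
    rw [rdual, if_pos rfl, hθ', sub_sub_cancel]
    exact this
  · have hcn := Real.HolderConjugate.conjExponent hn1
    have hn' := hcn.inv_add_inv_eq_one
    rw [rdual, if_neg hn1.ne', eLpNorm_eq_lnorm hcn.symm.pos]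
    refine lnorm_interp_fin hcm.symm.pos hcn.symm.pos hθ0 hθ1 ?_ hf
    have h2 : 1 / n.conjExponent = 1 - 1 / n := by rw [one_div, one_div]; linarith
    rw [div_eq_mul_one_div θ, h1, h2]
    linarith

/-! ### Off-diagonal estimates -/

/-- `(p, m)` are the Hölder conjugates of a Schrödinger-admissible pair in dimension `d`. -/
structure DualAdm (d : ℕ) (p m : ℝ) : Prop where
  p1 : 1 ≤ p
  p2 : p ≤ 2
  m1 : 1 ≤ m
  m2 : m ≤ 2
  adm : 1 - 1 / p = (d : ℝ) / 2 * (1 / m - 1 / 2)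
  exc : ¬(d = 2 ∧ p = 2)

lemma DualAdm.diag {d : ℕ} (hd : 1 ≤ d) {p m : ℝ} (h : DualAdm d p m) :
    ∃ C ≠ ∞, DiagBound d p m C := diag_all hd h.p1 h.p2 h.m1 h.m2 h.adm h.exc

lemma DualAdm.m_lt {d : ℕ} {p m : ℝ} (h : DualAdm d p m) (hp : 1 < p) : m < 2 := by
  refine lt_of_le_of_ne h.m2 ?_
  rintro rfl
  have := h.adm
  rw [sub_self, mul_zero, sub_eq_zero, eq_div_iff (by linarith)] at this
  linarith

/-- A bound on the form becomes a norm bound for the Duhamel operator. -/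
lemma duh_dual {d : ℕ} {p m : ℝ} (h : DualAdm d p m) (hp : 1 < p) {M : ℝ≥0∞} {ε : ℝ} (hε : 0 < ε)
    {χ : ℝ → ℂ} (hχ : Cutoff χ) {F : ℝ × Sp d → ℂ} (hF : Nice F)
    (hb : ∀ G, Nice G → ‖form ε χ F G‖ₑ ≤ M * mnorm p m G) :
    dnorm p.conjExponent (rdual m) (duh ε χ F) ≤ M * 2 := by
  refine dual_bound hp h.m1 h.m2 (measurable_duh hε hχ hF) (bounded_duh hε hχ hF) fun G hG => ?_
  rw [integral_duh_mul hε hχ hF hG]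
  exact hb G hG

/-- The estimate when the target pair lies between the source pair and `(∞, 2)`: interpolation of
the diagonal estimate with the energy bound. -/
lemma off_diag_interp {d : ℕ} (hd : 1 ≤ d) {p m a b : ℝ} (h : DualAdm d p m) (h' : DualAdm d a b)
    (hp : 1 < p) (hbm : b ≤ m) :
    ∃ C ≠ ∞, ∀ ε : ℝ, 0 < ε → ∀ χ : ℝ → ℂ, Cutoff χ → ∀ F : ℝ × Sp d → ℂ, Nice F →
      dnorm p.conjExponent (rdual m) (duh ε χ F) ≤ C * mnorm a b F := by
  obtain ⟨C, hC, hD⟩ := h'.diag hd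
  have hm2 := h.m_lt hp
  have ha0 : 0 < a := by linarith [h'.p1]
  have hb0 : 0 < b := by linarith [h'.m1]
  have hm0 : 0 < m := by linarith [h.m1]
  have hd0 : (0 : ℝ) < d := by exact_mod_cast hd
  have hgap : 0 < 1 / b - 1 / 2 := by
    have : 1 / 2 < 1 / b := one_div_lt_one_div_of_lt hb0 (by linarith)
    linarith
  have ha1 : 1 < a := by
    have h1 : 0 < 1 - 1 / a := by rw [h'.adm]; positivity
    have h2 : 1 / a < 1 := by linarith
    rwa [div_lt_one ha0] at h2
  have hN : ∀ ε : ℝ, 0 < ε → ∀ χ : ℝ → ℂ, Cutoff χ → ∀ F : ℝ × Sp d → ℂ, Nice F →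
      dnorm a.conjExponent (rdual b) (duh ε χ F) ≤ C * mnorm a b F * 2 :=
    fun ε hε χ hχ F hF => duh_dual h' ha1 hε hχ hF fun G hG => by
      rw [mul_assoc]; exact hD ε hε χ hχ F G hF hG
  rcases hbm.eq_or_lt with rfl | hbm
  · -- equal space exponents force equal time exponents
    have hpa : p = a := by
      have := h.adm.trans h'.adm.symm
      have h3 : 1 / p = 1 / a := by linarith
      simpa using h3
    subst hpa
    refine ⟨C * 2, by finiteness, fun ε hε χ hχ F hF => ?_⟩
    rw [mul_right_comm]
    exact hN ε hε χ hχ F hF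
  have hm1 : 1 < m := by linarith [h'.m1]
  set θ : ℝ := (1 / m - 1 / 2) / (1 / b - 1 / 2) with hθ
  have hgap' : 0 < 1 / m - 1 / 2 := by
    have : 1 / 2 < 1 / m := one_div_lt_one_div_of_lt hm0 hm2
    linarith
  have hθ0 : 0 < θ := by positivity
  have hθ1 : θ ≤ 1 := by
    rw [hθ, div_le_one hgap]
    have : 1 / m ≤ 1 / b := one_div_le_one_div_of_le hb0 hbm.le
    linarith
  have hθm : 1 / m - 1 / 2 = θ * (1 / b - 1 / 2) := (div_mul_cancel₀ _ hgap.ne').symm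
  have hcp := Real.HolderConjugate.conjExponent hp
  have hca := Real.HolderConjugate.conjExponent ha1
  have hqp : 1 / p.conjExponent = θ * (1 / a.conjExponent) := by
    have h1 := hcp.inv_add_inv_eq_one
    have h2 := hca.inv_add_inv_eq_one
    have e1 : 1 / p.conjExponent = 1 - 1 / p := by rw [one_div, one_div]; linarith
    have e2 : 1 / a.conjExponent = 1 - 1 / a := by rw [one_div, one_div]; linarith
    rw [e1, e2, h.adm, h'.adm, hθm]; ring
  have hq0 := hcp.symm.pos
  have hqa0 := hca.symm.pos
  have hθq : θ * p.conjExponent = a.conjExponent := by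
    field_simp at hqp
    linarith
  refine ⟨(C * 2) ^ θ * (C ^ (1 / 2 : ℝ)) ^ (1 - θ), ?_, fun ε hε χ hχ F hF => ?_⟩
  · have : 0 ≤ 1 - θ := by linarith
    exact ENNReal.mul_ne_top (ENNReal.rpow_ne_top_of_nonneg hθ0.le (by finiteness))
      (ENNReal.rpow_ne_top_of_nonneg this (ENNReal.rpow_ne_top_of_nonneg (by norm_num) hC))
  have hu := measurable_duh hε hχ hF
  set u := duh ε χ F with hudef
  set K := C ^ (1 / 2 : ℝ) * mnorm a b F with hK
  have hKfin : K ≠ ∞ := ENNReal.mul_ne_top (ENNReal.rpow_ne_top_of_nonneg (by norm_num) hC)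
    (hF.mnorm_ne_top ha0 hb0)
  have hθ1' : 0 ≤ 1 - θ := by linarith
  have hK2 : ∀ t, lnorm 2 (fun x => u (t, x)) ≤ K := fun t => duh_two ha0 hb0 hD hε hχ hF t
  have hN' := hN ε hε χ hχ F hF
  rw [rdual, if_neg hm1.ne', dnorm_eq_mnorm _ (Real.HolderConjugate.conjExponent hm1).symm.pos]
  calc mnorm p.conjExponent m.conjExponent u
      ≤ nrm volume p.conjExponent (fun t => K ^ (1 - θ) *
          eLpNorm (fun x => u (t, x)) (rdual b) volume ^ θ) := by
        refine nrm_mono _ hq0 fun t => ?_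
        refine (lnorm_interp h'.m1 hbm.le hm1 hm2 hθ0.le hθ1 hθm
          (hu.comp measurable_prodMk_left)).trans ?_
        rw [mul_comm]
        gcongr
        · exact hK2 t
        · rfl
    _ = K ^ (1 - θ) * dnorm a.conjExponent (rdual b) u ^ θ := by
        rw [nrm_const_mul _ hq0 (ENNReal.rpow_ne_top_of_nonneg hθ1' hKfin)]
        congr 1
        unfold dnorm nrm
        simp_rw [← ENNReal.rpow_mul]
        rw [hθq, hqp, mul_comm θ]
    _ ≤ K ^ (1 - θ) * (C * mnorm a b F * 2) ^ θ := by gcongr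
    _ = (C * 2) ^ θ * (C ^ (1 / 2 : ℝ)) ^ (1 - θ) * (mnorm a b F ^ (1 - θ) * mnorm a b F ^ θ) := by
        rw [hK, mul_right_comm C, ENNReal.mul_rpow_of_nonneg _ _ hθ1',
          ENNReal.mul_rpow_of_nonneg (C * 2) _ hθ0.le]
        ring
    _ = _ := by
        rw [← ENNReal.rpow_add_of_nonneg _ _ hθ1' hθ0.le, sub_add_cancel, ENNReal.rpow_one]

/-- The off-diagonal estimates with finite time exponent on the left. -/
lemma off_diag {d : ℕ} (hd : 1 ≤ d) {p m a b : ℝ} (h : DualAdm d p m) (h' : DualAdm d a b)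
    (hp : 1 < p) :
    ∃ C ≠ ∞, ∀ ε : ℝ, 0 < ε → ∀ χ : ℝ → ℂ, Cutoff χ → ∀ F : ℝ × Sp d → ℂ, Nice F →
      dnorm p.conjExponent (rdual m) (duh ε χ F) ≤ C * mnorm a b F := by
  have hm0 : 0 < m := by linarith [h.m1]
  rcases le_or_gt b m with hbm | hbm
  · exact off_diag_interp hd h h' hp hbm
  -- otherwise the transposed estimate is of the previous kind
  suffices hs : ∃ C ≠ ∞, ∀ ε : ℝ, 0 < ε → ∀ χ : ℝ → ℂ, Cutoff χ → ∀ F G : ℝ × Sp d → ℂ,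
      Nice F → Nice G → ‖form ε χ G F‖ₑ ≤ C * (mnorm p m G * mnorm a b F) by
    obtain ⟨C, hC, hf⟩ := hs
    refine ⟨C * 2, by finiteness, fun ε hε χ hχ F hF => ?_⟩
    rw [mul_right_comm]
    refine duh_dual h hp hε hχ hF fun G hG => ?_
    have := hf ε hε χ hχ _ _ (nice_reflect hF) (nice_reflect hG)
    rw [form_reflect, mnorm_reflect, mnorm_reflect] at this
    exact this.trans (le_of_eq (by ring))
  rcases h'.p1.eq_or_lt with ha | ha
  · obtain ⟨C, hC, hD⟩ := h.diag hd
    have hb2 : b = 2 := by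
      have := h'.adm
      have hb0 : 0 < b := by linarith [h'.m1]
      have hd0 : (0 : ℝ) < d := by exact_mod_cast hd
      rw [← ha] at this
      field_simp at this
      have h2 : (d : ℝ) * (2 - b) = 0 := by rw [← this]; ring
      rcases mul_eq_zero.1 h2 with h2 | h2 <;> linarith
    subst hb2
    subst ha
    refine ⟨C ^ (1 / 2 : ℝ), ENNReal.rpow_ne_top_of_nonneg (by norm_num) hC,
      fun ε hε χ hχ F G hF hG => ?_⟩
    rw [← integral_duh_mul hε hχ hG hF]
    refine (enorm_integral_le_lintegral_enorm _).trans ?_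
    have hu := measurable_duh hε hχ hG
    have hm' : Measurable (fun w => ‖duh ε χ G w * F w‖ₑ) := (hu.mul hF.meas).enorm
    rw [Measure.volume_eq_prod, lintegral_prod _ hm'.aemeasurable, ← mul_assoc]
    unfold mnorm
    rw [nrm_one, ← lintegral_const_mul _ (measurable_lnorm_slice hF.meas 2)]
    refine lintegral_mono fun t => ?_
    simp_rw [enorm_mul]
    have hs2 : (2 : ℝ).HolderConjugate 2 := Real.HolderConjugate.two_two
    refine (ENNReal.lintegral_mul_le_Lp_mul_Lq volume hs2
      (hu.comp measurable_prodMk_left).enorm.aemeasurable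
      (hF.meas.comp measurable_prodMk_left).enorm.aemeasurable).trans ?_
    refine mul_le_mul' ?_ le_rfl
    exact duh_two (by linarith) hm0 hD hε hχ hG t
  · obtain ⟨C, hC, hi⟩ := off_diag_interp hd h' h ha hbm.le
    refine ⟨C, hC, fun ε hε χ hχ F G hF hG => ?_⟩
    rw [← integral_duh_mul hε hχ hG hF]
    refine (holder_mixed ha h'.m1 (measurable_duh hε hχ hG) hF.meas).trans ?_
    rw [← mul_assoc]
    gcongr
    exact hi ε hε χ hχ G hG

/-- The off-diagonal estimates in `L^∞` in time, `L²` in space. -/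
lemma off_diag_two {d : ℕ} (hd : 1 ≤ d) {a b : ℝ} (h' : DualAdm d a b) :
    ∃ C ≠ ∞, ∀ ε : ℝ, 0 < ε → ∀ χ : ℝ → ℂ, Cutoff χ → ∀ F : ℝ × Sp d → ℂ, Nice F →
      ∀ t, lnorm 2 (fun x => duh ε χ F (t, x)) ≤ C * mnorm a b F := by
  obtain ⟨C, hC, hD⟩ := h'.diag hd
  exact ⟨C ^ (1 / 2 : ℝ), ENNReal.rpow_ne_top_of_nonneg (by norm_num) hC,
    fun ε hε χ hχ F hF t => duh_two (by linarith [h'.p1]) (by linarith [h'.m1]) hD hε hχ hF t⟩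

/-! ### Removing the regularisation -/

/-- Fatou's lemma at a fixed time, including the space exponent `∞`. -/
lemma eLpNorm_le_liminf {d : ℕ} {m : ℝ} (hm : 1 ≤ m) {f : Sp d → ℂ} {g : ℕ → Sp d → ℂ}
    (hg : ∀ k, Measurable (g k))
    (h : ∀ x, ‖f x‖ₑ ≤ Filter.liminf (fun k => ‖g k x‖ₑ) Filter.atTop) :
    eLpNorm f (rdual m) volume ≤
      Filter.liminf (fun k => eLpNorm (g k) (rdual m) volume) Filter.atTop := by
  unfold rdual
  split_ifs with h1
  · simp_rw [eLpNorm_exponent_top]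
    unfold eLpNormEssSup
    exact (essSup_mono_ae (Filter.Eventually.of_forall h)).trans (ENNReal.essSup_liminf_le _)
  · have hm1 : 1 < m := lt_of_le_of_ne hm (Ne.symm h1)
    have hc := (Real.HolderConjugate.conjExponent hm1).symm
    simp_rw [eLpNorm_eq_lnorm hc.pos]
    exact nrm_le_liminf hc.pos (fun k => (hg k).enorm) (Filter.Eventually.of_forall h)

/-- Fatou's lemma in the mixed norm. -/
lemma dnorm_le_of_liminf {d : ℕ} {q m : ℝ} (hq : 0 < q) (hm : 1 ≤ m) {u : ℝ × Sp d → ℂ}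
    {v : ℕ → ℝ × Sp d → ℂ} (hv : ∀ k, Measurable (v k)) {M : ℝ≥0∞}
    (hM : ∀ k, dnorm q (rdual m) (v k) ≤ M)
    (h : ∀ z, ‖u z‖ₑ ≤ Filter.liminf (fun k => ‖v k z‖ₑ) Filter.atTop) :
    dnorm q (rdual m) u ≤ M := by
  refine (nrm_le_liminf hq (fun k => measurable_slice_rdual hm (hv k))
    (Filter.Eventually.of_forall fun t => ?_)).trans (liminf_le_of_forall_le hM)
  exact eLpNorm_le_liminf hm (fun k => (hv k).comp measurable_prodMk_left) fun x => h (t, x)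

lemma tendsto_kern {d : ℕ} {τ : ℝ} (hτ : 0 < τ) (x : Sp d) :
    Filter.Tendsto (fun k : ℕ => kern (1 / ((k : ℝ) + 1)) τ x) Filter.atTop
      (nhds (kern 0 τ x)) := by
  have hc : ContinuousAt (fun ε : ℝ => kern ε τ x) 0 := by
    unfold kern ctime
    refine ContinuousAt.mul ?_ ?_
    · refine ContinuousAt.cpow (by fun_prop) continuousAt_const ?_
      right
      simp [Real.pi_ne_zero, hτ.ne']
    · refine ContinuousAt.cexp (ContinuousAt.div (by fun_prop) (by fun_prop) ?_)
      simp [hτ.ne']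
  exact hc.tendsto.comp tendsto_one_div_add_atTop_nhds_zero_nat

/-- The retarded time cutoff at distance `δ` from the diagonal. -/
noncomputable def retCut (δ : ℝ) : ℝ → ℂ := (Set.Ioi δ).indicator (fun _ => 1)

lemma cutoff_retCut (δ : ℝ) : Cutoff (retCut δ) := cutoff_one.indicator measurableSet_Ioi

lemma tendsto_duhFun {d : ℕ} {δ : ℝ} (hδ : 0 < δ) (τ : ℝ) (x : Sp d) (c : ℂ) :
    Filter.Tendsto (fun k : ℕ => retCut δ τ * (kern (1 / ((k : ℝ) + 1)) τ x * c)) Filter.atTop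
      (nhds (retCut δ τ * (kern 0 τ x * c))) := by
  by_cases hτ : δ < τ
  · exact ((tendsto_kern (hδ.trans hτ) x).mul_const c).const_mul _
  · have : retCut δ τ = 0 := Set.indicator_of_notMem hτ _
    simp [this]

lemma norm_duhFun_le {d : ℕ} {δ : ℝ} (hδ : 0 < δ) {ε : ℝ} (hε : 0 ≤ ε) (τ : ℝ) (x : Sp d)
    (c : ℂ) : ‖retCut δ τ * (kern ε τ x * c)‖ ≤ (4 * Real.pi * δ) ^ (-(d : ℝ) / 2) * ‖c‖ := by
  by_cases hτ : δ < τ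
  · have : retCut δ τ = 1 := Set.indicator_of_mem hτ _
    rw [this, one_mul, norm_mul]
    gcongr
    have h0 : 0 < τ := hδ.trans hτ
    refine (norm_kern_le hε h0.ne' x).trans ?_
    rw [abs_of_pos h0]
    refine Real.rpow_le_rpow_of_nonpos (by positivity) (by gcongr) ?_
    have : (0 : ℝ) ≤ d := by positivity
    linarith
  · have : retCut δ τ = 0 := Set.indicator_of_notMem hτ _
    rw [this]
    simp only [zero_mul, norm_zero]
    positivity

lemma eps_pos (k : ℕ) : 0 < 1 / ((k : ℝ) + 1) := by positivity

lemma measurable_duhFun_zero {d : ℕ} {δ : ℝ} (hδ : 0 < δ) {F : ℝ × Sp d → ℂ} (hF : Nice F)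
    (w : ℝ × Sp d) : Measurable (fun z : ℝ × Sp d =>
      retCut δ (w.1 - z.1) * (kern 0 (w.1 - z.1) (w.2 - z.2) * F z)) := by
  refine measurable_of_tendsto_metrizable (fun k : ℕ =>
    (measurable_duhFun (eps_pos k) (cutoff_retCut δ) hF).comp
      (measurable_prodMk_left (x := w))) ?_
  rw [tendsto_pi_nhds]
  intro z
  exact tendsto_duhFun hδ _ _ _

lemma integrable_duhFun_zero {d : ℕ} {δ : ℝ} (hδ : 0 < δ) {F : ℝ × Sp d → ℂ} (hF : Nice F)
    (w : ℝ × Sp d) : Integrable (fun z : ℝ × Sp d =>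
      retCut δ (w.1 - z.1) * (kern 0 (w.1 - z.1) (w.2 - z.2) * F z)) :=
  Integrable.mono' (hF.integrable.norm.const_mul ((4 * Real.pi * δ) ^ (-(d : ℝ) / 2)))
    (measurable_duhFun_zero hδ hF w).aestronglyMeasurable
    (Filter.Eventually.of_forall fun _ => norm_duhFun_le hδ le_rfl _ _ _)

/-- Removing the regularisation, away from the diagonal. -/
lemma tendsto_duh {d : ℕ} {δ : ℝ} (hδ : 0 < δ) {F : ℝ × Sp d → ℂ} (hF : Nice F) (w : ℝ × Sp d) :
    Filter.Tendsto (fun k : ℕ => duh (1 / ((k : ℝ) + 1)) (retCut δ) F w) Filter.atTop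
      (nhds (duh 0 (retCut δ) F w)) := by
  unfold duh
  refine tendsto_integral_of_dominated_convergence
    (fun z => (4 * Real.pi * δ) ^ (-(d : ℝ) / 2) * ‖F z‖) (fun k => ?_)
    (hF.integrable.norm.const_mul _) (fun k => ?_) ?_
  · exact ((measurable_duhFun (eps_pos k) (cutoff_retCut δ) hF).comp
      (measurable_prodMk_left (x := w))).aestronglyMeasurable
  · exact Filter.Eventually.of_forall fun z => norm_duhFun_le hδ (eps_pos k).le _ _ _
  · exact Filter.Eventually.of_forall fun z => tendsto_duhFun hδ _ _ _

lemma measurable_duh_zero {d : ℕ} {δ : ℝ} (hδ : 0 < δ) {F : ℝ × Sp d → ℂ} (hF : Nice F) :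
    Measurable (duh 0 (retCut δ) F) := by
  refine measurable_of_tendsto_metrizable (fun k : ℕ =>
    measurable_duh (eps_pos k) (cutoff_retCut δ) hF) ?_
  rw [tendsto_pi_nhds]
  exact fun w => tendsto_duh hδ hF w

lemma le_liminf_of_tendsto {a : ℂ} {b : ℕ → ℂ} (h : Filter.Tendsto b Filter.atTop (nhds a)) :
    ‖a‖ₑ ≤ Filter.liminf (fun k => ‖b k‖ₑ) Filter.atTop :=
  ((continuous_enorm.tendsto a).comp h).liminf_eq.ge

/-- The retarded Duhamel integral. -/
noncomputable def duhamel {d : ℕ} (F : ℝ × Sp d → ℂ) (t : ℝ) (x : Sp d) : ℂ :=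
  ∫ s in (0 : ℝ)..t, schrodingerProp (fun y => F (s, y)) (t - s) x

lemma kern_zero {d : ℕ} {τ : ℝ} (hτ : 0 < τ) (x : Sp d) :
    kern 0 τ x = (4 * (Real.pi : ℂ) * I * (τ : ℂ)) ^ (-(d : ℂ) / 2) *
      cexp (I * ((‖x‖ ^ 2 : ℝ) : ℂ) / (4 * (τ : ℂ))) := by
  unfold kern ctime
  have : (τ : ℂ) ≠ 0 := by exact_mod_cast hτ.ne'
  congr 2
  · simp; ring
  · simp only [ofReal_zero, zero_add]
    field_simp
    rw [I_sq]; ring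

/-- Restriction of a space-time function to positive times. -/
noncomputable def posPart {d : ℕ} (F : ℝ × Sp d → ℂ) : ℝ × Sp d → ℂ :=
  {z : ℝ × Sp d | 0 < z.1}.indicator F

lemma nice_posPart {d : ℕ} {F : ℝ × Sp d → ℂ} (hF : Nice F) : Nice (posPart F) :=
  hF.indicator (measurableSet_lt measurable_const measurable_fst)

/-- Without regularisation, the cut-off Duhamel operator is the Duhamel integral up to time `t - δ`. -/
lemma duh_zero_eq {d : ℕ} {δ : ℝ} (hδ : 0 < δ) {F : ℝ × Sp d → ℂ} (hF : Nice F) {t : ℝ}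
    (ht : δ < t) (x : Sp d) : duh 0 (retCut δ) (posPart F) (t, x) =
      ∫ s in (0 : ℝ)..(t - δ), schrodingerProp (fun y => F (s, y)) (t - s) x := by
  have hi := integrable_duhFun_zero hδ (nice_posPart hF) (t, x)
  unfold duh
  rw [Measure.volume_eq_prod] at hi ⊢
  rw [integral_prod _ hi, intervalIntegral.integral_of_le (by linarith),
    integral_Ioc_eq_integral_Ioo, ← integral_indicator measurableSet_Ioo]
  refine integral_congr_ae (Filter.Eventually.of_forall fun s => ?_)
  simp only
  by_cases hs : s ∈ Set.Ioo 0 (t - δ)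
  · rw [Set.indicator_of_mem hs]
    have h1 : δ < t - s := by linarith [hs.2]
    have h2 : retCut δ (t - s) = 1 := Set.indicator_of_mem h1 _
    have h3 : 0 < t - s := hδ.trans h1
    unfold schrodingerProp
    rw [if_neg h3.ne', ← integral_const_mul]
    refine integral_congr_ae (Filter.Eventually.of_forall fun y => ?_)
    simp only
    rw [h2, kern_zero h3, posPart, Set.indicator_of_mem (show (s, y) ∈ {z : ℝ × Sp d | 0 < z.1} from hs.1)]
    push_cast
    ring
  · rw [Set.indicator_of_notMem hs]
    refine integral_eq_zero_of_ae (Filter.Eventually.of_forall fun y => ?_)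
    simp only [Pi.zero_apply]
    by_cases h0 : 0 < s
    · have : ¬ δ < t - s := fun h => hs ⟨h0, by linarith⟩
      rw [retCut, Set.indicator_of_notMem (show t - s ∉ Set.Ioi δ from this), zero_mul]
    · rw [posPart, Set.indicator_of_notMem (show (s, y) ∉ {z : ℝ × Sp d | 0 < z.1} from h0)]
      simp

/-- Letting the cutoff approach the diagonal. If the time integrand is not integrable, the
Duhamel integral has the value `0` and there is nothing to prove. -/
lemma duhamel_le_liminf {d : ℕ} {F : ℝ × Sp d → ℂ} (hF : Nice F) {t : ℝ} (ht : 0 < t) (x : Sp d) :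
    ‖duhamel F t x‖ₑ ≤ Filter.liminf
      (fun k : ℕ => ‖duh 0 (retCut (1 / ((k : ℝ) + 1))) (posPart F) (t, x)‖ₑ) Filter.atTop := by
  by_cases hi : IntervalIntegrable (fun s => schrodingerProp (fun y => F (s, y)) (t - s) x)
      volume 0 t
  · refine le_liminf_of_tendsto ?_
    have hlim := tendsto_one_div_add_atTop_nhds_zero_nat (𝕜 := ℝ)
    have hcont := intervalIntegral.continuousOn_primitive_interval (μ := volume)
      (a := 0) (b := t) (f := fun s => schrodingerProp (fun y => F (s, y)) (t - s) x)
      (by rw [Set.uIcc_of_le ht.le, integrableOn_Icc_iff_integrableOn_Ioc]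
          exact (intervalIntegrable_iff_integrableOn_Ioc_of_le ht.le).1 hi)
    have h1 : Filter.Tendsto (fun k : ℕ => t - 1 / ((k : ℝ) + 1)) Filter.atTop
        (nhdsWithin t (Set.uIcc 0 t)) := by
      refine tendsto_nhdsWithin_iff.2 ⟨by simpa using hlim.const_sub t, ?_⟩
      filter_upwards [hlim.eventually (gt_mem_nhds ht)] with k hk
      rw [Set.uIcc_of_le ht.le]
      exact ⟨by linarith, by linarith [eps_pos k]⟩
    have h2 := ((hcont t Set.right_mem_uIcc).tendsto).comp h1
    refine h2.congr' ?_
    filter_upwards [hlim.eventually (gt_mem_nhds ht)] with k hk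
    exact (duh_zero_eq (eps_pos k) hF hk x).symm
  · unfold duhamel
    rw [intervalIntegral.integral_undef hi]
    simp

/-! ### Positive times and time reversal -/

/-- The Duhamel integral restricted to positive times. -/
noncomputable def half {d : ℕ} (F : ℝ × Sp d → ℂ) (z : ℝ × Sp d) : ℂ :=
  if 0 < z.1 then duhamel F z.1 z.2 else 0

lemma half_le_liminf {d : ℕ} {F : ℝ × Sp d → ℂ} (hF : Nice F) (z : ℝ × Sp d) :
    ‖half F z‖ₑ ≤ Filter.liminf
      (fun k : ℕ => ‖duh 0 (retCut (1 / ((k : ℝ) + 1))) (posPart F) z‖ₑ) Filter.atTop := by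
  unfold half
  split_ifs with h
  · exact duhamel_le_liminf hF h z.2
  · simp

lemma mnorm_posPart_le {d : ℕ} {p m : ℝ} (hp : 0 < p) (hm : 0 < m) (F : ℝ × Sp d → ℂ) :
    mnorm p m (posPart F) ≤ mnorm p m F :=
  mnorm_mono hp hm fun _ => enorm_indicator_le_enorm_self _ _

/-- The Strichartz estimate for positive times, with a finite time exponent on the left. -/
lemma half_bound {d : ℕ} (hd : 1 ≤ d) {p m a b : ℝ} (h : DualAdm d p m) (h' : DualAdm d a b)
    (hp : 1 < p) : ∃ C : ℝ≥0∞, C ≠ ∞ ∧ ∀ F : ℝ × Sp d → ℂ, Nice F →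
      dnorm p.conjExponent (rdual m) (half F) ≤ C * mnorm a b F := by
  obtain ⟨C, hC, hb⟩ := off_diag hd h h' hp
  refine ⟨C, hC, fun F hF => ?_⟩
  have hq : 0 < p.conjExponent := (Real.HolderConjugate.conjExponent hp).symm.pos
  refine le_trans ?_ (mul_le_mul' le_rfl (mnorm_posPart_le (p := a) (m := b)
    (by linarith [h'.p1]) (by linarith [h'.m1]) F))
  refine dnorm_le_of_liminf hq h.m1 (fun k => measurable_duh_zero (eps_pos k) (nice_posPart hF))
    (fun k => ?_) (half_le_liminf hF)
  exact dnorm_le_of_liminf hq h.m1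
    (fun j => measurable_duh (eps_pos j) (cutoff_retCut _) (nice_posPart hF))
    (fun j => hb _ (eps_pos j) _ (cutoff_retCut _) _ (nice_posPart hF))
    (fun z => le_liminf_of_tendsto (tendsto_duh (eps_pos k) (nice_posPart hF) z))

/-- The `L^∞_t L²_x` estimate for positive times. -/
lemma half_bound_two {d : ℕ} (hd : 1 ≤ d) {a b : ℝ} (h' : DualAdm d a b) :
    ∃ C : ℝ≥0∞, C ≠ ∞ ∧ ∀ F : ℝ × Sp d → ℂ, Nice F → ∀ t,
      lnorm 2 (fun x => half F (t, x)) ≤ C * mnorm a b F := by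
  obtain ⟨C, hC, hb⟩ := off_diag_two hd h'
  refine ⟨C, hC, fun F hF t => ?_⟩
  refine le_trans ?_ (mul_le_mul' le_rfl (mnorm_posPart_le (p := a) (m := b)
    (by linarith [h'.p1]) (by linarith [h'.m1]) F))
  refine (nrm_le_liminf (g := fun (k : ℕ) x =>
      ‖duh 0 (retCut (1 / ((k : ℝ) + 1))) (posPart F) (t, x)‖ₑ) two_pos
    (fun k => ((measurable_duh_zero (eps_pos k) (nice_posPart hF)).comp
      measurable_prodMk_left).enorm)
    (Filter.Eventually.of_forall fun x => half_le_liminf hF (t, x))).trans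
    (liminf_le_of_forall_le fun k => ?_)
  refine (nrm_le_liminf (g := fun (j : ℕ) x =>
      ‖duh (1 / ((j : ℝ) + 1)) (retCut (1 / ((k : ℝ) + 1))) (posPart F) (t, x)‖ₑ) two_pos
    (fun j => ((measurable_duh (eps_pos j) (cutoff_retCut _) (nice_posPart hF)).comp
      measurable_prodMk_left).enorm)
    (Filter.Eventually.of_forall fun x => le_liminf_of_tendsto
      (tendsto_duh (eps_pos k) (nice_posPart hF) (t, x)))).trans
    (liminf_le_of_forall_le fun j => ?_)
  exact hb _ (eps_pos j) _ (cutoff_retCut _) _ (nice_posPart hF) t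

/-- Time reversal: conjugation in value and reflection in time. -/
noncomputable def rev {d : ℕ} (F : ℝ × Sp d → ℂ) (z : ℝ × Sp d) : ℂ :=
  (starRingEnd ℂ) (reflect F z)

lemma nice_rev {d : ℕ} {F : ℝ × Sp d → ℂ} (hF : Nice F) : Nice (rev F) := (nice_reflect hF).conj

lemma mnorm_rev {d : ℕ} (p m : ℝ) (F : ℝ × Sp d → ℂ) : mnorm p m (rev F) = mnorm p m F := by
  rw [← mnorm_reflect p m F, ← mnorm_conj p m (reflect F)]; rfl

/-- Conjugation reverses time. The base of the complex power is nonzero and purely imaginary, hence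
off the branch cut. -/
lemma schrodingerProp_conj {d : ℕ} (f : Sp d → ℂ) (τ : ℝ) (x : Sp d) :
    schrodingerProp (fun y => (starRingEnd ℂ) (f y)) τ x =
      (starRingEnd ℂ) (schrodingerProp f (-τ) x) := by
  unfold schrodingerProp
  by_cases hτ : τ = 0
  · simp [hτ]
  rw [if_neg hτ, if_neg (neg_ne_zero.2 hτ), map_mul, ← integral_conj]
  congr 1
  · have harg : (4 * (Real.pi : ℂ) * I * ((-τ : ℝ) : ℂ)).arg ≠ Real.pi := by
      intro h
      rw [arg_eq_pi_iff] at h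
      simp at h
    have he : (starRingEnd ℂ) (-(d : ℂ) / 2) = -(d : ℂ) / 2 := by simp [map_ofNat]
    have hz : (4 * (Real.pi : ℂ) * I * (τ : ℂ)) =
        (starRingEnd ℂ) (4 * (Real.pi : ℂ) * I * ((-τ : ℝ) : ℂ)) := by simp [map_ofNat]
    rw [hz, conj_cpow _ _ harg, he]
  · refine integral_congr_ae (Filter.Eventually.of_forall fun y => ?_)
    simp only [map_mul, ← exp_conj]
    congr 2
    simp [div_neg, neg_div, map_ofNat]

lemma duhamel_rev {d : ℕ} (F : ℝ × Sp d → ℂ) (t : ℝ) (x : Sp d) :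
    duhamel (rev F) t x = -(starRingEnd ℂ) (duhamel F (-t) x) := by
  unfold duhamel
  have h1 := intervalIntegral.integral_comp_neg (a := 0) (b := t)
    (f := fun s => schrodingerProp (fun y => F (s, y)) (-t - s) x)
  rw [neg_zero] at h1
  rw [intervalIntegral.integral_symm (-t) 0, ← h1, map_neg, neg_neg, ← intervalIntegral.intervalIntegral_conj]
  congr 1; ext s
  unfold rev reflect
  simp only
  rw [schrodingerProp_conj]
  congr 2
  ring

lemma enorm_duhamel_neg {d : ℕ} (F : ℝ × Sp d → ℂ) (t : ℝ) (x : Sp d) :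
    ‖duhamel F (-t) x‖ₑ = ‖duhamel (rev F) t x‖ₑ := by
  rw [duhamel_rev]
  simp [← ofReal_norm]

lemma duhamel_zero {d : ℕ} (F : ℝ × Sp d → ℂ) (x : Sp d) : duhamel F 0 x = 0 := by
  simp [duhamel]

/-- At each time the Duhamel integral is controlled by positive-time Duhamel integrals of `F`
and of its time reversal. -/
lemma enorm_duhamel_le {d : ℕ} (F : ℝ × Sp d → ℂ) (t : ℝ) (x : Sp d) :
    ‖duhamel F t x‖ₑ ≤ ‖half F (t, x)‖ₑ + ‖half (rev F) (-t, x)‖ₑ := by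
  unfold half
  rcases lt_trichotomy 0 t with ht | ht | ht
  · simp [ht]
  · simp [← ht, duhamel_zero]
  · have := enorm_duhamel_neg F (-t) x
    rw [neg_neg] at this
    simp [ht, this]

/-! ### Both half-lines and conversion of exponents -/

lemma eLpNorm_duhamel_pos {d : ℕ} (r : ℝ≥0∞) (F : ℝ × Sp d → ℂ) {t : ℝ} (ht : 0 < t) :
    eLpNorm (duhamel F t) r volume = eLpNorm (fun x => half F (t, x)) r volume := by
  congr 1; ext x; simp [half, ht]

lemma eLpNorm_duhamel_nonpos {d : ℕ} (r : ℝ≥0∞) (F : ℝ × Sp d → ℂ) {t : ℝ} (ht : t ≤ 0) :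
    eLpNorm (duhamel F t) r volume ≤ eLpNorm (fun x => half (rev F) (-t, x)) r volume := by
  refine eLpNorm_mono_enorm fun x => ?_
  refine (enorm_duhamel_le F t x).trans ?_
  simp [half, ht.not_gt]

/-- The time integral is split at `0`; the negative half-line is the positive one for `rev F`. -/
lemma nrm_duhamel_le {d : ℕ} {q : ℝ} (hq : 1 ≤ q) (r : ℝ≥0∞) (F : ℝ × Sp d → ℂ) {M : ℝ≥0∞}
    (h1 : dnorm q r (half F) ≤ M) (h2 : dnorm q r (half (rev F)) ≤ M) :
    nrm volume q (fun t => eLpNorm (duhamel F t) r volume) ≤ 2 * M := by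
  have hq0 : 0 < q := by linarith
  have h1' : ∫⁻ t, eLpNorm (fun x => half F (t, x)) r volume ^ q ≤ M ^ q := by
    rw [← nrm_rpow _ hq0]
    exact ENNReal.rpow_le_rpow h1 hq0.le
  have h2' : ∫⁻ t, eLpNorm (fun x => half (rev F) (-t, x)) r volume ^ q ≤ M ^ q := by
    rw [lintegral_neg_eq_self (fun t => eLpNorm (fun x => half (rev F) (t, x)) r volume ^ q),
      ← nrm_rpow _ hq0]
    exact ENNReal.rpow_le_rpow h2 hq0.le
  have h3 : ∫⁻ t, eLpNorm (duhamel F t) r volume ^ q ≤ 2 * M ^ q := by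
    rw [← lintegral_add_compl _ (measurableSet_Ioi (a := (0 : ℝ))), two_mul]
    refine add_le_add (le_trans ?_ h1') (le_trans ?_ h2')
    · refine le_trans (setLIntegral_mono' measurableSet_Ioi fun t ht => ?_)
        (setLIntegral_le_lintegral (Set.Ioi 0) _)
      rw [eLpNorm_duhamel_pos r F ht]
    · refine le_trans (setLIntegral_mono' measurableSet_Ioi.compl fun t ht => ?_)
        (setLIntegral_le_lintegral (Set.Ioi 0)ᶜ _)
      exact ENNReal.rpow_le_rpow (eLpNorm_duhamel_nonpos r F (not_lt.1 ht)) hq0.le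
  unfold nrm
  calc _ ≤ (2 * M ^ q) ^ (1 / q) := ENNReal.rpow_le_rpow h3 (by positivity)
    _ = 2 ^ (1 / q) * M := by
      rw [ENNReal.mul_rpow_of_nonneg _ _ (by positivity), ← ENNReal.rpow_mul,
        mul_one_div_cancel hq0.ne', ENNReal.rpow_one]
    _ ≤ 2 ^ (1 : ℝ) * M := by
      gcongr
      · norm_num
      · rw [div_le_one hq0]; exact hq
    _ = _ := by rw [ENNReal.rpow_one]

/-- The estimate for a finite time exponent on the left. -/
lemma duhamel_bound {d : ℕ} (hd : 1 ≤ d) {p m a b : ℝ} (h : DualAdm d p m) (h' : DualAdm d a b)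
    (hp : 1 < p) : ∃ C : ℝ≥0∞, C ≠ ∞ ∧ ∀ F : ℝ × Sp d → ℂ, Nice F →
      nrm volume p.conjExponent (fun t => eLpNorm (duhamel F t) (rdual m) volume)
        ≤ C * mnorm a b F := by
  obtain ⟨C, hC, hb⟩ := half_bound hd h h' hp
  refine ⟨2 * C, ENNReal.mul_ne_top (by norm_num) hC, fun F hF => ?_⟩
  rw [mul_assoc]
  refine nrm_duhamel_le (by linarith [two_le_conjExponent hp h.p2]) _ F (hb F hF) ?_
  rw [← mnorm_rev]
  exact hb _ (nice_rev hF)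

/-- The estimate at the energy endpoint, uniformly in time. -/
lemma duhamel_bound_two {d : ℕ} (hd : 1 ≤ d) {a b : ℝ} (h' : DualAdm d a b) :
    ∃ C : ℝ≥0∞, C ≠ ∞ ∧ ∀ F : ℝ × Sp d → ℂ, Nice F → ∀ t,
      eLpNorm (duhamel F t) 2 volume ≤ C * mnorm a b F := by
  obtain ⟨C, hC, hb⟩ := half_bound_two hd h'
  refine ⟨C, hC, fun F hF t => ?_⟩
  have h2 : ∀ f : Sp d → ℂ, eLpNorm f 2 volume = lnorm 2 f := fun f => by
    rw [← eLpNorm_eq_lnorm two_pos]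
    congr 1
    simp
  rcases lt_or_ge 0 t with ht | ht
  · rw [eLpNorm_duhamel_pos _ _ ht, h2]
    exact hb F hF t
  · refine (eLpNorm_duhamel_nonpos _ _ ht).trans ?_
    rw [h2, ← mnorm_rev]
    exact hb _ (nice_rev hF) _

lemma nice_of_smooth {d : ℕ} {F : ℝ × Sp d → ℂ} (hF : Continuous F) (hc : HasCompactSupport F) :
    Nice F := by
  obtain ⟨M, hM⟩ := hF.bounded_above_of_compact_support hc
  obtain ⟨R, hR⟩ := hc.isCompact.isBounded.exists_norm_le
  refine ⟨hF.measurable, ⟨M, hM⟩, ⟨R, fun z hz => ?_⟩⟩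
  by_contra h
  exact absurd (hR z (subset_tsupport F h)) (not_le.2 hz)

/-- The data of an admissible pair in terms of real dual exponents. -/
lemma dualAdm_of_adm {d : ℕ} (hd : 1 ≤ d) {q r q' r' : ℝ≥0∞} (hq2 : 2 ≤ q) (hr2 : 2 ≤ r)
    (hadm : 1 / q = ((d : ℝ≥0∞) / 2) * (1 / 2 - 1 / r)) (hexc : ¬(q = 2 ∧ r = ∞ ∧ d = 2))
    (hq : 1 / q + 1 / q' = 1) (hr : 1 / r + 1 / r' = 1) :
    q' ≠ ∞ ∧ r' ≠ ∞ ∧ DualAdm d q'.toReal r'.toReal := by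
  have half_add : (1 / 2 : ℝ≥0∞) < 1 := by
    rw [one_div]; exact ENNReal.inv_lt_one.2 (by norm_num)
  have key : ∀ s s' : ℝ≥0∞, 2 ≤ s → 1 / s + 1 / s' = 1 → s' ≠ ∞ ∧ s' ≠ 0 ∧
      (1 / s).toReal = 1 - 1 / s'.toReal ∧ 1 ≤ s'.toReal ∧ s'.toReal ≤ 2 := by
    intro s s' hs hss
    have h1 : 1 / s ≤ 1 / 2 := ENNReal.div_le_div le_rfl hs
    have htop : s' ≠ ∞ := by
      rintro rfl
      simp only [ENNReal.div_top, add_zero] at hss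
      rw [hss] at h1
      exact absurd h1 (not_le.2 half_add)
    have h0 : s' ≠ 0 := by
      rintro rfl
      simp at hss
    have hpos : 0 < s'.toReal := ENNReal.toReal_pos h0 htop
    have hs1 : 1 / s ≠ ∞ := (h1.trans_lt (half_add.trans ENNReal.one_lt_top)).ne
    have hs2 : 1 / s' ≠ ∞ := by simp [h0]
    have e := congrArg ENNReal.toReal hss
    rw [ENNReal.toReal_add hs1 hs2, ENNReal.toReal_one, ENNReal.toReal_div 1 s',
      ENNReal.toReal_one] at e
    have h1r : (1 / s).toReal ≤ 1 / 2 := by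
      have := ENNReal.toReal_mono (by simp) h1
      simpa using this
    have h0r : 0 ≤ (1 / s).toReal := ENNReal.toReal_nonneg
    refine ⟨htop, h0, by linarith, ?_, ?_⟩
    · have : 1 / s'.toReal ≤ 1 := by linarith
      rwa [div_le_one hpos] at this
    · have : 1 / 2 ≤ 1 / s'.toReal := by linarith
      exact (one_div_le_one_div two_pos hpos).1 this
  obtain ⟨hqt, hq0, hqe, hq1, hq22⟩ := key q q' hq2 hq
  obtain ⟨hrt, hr0, hre, hr1, hr22⟩ := key r r' hr2 hr
  have hradm : 1 - 1 / q'.toReal = (d : ℝ) / 2 * (1 / r'.toReal - 1 / 2) := by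
    have e := congrArg ENNReal.toReal hadm
    rw [hqe, ENNReal.toReal_mul, ENNReal.toReal_sub_of_le (ENNReal.div_le_div le_rfl hr2)
      (by simp), hre] at e
    rw [e]
    simp
    ring_nf
    tauto
  refine ⟨hqt, hrt, hq1, hq22, hr1, hr22, hradm, ?_⟩
  rintro ⟨rfl, hp⟩
  rw [hp] at hradm hqe
  refine hexc ⟨?_, ?_, rfl⟩
  · have hqr : (1 / q).toReal = (1 / 2 : ℝ≥0∞).toReal := by rw [hqe]; norm_num
    have := (ENNReal.toReal_eq_toReal_iff' (by simp; rintro rfl; simp at hq2) (by simp)).1 hqr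
    simpa using this
  · have : (1 / r).toReal = 0 := by
      rw [hre]; push_cast at hradm; linarith
    rw [ENNReal.toReal_eq_zero_iff] at this
    rcases this with h | h
    · simpa using h
    · exfalso
      simp at h
      simp [h] at hr2

/-- The extended Hölder conjugate of a finite exponent, in terms of `Real.conjExponent`. -/
lemma ofReal_conjExponent {q q' : ℝ≥0∞} (hq2 : 2 ≤ q) (hqt : q ≠ ∞)
    (hq : 1 / q + 1 / q' = 1) (hq' : q' ≠ ∞) :
    1 < q'.toReal ∧ q'.toReal.conjExponent = q.toReal := by
  have hq0 : q ≠ 0 := by rintro rfl; simp at hq2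
  have hq0' : q' ≠ 0 := by rintro rfl; simp at hq
  have h1 := ENNReal.toReal_pos hq0 hqt
  have h2 := ENNReal.toReal_pos hq0' hq'
  have e := congrArg ENNReal.toReal hq
  rw [ENNReal.toReal_add (by simp [hq0]) (by simp [hq0']), ENNReal.toReal_div, ENNReal.toReal_div,
    ENNReal.toReal_one] at e
  have hc : q'.toReal.HolderConjugate q.toReal := by
    rw [Real.holderConjugate_iff]
    have h3 : 0 < 1 / q.toReal := by positivity
    have h4 : 1 / q'.toReal < 1 := by linarith
    rw [div_lt_one h2] at h4
    refine ⟨h4, by simpa [add_comm] using e⟩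
  exact ⟨hc.lt, hc.conjExponent_eq⟩

/-- `rdual` inverts Hölder conjugation on exponents `r ≥ 2`. -/
lemma rdual_eq {r r' : ℝ≥0∞} (hr2 : 2 ≤ r) (hr : 1 / r + 1 / r' = 1) (hr' : r' ≠ ∞) :
    rdual r'.toReal = r := by
  unfold rdual
  by_cases h : r = ∞
  · subst h
    simp at hr
    rw [hr]
    simp
  · obtain ⟨h1, h2⟩ := ofReal_conjExponent hr2 h hr hr'
    rw [if_neg h1.ne', h2, ENNReal.ofReal_toReal h]

lemma mixedLpNorm_eq_mnorm {d : ℕ} {a b : ℝ≥0∞} (ha : a ≠ ∞) (hb : b ≠ ∞) (hb0 : 1 ≤ b.toReal)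
    (F : ℝ × Sp d → ℂ) : mixedLpNorm a b (fun t x => F (t, x)) = mnorm a.toReal b.toReal F := by
  unfold mixedLpNorm
  rw [if_neg ha, ← dnorm_eq_mnorm _ (by linarith), ENNReal.ofReal_toReal hb]
  rfl

lemma exists_conj {q : ℝ≥0∞} (hq2 : 2 ≤ q) : ∃ q' : ℝ≥0∞, 1 / q + 1 / q' = 1 := by
  refine ⟨1 / (1 - 1 / q), ?_⟩
  rw [one_div (1 / (1 - 1 / q)), one_div (1 - 1 / q), inv_inv]
  refine add_tsub_cancel_of_le ?_
  rw [one_div]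
  exact ENNReal.inv_le_one.2 (le_trans (by norm_num) hq2)

end Strichartz

/-- Inhomogeneous (retarded Duhamel) Strichartz estimate for two
Schrödinger-admissible exponent pairs `(q, r)` and `(q̃, r̃)`. -/
theorem strichartz_inhomogeneous (d : ℕ) (hd : 1 ≤ d)
    (q r qt rt qt' rt' : ℝ≥0∞)
    (hq2 : 2 ≤ q) (hr2 : 2 ≤ r)
    (hadm : 1 / q = ((d : ℝ≥0∞) / 2) * (1 / 2 - 1 / r))
    (hexc : ¬(q = 2 ∧ r = ∞ ∧ d = 2))
    (hqt2 : 2 ≤ qt) (hrt2 : 2 ≤ rt)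
    (hadmt : 1 / qt = ((d : ℝ≥0∞) / 2) * (1 / 2 - 1 / rt))
    (hexct : ¬(qt = 2 ∧ rt = ∞ ∧ d = 2))
    (hconjq : 1 / qt + 1 / qt' = 1) (hconjr : 1 / rt + 1 / rt' = 1) :
    ∃ C : ℝ, 0 < C ∧
      ∀ F : ℝ × EuclideanSpace ℝ (Fin d) → ℂ,
        ContDiff ℝ (⊤ : ℕ∞) F → HasCompactSupport F →
        mixedLpNorm q r
            (fun t x => ∫ s in (0 : ℝ)..t,
              schrodingerProp (fun y => F (s, y)) (t - s) x)
          ≤ ENNReal.ofReal C * mixedLpNorm qt' rt' (fun t x => F (t, x)) := by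
  open Strichartz in
  obtain ⟨q', hq'⟩ := exists_conj hq2
  obtain ⟨r', hr'⟩ := exists_conj hr2
  obtain ⟨hqt'1, hrt'1, hA'⟩ := dualAdm_of_adm hd hqt2 hrt2 hadmt hexct hconjq hconjr
  obtain ⟨hq'1, hr'1, hA⟩ := dualAdm_of_adm hd hq2 hr2 hadm hexc hq' hr'
  suffices h : ∃ C : ℝ≥0∞, C ≠ ∞ ∧ ∀ F : ℝ × Sp d → ℂ, Nice F →
      mixedLpNorm q r (duhamel F) ≤ C * mnorm qt'.toReal rt'.toReal F by
    obtain ⟨C, hC, hb⟩ := h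
    refine ⟨C.toReal + 1, by positivity, fun F hF hc => ?_⟩
    refine (hb F (nice_of_smooth hF.continuous hc)).trans ?_
    rw [mixedLpNorm_eq_mnorm hqt'1 hrt'1 hA'.m1]
    refine mul_le_mul' ?_ le_rfl
    rw [← ENNReal.ofReal_toReal hC]
    refine ENNReal.ofReal_le_ofReal ?_
    rw [ENNReal.ofReal_toReal hC]
    linarith
  by_cases hq : q = ∞
  · have hr : r = 2 := by
      have hq1 : q'.toReal = 1 := by
        subst hq
        simp at hq'
        simp [hq']
      have h1 := hA.adm
      rw [hq1, div_one, sub_self] at h1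
      have hd0 : (0 : ℝ) < d := by exact_mod_cast hd
      have h2 : 1 / r'.toReal - 1 / 2 = 0 := by
        rcases mul_eq_zero.1 h1.symm with h | h
        · linarith
        · exact h
      have h3 : r'.toReal = 2 := by
        have : 1 / r'.toReal = 1 / 2 := by linarith
        simpa using this
      rw [← rdual_eq hr2 hr' hr'1, h3, rdual, if_neg (by norm_num), Real.conjExponent]
      norm_num
    obtain ⟨C, hC, hb⟩ := duhamel_bound_two hd hA'
    refine ⟨C, hC, fun F hF => ?_⟩
    unfold mixedLpNorm
    rw [if_pos hq, hr]
    exact essSup_le_of_ae_le _ (Filter.Eventually.of_forall fun t => hb F hF t)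
  · obtain ⟨hp, he⟩ := ofReal_conjExponent hq2 hq hq' hq'1
    obtain ⟨C, hC, hb⟩ := duhamel_bound hd hA hA' hp
    refine ⟨C, hC, fun F hF => ?_⟩
    have := hb F hF
    rw [he, rdual_eq hr2 hr' hr'1] at this
    unfold mixedLpNorm
    rw [if_neg hq]
    exact this
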